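/- arXiv:1007.3572 — 3 statements merged into one kernel-verified Lean document; each statement's English description precedes it below -/
import Mathlib

section
/- Let n ≥ 7, let L be a Latin square of order n, and let C be a critical set of L. Then C leaves at least ⌊(7n − √n − 20)/2⌋ cells empty; that is, n² − |C| ≥ ⌊(7n − √n − 20)/2⌋, where √n is the real square root and ⌊·⌋ is the floor function. -/
/-- `L` is a Latin square on `Q`: every row and column is a bijection. -/
def IsLatinSquare {Q : Type*} (L : Q → Q → Q) : Prop :=
  (∀ i, Function.Bijective (L i)) ∧ (∀ j, Function.Bijective fun i => L i j)

/-- The set of triples `C` is contained in (the set of triples of) the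
Latin square `L`. -/
def ContainedIn {Q : Type*} (C : Set (Q × Q × Q)) (L : Q → Q → Q) : Prop :=
  ∀ t ∈ C, L t.1 t.2.1 = t.2.2

/-- `C` is a critical set of the Latin square `L`: `C` is contained in `L`,
`L` is the only Latin square containing `C`, and no proper subset of `C`
has this property. -/
def IsCriticalSet {Q : Type*} (C : Set (Q × Q × Q)) (L : Q → Q → Q) : Prop :=
  ContainedIn C L ∧
  (∀ L' : Q → Q → Q, IsLatinSquare L' → ContainedIn C L' → L' = L) ∧
  (∀ C' : Set (Q × Q × Q), C' ⊂ C →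
    ∃ L' : Q → Q → Q, IsLatinSquare L' ∧ ContainedIn C' L' ∧ L' ≠ L)

/-!
Call a row, column or symbol a *line*, and let `E` be the set of the triples of `L` outside `C`. By
uniqueness of the completion and minimality, the lines of a second direction that meet a given line
in a triple of `E` contain at least `n` triples of `E` in total. Hence, if `2|E| ≤ 7n - 22`, most
lines in each direction are light, that is, contain at most two triples of `E`, every light line
meets the heaviest line in each of the other two directions in a triple of `E`, and all but fewer
than `n / 2` triples of `E` lie on these three heaviest lines.

Now let `t` be the triple of `L` at the crossing of a light row and a light column. If `t` lies in
`C`, then by minimality some Latin square without `t` contains the rest of `C`. The light lines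
leave almost no choice in it: its triples are forced along a chain that ends with two different
symbols in one cell, unless a further triple of `E` blocks the chain. Such a blocking triple mostly
lies off the heaviest lines and then belongs to a single pair of row and column. Counting the pairs
against the blocking triples gives `(7n - 2|E| - 22)² < n`.
-/

open Finset

section Coordinates

variable {c d e f : Fin 3}

theorem exists_third_coordinate (c d : Fin 3) : ∃ e, c ≠ e ∧ d ≠ e := by decide +revert

theorem coordinate_eq_or_eq (hcd : c ≠ d) (hce : c ≠ e) (hde : d ≠ e) (hf : f ≠ e) :
    f = c ∨ f = d := by decide +revert

theorem triple_ext_of_ne {α : Type*} (hcd : c ≠ d) (hce : c ≠ e) (hde : d ≠ e) {t u : Fin 3 → α}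
    (hc : t c = u c) (hd : t d = u d) (he : t e = u e) : t = u := by
  funext f
  by_cases hf : f = e
  · rwa [hf]
  · rcases coordinate_eq_or_eq hcd hce hde hf with rfl | rfl <;> assumption

theorem triple_ext {α : Type*} {t u : Fin 3 → α} (h₀ : t 0 = u 0) (h₁ : t 1 = u 1)
    (h₂ : t 2 = u 2) : t = u :=
  triple_ext_of_ne (by decide) (by decide) (by decide) h₀ h₁ h₂

end Coordinates

section LatinArray

variable {α : Type*} {A : Set (Fin 3 → α)} {c d : Fin 3}

/-- A Latin square as its set of triples: any two coordinates can be prescribed, and they determine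
the third. Rows, columns and symbols are the coordinates `0`, `1`, `2`, so that a lemma about an
arbitrary coordinate covers all three. -/
def IsLatinArray (A : Set (Fin 3 → α)) : Prop :=
  ∀ ⦃c d⦄, c ≠ d → ∀ x y, ∃! t, t ∈ A ∧ t c = x ∧ t d = y

theorem isLatinArray_of_lt
    (h : ∀ ⦃c d⦄, c < d → ∀ x y, ∃! t : Fin 3 → α, t ∈ A ∧ t c = x ∧ t d = y) :
    IsLatinArray A := fun c d hcd x y => by
  rcases hcd.lt_or_gt with hcd | hdc
  · exact h hcd x y
  · simpa only [and_comm (a := _ = x)] using h hdc y x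

namespace IsLatinArray

theorem exists_mem (hA : IsLatinArray A) (hcd : c ≠ d) (x y : α) : ∃ t ∈ A, t c = x ∧ t d = y :=
  (hA hcd x y).exists

theorem ext (hA : IsLatinArray A) (hcd : c ≠ d) {t u : Fin 3 → α} (ht : t ∈ A) (hu : u ∈ A)
    (hc : t c = u c) (hd : t d = u d) : t = u :=
  (hA hcd (u c) (u d)).unique ⟨ht, hc, hd⟩ ⟨hu, rfl, rfl⟩

theorem preimage_perm (hA : IsLatinArray A) (σ : Fin 3 → Equiv.Perm α) :
    IsLatinArray {t | (fun c => σ c (t c)) ∈ A} := fun c d hcd x y =>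
  ((Equiv.piCongrRight σ).existsUnique_congr fun _ => and_congr Iff.rfl <|
    and_congr (σ c).apply_eq_iff_eq.symm (σ d).apply_eq_iff_eq.symm).mpr (hA hcd (σ c x) (σ d y))

end IsLatinArray

/-- The Latin square `L` as a set of triples. -/
def cellTriples (L : α → α → α) : Set (Fin 3 → α) := {t | L (t 0) (t 1) = t 2}

theorem ncard_cellTriples [Fintype α] (L : α → α → α) :
    (cellTriples L).ncard = Fintype.card α ^ 2 := by
  have hbij : Set.BijOn (fun t => (t 0, t 1)) (cellTriples L) Set.univ := by
    refine ⟨Set.mapsTo_univ _ _, fun t ht u hu htu => ?_, fun x _ => ?_⟩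
    · obtain ⟨h₀, h₁⟩ := Prod.mk.inj htu
      exact triple_ext h₀ h₁ (by rw [← ht, ← hu, h₀, h₁])
    · exact ⟨![x.1, x.2, L x.1 x.2], by simp [cellTriples], rfl⟩
  rw [hbij.ncard_eq, Set.ncard_univ, Nat.card_prod, Nat.card_eq_fintype_card, sq]

theorem IsLatinSquare.isLatinArray {L : α → α → α} (hL : IsLatinSquare L) :
    IsLatinArray (cellTriples L) := by
  refine isLatinArray_of_lt fun c d hcd x y => ?_
  obtain ⟨rfl, rfl⟩ | ⟨rfl, rfl⟩ | ⟨rfl, rfl⟩ :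
    c = 0 ∧ d = 1 ∨ c = 0 ∧ d = 2 ∨ c = 1 ∧ d = 2 := by decide +revert
  · refine ⟨![x, y, L x y], by simp [cellTriples], ?_⟩
    rintro t ⟨ht, rfl, rfl⟩
    exact triple_ext rfl rfl ht.symm
  · obtain ⟨j, hj, hu⟩ := (hL.1 x).existsUnique y
    refine ⟨![x, j, y], by simpa [cellTriples] using hj, ?_⟩
    rintro t ⟨ht, rfl, rfl⟩
    exact triple_ext rfl (hu _ ht) rfl
  · obtain ⟨i, hi, hu⟩ := (hL.2 x).existsUnique y
    refine ⟨![i, x, y], by simpa [cellTriples] using hi, ?_⟩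
    rintro t ⟨ht, rfl, rfl⟩
    exact triple_ext (hu _ ht) rfl rfl

theorem isLatinSquare_of_isLatinArray {L : α → α → α} (hA : IsLatinArray (cellTriples L)) :
    IsLatinSquare L := by
  have mem (i j) : ![i, j, L i j] ∈ cellTriples L := by simp [cellTriples]
  refine ⟨fun i => ⟨fun j j' hjj' => ?_, fun k => ?_⟩, fun j => ⟨fun i i' hii' => ?_, fun k => ?_⟩⟩
  · exact congrFun (hA.ext (c := 0) (d := 2) (by decide) (mem i j) (mem i j') rfl hjj') 1
  · obtain ⟨t, ht, rfl, rfl⟩ := hA.exists_mem (c := 0) (d := 2) (by decide) i k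
    exact ⟨t 1, ht⟩
  · exact congrFun (hA.ext (c := 1) (d := 2) (by decide) (mem i j) (mem i' j) rfl hii') 0
  · obtain ⟨t, ht, rfl, rfl⟩ := hA.exists_mem (c := 1) (d := 2) (by decide) j k
    exact ⟨t 0, ht⟩

theorem IsLatinArray.exists_isLatinSquare (hA : IsLatinArray A) :
    ∃ L : α → α → α, IsLatinSquare L ∧ cellTriples L = A := by
  choose f hf hf₀ hf₁ using hA.exists_mem (c := 0) (d := 1) (by decide)
  obtain rfl : cellTriples (fun i j => f i j 2) = A := Set.ext fun t => by
    constructor <;> intro ht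
    · rw [← triple_ext (hf₀ (t 0) (t 1)) (hf₁ (t 0) (t 1)) ht]
      exact hf _ _
    · exact congrFun (hA.ext (by decide) (hf _ _) ht (hf₀ _ _) (hf₁ _ _)) 2
  exact ⟨_, isLatinSquare_of_isLatinArray hA, rfl⟩

end LatinArray

section CriticalComplement

variable {α : Type*} {A A' : Set (Fin 3 → α)} {E : Finset (Fin 3 → α)} {p t : Fin 3 → α}
  {c d e : Fin 3}

/-- `A'` is a Latin array that omits the triple `t` but keeps every other triple of `A` outside
`E`. When `A \ E` is a critical set, minimality provides such an `A'` for each of its triples. -/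
structure IsSwitchAt (A : Set (Fin 3 → α)) (E : Finset (Fin 3 → α)) (t : Fin 3 → α)
    (A' : Set (Fin 3 → α)) : Prop where
  isLatinArray : IsLatinArray A'
  notMem : t ∉ A'
  diff_subset : A \ E ⊆ insert t A'

theorem IsSwitchAt.mem_or_eq (h : IsSwitchAt A E t A') (hcd : c ≠ d) {s u : Fin 3 → α}
    (hs : s ∈ A') (hsA : s ∉ A) (hu : u ∈ A) (hc : u c = s c) (hd : u d = s d) :
    u ∈ E ∨ u = t := by
  by_contra! hcon
  have huA' : u ∈ A' := (h.diff_subset ⟨hu, hcon.1⟩).resolve_left hcon.2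
  exact hsA (h.isLatinArray.ext hcd huA' hs hc hd ▸ hu)

/-- `A \ E` is a critical set of the Latin array `A`. The triples of `E` are the empty cells, each
with the symbol that `A` puts there. -/
structure IsCriticalComplement (A : Set (Fin 3 → α)) (E : Finset (Fin 3 → α)) : Prop where
  isLatinArray : IsLatinArray A
  subset : ↑E ⊆ A
  eq_of_diff_subset : ∀ A', IsLatinArray A' → A \ E ⊆ A' → A' = A
  exists_switch : ∀ t ∈ A, t ∉ E → ∃ A', IsSwitchAt A E t A'

namespace IsCriticalComplement

theorem ext (h : IsCriticalComplement A E) (hcd : c ≠ d) {u : Fin 3 → α}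
    (ht : t ∈ E) (hu : u ∈ E) (hc : t c = u c) (hd : t d = u d) : t = u :=
  h.isLatinArray.ext hcd (h.subset ht) (h.subset hu) hc hd

/-- Read with `c` rows, `d` columns, `e` symbols: a symbol `z` filled in row `x` can be removed,
and a second completion then places it in another column of row `x`. -/
theorem exists_mem_mem_eq (h : IsCriticalComplement A E) (hcd : c ≠ d) (hce : c ≠ e) (hde : d ≠ e)
    (x z : α) : ∃ u ∈ E, u c = x ∧ ∃ v ∈ E, v d = u d ∧ v e = z := by
  obtain ⟨t, ht, rfl, rfl⟩ := h.isLatinArray.exists_mem hce x z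
  by_cases htE : t ∈ E
  · exact ⟨t, htE, rfl, t, htE, rfl, rfl⟩
  obtain ⟨A', hA'⟩ := h.exists_switch t ht htE
  obtain ⟨s, hs, hsc, hse⟩ := hA'.isLatinArray.exists_mem hce (t c) (t e)
  have hst : s ≠ t := by rintro rfl; exact hA'.notMem hs
  have hsA : s ∉ A := fun hsA => hst (h.isLatinArray.ext hce hsA ht hsc hse)
  have hsd : t d ≠ s d := fun htd => hst (triple_ext_of_ne hcd hce hde hsc htd.symm hse)
  obtain ⟨u, hu, huc, hud⟩ := h.isLatinArray.exists_mem hcd (s c) (s d)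
  obtain ⟨v, hv, hvd, hve⟩ := h.isLatinArray.exists_mem hde (s d) (s e)
  have huE : u ∈ E := (hA'.mem_or_eq hcd hs hsA hu huc hud).resolve_right fun hut =>
    hsd (hut ▸ hud)
  have hvE : v ∈ E := (hA'.mem_or_eq hde hs hsA hv hvd hve).resolve_right fun hvt =>
    hsd (hvt ▸ hvd)
  exact ⟨u, huE, huc.trans hsc, v, hvE, hvd.trans hud.symm, hve.trans hse⟩

/-- Two entirely empty columns could be interchanged. -/
theorem eq_of_forall_mem (h : IsCriticalComplement A E) {x y : α}
    (hx : ∀ t ∈ A, t c = x → t ∈ E) (hy : ∀ t ∈ A, t c = y → t ∈ E) : x = y := by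
  classical
  obtain ⟨d, hcd, -⟩ := exists_third_coordinate c c
  obtain ⟨e, hce, hde⟩ := exists_third_coordinate c d
  let σ : Fin 3 → Equiv.Perm α := Pi.mulSingle c (Equiv.swap x y)
  have hσ : ∀ f ≠ c, σ f = 1 := fun f hf => Pi.mulSingle_eq_of_ne hf _
  have hA : {t | (fun f => σ f (t f)) ∈ A} = A := by
    refine h.eq_of_diff_subset _ (h.isLatinArray.preimage_perm σ) fun t ⟨ht, htE⟩ => ?_
    have htx : t c ≠ x := fun htc => htE (hx t ht htc)
    have hty : t c ≠ y := fun htc => htE (hy t ht htc)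
    suffices (fun f => σ f (t f)) = t by rwa [Set.mem_ofPred_eq, this]
    refine triple_ext_of_ne hcd hce hde ?_ ?_ ?_
    · simpa [σ] using Equiv.swap_apply_of_ne_of_ne htx hty
    · simp [hσ d hcd.symm]
    · simp [hσ e hce.symm]
  obtain ⟨t, ht, rfl, -⟩ := h.isLatinArray.exists_mem hcd x x
  have hσt := h.isLatinArray.ext hde ht (hA.ge ht) (by simp [hσ d hcd.symm])
    (by simp [hσ e hce.symm])
  simpa [σ] using congrFun hσt c

end IsCriticalComplement

/-- The triples of `E` on the line with coordinate `x` in direction `c` lie on lines through `p` in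
the other two directions. -/
def IsThin (E : Finset (Fin 3 → α)) (p : Fin 3 → α) (c : Fin 3) (x : α) : Prop :=
  ∀ q ∈ E, q c = x → ∃ d ≠ c, q d = p d

theorem IsThin.eq_or_eq {x : α} (hthin : IsThin E p c x) (hcd : c ≠ d) (hce : c ≠ e) (hde : d ≠ e)
    {q : Fin 3 → α} (hq : q ∈ E) (hqc : q c = x) : q d = p d ∨ q e = p e := by
  obtain ⟨f, hf, hqf⟩ := hthin q hq hqc
  rcases coordinate_eq_or_eq hde hcd.symm hce.symm hf with rfl | rfl
  exacts [Or.inl hqf, Or.inr hqf]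

namespace IsSwitchAt

theorem eq_or_eq (hA' : IsSwitchAt A E t A') (h : IsCriticalComplement A E) (hcd : c ≠ d)
    (hce : c ≠ e) (hde : d ≠ e) (ht : t ∈ A) {u s : Fin 3 → α} (hu : u ∈ A) (huc : u c = t c)
    (hud : u d = p d) (hthin : IsThin E p c (t c)) (hs : s ∈ A') (hsc : s c = t c)
    (hsd : s d = t d) : s e = u e ∨ s e = p e := by
  have hst : s ≠ t := by rintro rfl; exact hA'.notMem hs
  have hsA : s ∉ A := fun hsA => hst (h.isLatinArray.ext hcd hsA ht hsc hsd)
  obtain ⟨y, hy, hyc, hye⟩ := h.isLatinArray.exists_mem hce (s c) (s e)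
  have hyE : y ∈ E := (hA'.mem_or_eq hce hs hsA hy hyc hye).resolve_right fun hyt =>
    hst (triple_ext_of_ne hcd hce hde hsc hsd (hyt ▸ hye.symm))
  rcases hthin.eq_or_eq hcd hce hde hyE (hyc.trans hsc) with hyd | hyp
  · rw [← hye, h.isLatinArray.ext hcd hy hu (by rw [hyc, hsc, huc]) (hyd.trans hud.symm)]
    exact Or.inl rfl
  · exact Or.inr (hye.symm.trans hyp)

/-- Read with `c` rows, `d` columns, `e` symbols: if the switch at the cell `t` replaces its symbol
by `p e`, then it puts the symbol of `u` into the cell of `w`. -/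
theorem exists_mem_displaced (hA' : IsSwitchAt A E t A') (h : IsCriticalComplement A E)
    (hcd : c ≠ d) (hce : c ≠ e) (hde : d ≠ e) {u w s : Fin 3 → α}
    (hu : u ∈ A) (huc : u c = t c) (hud : u d = p d) (hthin : IsThin E p c (t c))
    (hw : w ∈ A) (hwc : w c = t c) (hwe : w e = p e) (hwd : w d ≠ t d)
    (hfree : ∀ q ∈ E, q d = w d → q e ≠ t e)
    (hs : s ∈ A') (hsc : s c = t c) (hsd : s d = t d) (hse : s e = p e) :
    ∃ r ∈ A', r c = t c ∧ r d = w d ∧ r e = u e := by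
  obtain ⟨r, hr, hrc, hrd⟩ := hA'.isLatinArray.exists_mem hcd (t c) (w d)
  have hre : r e ≠ p e := fun hre => hwd <| by
    rw [← hrd, hA'.isLatinArray.ext hce hr hs (hrc.trans hsc.symm) (hre.trans hse.symm), hsd]
  have hrA : r ∉ A := fun hrA => hre <| by
    rw [h.isLatinArray.ext hcd hrA hw (hrc.trans hwc.symm) hrd, hwe]
  have hrt : r e ≠ t e := fun hrt => by
    obtain ⟨x, hx, hxd, hxe⟩ := h.isLatinArray.exists_mem hde (r d) (r e)
    rcases hA'.mem_or_eq hde hr hrA hx hxd hxe with hxE | rfl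
    · exact hfree x hxE (hxd.trans hrd) (hxe.trans hrt)
    · exact hwd (hrd.symm.trans hxd.symm)
  obtain ⟨y, hy, hyc, hye⟩ := h.isLatinArray.exists_mem hce (r c) (r e)
  have hyE : y ∈ E := (hA'.mem_or_eq hce hr hrA hy hyc hye).resolve_right fun hyt =>
    hrt (hyt ▸ hye.symm)
  have hyd : y d = p d := (hthin.eq_or_eq hcd hce hde hyE (hyc.trans hrc)).resolve_right
    fun hyp => hre (hye.symm.trans hyp)
  have hyu : y = u := h.isLatinArray.ext hcd hy hu (by rw [hyc, hrc, huc]) (hyd.trans hud.symm)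
  exact ⟨r, hr, hrc, hrd, by rw [← hye, hyu]⟩

/-- Continuing `exists_mem_displaced`, the displaced symbol has to leave the cell of `u`, and the
only other cell of column `p d` open to it is the one in row `p c`. -/
theorem exists_mem_corner (hA' : IsSwitchAt A E t A') (h : IsCriticalComplement A E)
    (hcd : c ≠ d) (hce : c ≠ e) (hde : d ≠ e) {u r : Fin 3 → α}
    (hu : u ∈ E) (huc : u c = t c) (hud : u d = p d) (hthin : IsThin E p e (u e))
    (hr : r ∈ A') (hrc : r c = t c) (hrd : r d ≠ p d) (hre : r e = u e) :
    ∃ s ∈ A', s c = p c ∧ s d = p d ∧ s e = u e := by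
  obtain ⟨s, hs, hsd, hse⟩ := hA'.isLatinArray.exists_mem hde (p d) (u e)
  have hsc : s c ≠ t c := fun hsc => hrd <| by
    rw [← hsd, hA'.isLatinArray.ext hce hr hs (hrc.trans hsc.symm) (hre.trans hse.symm)]
  have hsA : s ∉ A := fun hsA => hsc <| by
    rw [h.isLatinArray.ext hde hsA (h.subset hu) (hsd.trans hud.symm) hse, huc]
  obtain ⟨y, hy, hyc, hye⟩ := h.isLatinArray.exists_mem hce (s c) (s e)
  have hyE : y ∈ E := (hA'.mem_or_eq hce hs hsA hy hyc hye).resolve_right fun hyt =>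
    hsc (hyt ▸ hyc.symm)
  rcases hthin.eq_or_eq hce.symm hde.symm hcd hyE (hye.trans hse) with hyp | hyd
  · exact ⟨s, hs, hyc.symm.trans hyp, hsd, hse⟩
  · refine absurd ?_ hsc
    rw [← hyc, h.ext hde hyE hu (hyd.trans hud.symm) (hye.trans hse), huc]

end IsSwitchAt

/-- Read with `c` rows, `d` columns, `e` symbols: `q` has the symbol of the cell in row `u c` and
column `v d`, not equal to `p e`, and lies in the column in which row `u c` has the symbol `p e`. If
`q` is empty, it can make room for that symbol when the cell is switched to `p e`. -/
def IsBlockedBy (A : Set (Fin 3 → α)) (p : Fin 3 → α) (c d e : Fin 3) (u v q : Fin 3 → α) : Prop :=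
  q e ≠ p e ∧ ∃ t ∈ A, ∃ w ∈ A, (t c = u c ∧ t d = v d) ∧ (w c = u c ∧ w e = p e) ∧
    q d = w d ∧ q e = t e

namespace IsBlockedBy

variable {u u' v v' q q' : Fin 3 → α}

theorem eq_and_eq (hq : IsBlockedBy A p c d e u v q) (hq' : IsBlockedBy A p c d e u' v' q)
    (hA : IsLatinArray A) (hce : c ≠ e) (hde : d ≠ e) : u c = u' c ∧ v d = v' d := by
  obtain ⟨-, t, ht, w, hw, ⟨htc, htd⟩, ⟨hwc, hwe⟩, hqd, hqe⟩ := hq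
  obtain ⟨-, t', ht', w', hw', ⟨htc', htd'⟩, ⟨hwc', hwe'⟩, hqd', hqe'⟩ := hq'
  have hww' : w = w' := hA.ext hde hw hw' (hqd.symm.trans hqd') (hwe.trans hwe'.symm)
  have huu' : u c = u' c := by rw [← hwc, hww', hwc']
  have htt' : t = t' := hA.ext hce ht ht' (by rw [htc, huu', htc']) (hqe.symm.trans hqe')
  exact ⟨huu', by rw [← htd, htt', htd']⟩

theorem blocker_eq (hq : IsBlockedBy A p c d e u v q) (hq' : IsBlockedBy A p c d e u v' q')
    (hA : IsLatinArray A) (hcd : c ≠ d) (hce : c ≠ e) (hqA : q ∈ A) (hqA' : q' ∈ A)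
    (hqq' : q c = q' c) : q = q' := by
  obtain ⟨-, t, -, w, hw, -, ⟨hwc, hwe⟩, hqd, -⟩ := hq
  obtain ⟨-, t', -, w', hw', -, ⟨hwc', hwe'⟩, hqd', -⟩ := hq'
  have hww' : w = w' := hA.ext hce hw hw' (hwc.trans hwc'.symm) (hwe.trans hwe'.symm)
  exact hA.ext hcd hqA hqA' hqq' (by rw [hqd, hww', hqd'])

theorem apply_ne (hq : IsBlockedBy A p c d e u v q) (hA : IsLatinArray A) (hcd : c ≠ d)
    (hu : u ∈ A) (hud : u d = p d) (hue : u e ≠ p e) : q d ≠ p d := fun hqp => hue <| by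
  obtain ⟨-, t, -, w, hw, -, ⟨hwc, hwe⟩, hqd, -⟩ := hq
  rw [← hA.ext hcd hw hu hwc (by rw [← hqd, hqp, hud]), hwe]

end IsBlockedBy

theorem IsSwitchAt.exists_mem_corner_of_not_isBlockedBy (hA' : IsSwitchAt A E t A')
    (h : IsCriticalComplement A E) (hcd : c ≠ d) (hce : c ≠ e) (hde : d ≠ e) (ht : t ∈ A)
    {u v s : Fin 3 → α} (hu : u ∈ E) (htc : t c = u c) (hud : u d = p d) (hue : u e ≠ p e)
    (hcthin : IsThin E p c (u c)) (hethin : IsThin E p e (u e)) (htd : t d = v d)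
    (hnot : ∀ w ∈ A, w c = u c → w d = v d → w e ≠ p e)
    (hblock : ∀ q ∈ E, ¬IsBlockedBy A p c d e u v q)
    (hs : s ∈ A') (hsc : s c = t c) (hsd : s d = t d) (hse : s e = p e) :
    ∃ r ∈ A', r c = p c ∧ r d = p d ∧ r e = u e := by
  obtain ⟨w, hw, hwc, hwe⟩ := h.isLatinArray.exists_mem hce (u c) (p e)
  have hwd : w d ≠ t d := fun hwd => hnot w hw hwc (hwd.trans htd) hwe
  have hwp : w d ≠ p d := fun hwp => hue <| by
    rw [← h.isLatinArray.ext hcd hw (h.subset hu) hwc (hwp.trans hud.symm), hwe]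
  have hfree : ∀ q ∈ E, q d = w d → q e ≠ t e := fun q hq hqd hqe =>
    hblock q hq ⟨hqe ▸ hnot t ht htc htd, t, ht, w, hw, ⟨htc, htd⟩, ⟨hwc, hwe⟩, hqd, hqe⟩
  obtain ⟨r, hr, hrc, hrd, hre⟩ := hA'.exists_mem_displaced h hcd hce hde (h.subset hu) htc.symm
    hud (htc ▸ hcthin) hw (hwc.trans htc.symm) hwe hwd hfree hs hsc hsd hse
  exact hA'.exists_mem_corner h hcd hce hde hu htc.symm hud hethin hr hrc (hrd ▸ hwp) hre

variable [DecidableEq α]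

/-- The triples of `E` whose coordinate `c` is `x`: the empty cells of a row or of a column, or
those missing a given symbol. -/
def line (E : Finset (Fin 3 → α)) (c : Fin 3) (x : α) : Finset (Fin 3 → α) := {t ∈ E | t c = x}

@[simp]
theorem mem_line {x : α} : t ∈ line E c x ↔ t ∈ E ∧ t c = x := mem_filter

theorem sum_card_line [Fintype α] (E : Finset (Fin 3 → α)) (c : Fin 3) :
    ∑ x, #(line E c x) = #E :=
  (card_eq_sum_card_fiberwise fun _ _ => mem_coe.mpr (mem_univ _)).symm

namespace IsCriticalComplement

theorem injOn_line (h : IsCriticalComplement A E) (hcd : c ≠ d) (x : α) :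
    Set.InjOn (fun t : Fin 3 → α => t d) (line E c x) := fun t ht u hu htu => by
  rw [mem_coe, mem_line] at ht hu
  exact h.ext hcd ht.1 hu.1 (ht.2.trans hu.2.symm) htu

theorem card_line_pos (h : IsCriticalComplement A E) (c : Fin 3) (x : α) : 0 < #(line E c x) := by
  obtain ⟨d, hcd, -⟩ := exists_third_coordinate c c
  obtain ⟨e, hce, hde⟩ := exists_third_coordinate c d
  obtain ⟨u, hu, huc, -⟩ := h.exists_mem_mem_eq hcd hce hde x x
  exact card_pos.mpr ⟨u, mem_line.mpr ⟨hu, huc⟩⟩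

theorem mem_of_card_line_le_one (h : IsCriticalComplement A E) (hcd : c ≠ d) {u : Fin 3 → α}
    (hu : u ∈ E) (huc : #(line E c (u c)) ≤ 1) (ht : t ∈ A) (htd : t d = u d) : t ∈ E := by
  obtain ⟨e, hce, hde⟩ := exists_third_coordinate c d
  obtain ⟨u', hu', huc', v, hv, hvd, hve⟩ := h.exists_mem_mem_eq hcd hce hde (u c) (t e)
  obtain rfl : u' = u := card_le_one.mp huc u' (by simp [hu', huc']) u (by simp [hu])
  rwa [h.isLatinArray.ext hde ht (h.subset hv) (htd.trans hvd.symm) hve.symm]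

/-- The other two lines through the only triple of such a line are contained in `E`, and only one
line in each direction is. -/
theorem eq_of_card_line_le_one (h : IsCriticalComplement A E) {x y : α}
    (hx : #(line E c x) ≤ 1) (hy : #(line E c y) ≤ 1) : x = y := by
  obtain ⟨d, hcd, -⟩ := exists_third_coordinate c c
  obtain ⟨e, hce, hde⟩ := exists_third_coordinate c d
  obtain ⟨t, ht⟩ := card_pos.mp (h.card_line_pos c x)
  obtain ⟨u, hu⟩ := card_pos.mp (h.card_line_pos c y)
  obtain ⟨htE, rfl⟩ := mem_line.mp ht
  obtain ⟨huE, rfl⟩ := mem_line.mp hu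
  have eq_of_ne {f} (hcf : c ≠ f) : t f = u f := h.eq_of_forall_mem
    (fun _ => h.mem_of_card_line_le_one hcf htE hx) fun _ => h.mem_of_card_line_le_one hcf huE hy
  rw [h.ext hde htE huE (eq_of_ne hcd) (eq_of_ne hce)]

theorem card_filter_card_line_le_one (h : IsCriticalComplement A E) (c : Fin 3) (T : Finset α) :
    #{x ∈ T | #(line E c x) ≤ 1} ≤ 1 :=
  card_le_one.mpr fun _ hx _ hy => h.eq_of_card_line_le_one
    (mem_filter.mp hx).2 (mem_filter.mp hy).2

theorem two_mul_card_le_sum_card_line (h : IsCriticalComplement A E) (c : Fin 3) (T : Finset α) :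
    2 * #T ≤ ∑ x ∈ T, #(line E c x) + 1 := by
  calc 2 * #T = ∑ x ∈ T, 2 := by simp [mul_comm]
    _ ≤ ∑ x ∈ T, (#(line E c x) + if #(line E c x) ≤ 1 then 1 else 0) :=
      sum_le_sum fun x _ => by have := h.card_line_pos c x; split_ifs <;> omega
    _ = ∑ x ∈ T, #(line E c x) + #{x ∈ T | #(line E c x) ≤ 1} := by
      rw [sum_add_distrib, card_filter]
    _ ≤ ∑ x ∈ T, #(line E c x) + 1 := by grw [h.card_filter_card_line_le_one c T]

variable [Fintype α]

theorem card_line_le (h : IsCriticalComplement A E) (c : Fin 3) (x : α) :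
    #(line E c x) ≤ Fintype.card α := by
  obtain ⟨d, hcd, -⟩ := exists_third_coordinate c c
  rw [← card_image_of_injOn (h.injOn_line hcd x)]
  exact card_le_univ _

theorem card_le_sum_card_line (h : IsCriticalComplement A E) (hcd : c ≠ d) (x : α) :
    Fintype.card α ≤ ∑ t ∈ line E c x, #(line E d (t d)) := by
  obtain ⟨e, hce, hde⟩ := exists_third_coordinate c d
  have cover : univ ⊆ (line E c x).biUnion fun t => (line E d (t d)).image fun u => u e :=
    fun z _ => by simpa [and_assoc] using h.exists_mem_mem_eq hcd hce hde x z
  calc Fintype.card α ≤ #((line E c x).biUnion fun t => (line E d (t d)).image fun u => u e) :=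
        card_le_card cover
    _ ≤ ∑ t ∈ line E c x, #((line E d (t d)).image fun u => u e) := card_biUnion_le
    _ ≤ ∑ t ∈ line E c x, #(line E d (t d)) := sum_le_sum fun _ _ => card_image_le

end IsCriticalComplement

/-- The coordinates of the lines in direction `c` that contain at most two triples of `E`. -/
def lightLines [Fintype α] (E : Finset (Fin 3 → α)) (c : Fin 3) : Finset α :=
  {x | #(line E c x) ≤ 2}

@[simp]
theorem mem_lightLines [Fintype α] {x : α} : x ∈ lightLines E c ↔ #(line E c x) ≤ 2 := by
  simp [lightLines]

namespace IsCriticalComplement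

variable [Fintype α]

theorem three_mul_card_le_sum_card_line (h : IsCriticalComplement A E) (c : Fin 3)
    (T : Finset α) : 3 * #T ≤ ∑ x ∈ T, #(line E c x) + #(lightLines E c) + 1 := by
  calc 3 * #T = ∑ x ∈ T, 3 := by simp [mul_comm]
    _ ≤ ∑ x ∈ T, (#(line E c x) + (if x ∈ lightLines E c then 1 else 0) +
          if #(line E c x) ≤ 1 then 1 else 0) :=
      sum_le_sum fun x _ => by
        have := h.card_line_pos c x
        simp only [mem_lightLines]
        split_ifs <;> omega
    _ = ∑ x ∈ T, #(line E c x) + #{x ∈ T | x ∈ lightLines E c} + #{x ∈ T | #(line E c x) ≤ 1} := by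
      rw [sum_add_distrib, sum_add_distrib, card_filter, card_filter]
    _ ≤ ∑ x ∈ T, #(line E c x) + #(lightLines E c) + 1 := by
      grw [h.card_filter_card_line_le_one c T, filter_mem_eq_inter, inter_subset_right]

theorem card_add_sum_compl_image_le (h : IsCriticalComplement A E) (hcd : c ≠ d) (y : α) :
    Fintype.card α + ∑ x ∈ ((line E d y).image fun t => t c)ᶜ, #(line E c x) ≤ #E := by
  rw [← sum_card_line E c, ← sum_add_sum_compl ((line E d y).image fun t => t c),
    sum_image (h.injOn_line hcd.symm y)]
  grw [h.card_le_sum_card_line hcd.symm y]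

/-- Some column has at most three empty cells, and the rows containing these have at least `n`
empty cells in total. -/
theorem four_mul_card_le_card_add_card_lightLines (h : IsCriticalComplement A E)
    (hE : #E < 4 * Fintype.card α) (c : Fin 3) :
    4 * Fintype.card α ≤ #E + #(lightLines E c) + 10 := by
  obtain ⟨d, hcd, -⟩ := exists_third_coordinate c c
  obtain ⟨y, -, hy⟩ : ∃ y ∈ univ, #(line E d y) < 4 :=
    exists_lt_of_sum_lt (by simpa [sum_card_line, mul_comm] using hE)
  have hsum := h.card_add_sum_compl_image_le hcd y
  have himage := card_image_le (s := line E d y) (f := fun t => t c)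
  set J := (line E d y).image fun t => t c
  have hthree := h.three_mul_card_le_sum_card_line c Jᶜ
  have hcompl := card_add_card_compl J
  omega

end IsCriticalComplement

/-- In each direction `c`, the line through `p` contains the most triples of `E`. The point `p`
itself need not be a triple of the array. -/
def IsHeaviest (E : Finset (Fin 3 → α)) (p : Fin 3 → α) : Prop :=
  ∀ c x, #(line E c x) ≤ #(line E c (p c))

theorem exists_isHeaviest [Finite α] [Nonempty α] (E : Finset (Fin 3 → α)) :
    ∃ p, IsHeaviest E p := by
  choose p hp using fun c => Finite.exists_max fun x => #(line E c x)
  exact ⟨p, hp⟩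

/-- The triples of `E` on the line through `p` in direction `d` whose other two coordinates lie on
light lines. -/
def arm (E : Finset (Fin 3 → α)) (p : Fin 3 → α) (d : Fin 3) : Finset (Fin 3 → α) :=
  {u ∈ line E d (p d) | ∀ c ≠ d, #(line E c (u c)) ≤ 2}

theorem mem_arm {u : Fin 3 → α} :
    u ∈ arm E p d ↔ (u ∈ E ∧ u d = p d) ∧ ∀ c ≠ d, #(line E c (u c)) ≤ 2 := by
  simp [arm]

/-- The triples of `E` on none of the three lines through `p`. -/
def outerTriples (E : Finset (Fin 3 → α)) (p : Fin 3 → α) : Finset (Fin 3 → α) :=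
  {t ∈ E | ∀ c, t c ≠ p c}

namespace IsCriticalComplement

theorem eq_of_mem_arm (h : IsCriticalComplement A E) (hcd : c ≠ d) {u v : Fin 3 → α}
    (hu : u ∈ arm E p d) (hv : v ∈ arm E p d) (huv : u c = v c) : u = v :=
  h.ext hcd (mem_arm.mp hu).1.1 (mem_arm.mp hv).1.1 huv
    ((mem_arm.mp hu).1.2.trans (mem_arm.mp hv).1.2.symm)

theorem card_le_card_arm_of_forall_eq (h : IsCriticalComplement A E) (hce : c ≠ e)
    {P : Finset ((Fin 3 → α) × (Fin 3 → α))} (hP : P ⊆ arm E p d ×ˢ arm E p c)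
    (hinj : ∀ x ∈ P, ∀ y ∈ P, x.1 = y.1 → x.2 e = y.2 e) : #P ≤ #(arm E p d) :=
  card_le_card_of_injOn Prod.fst (fun _ hx => (mem_product.mp (hP hx)).1) fun x hx y hy hxy =>
    Prod.ext hxy <| h.eq_of_mem_arm hce.symm (mem_product.mp (hP hx)).2
      (mem_product.mp (hP hy)).2 (hinj x hx y hy hxy)

theorem card_le_of_forall_exists_mem (h : IsCriticalComplement A E) (hcd : c ≠ d) (hce : c ≠ e)
    {P : Finset ((Fin 3 → α) × (Fin 3 → α))} (hP : P ⊆ arm E p d ×ˢ arm E p c)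
    (hA : ∀ x ∈ P, ∃ w ∈ A, w c = x.1 c ∧ w d = x.2 d ∧ w e = p e) : #P ≤ #(arm E p d) := by
  refine h.card_le_card_arm_of_forall_eq hcd hP fun x hx y hy hxy => ?_
  obtain ⟨w, hw, hwc, hwd, hwe⟩ := hA x hx
  obtain ⟨w', hw', hwc', hwd', hwe'⟩ := hA y hy
  rw [← hwd, ← hwd',
    h.isLatinArray.ext hce hw hw' (by rw [hwc, hwc', hxy]) (hwe.trans hwe'.symm)]

theorem card_le_of_forall_apply_eq (h : IsCriticalComplement A E) (hce : c ≠ e)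
    {P : Finset ((Fin 3 → α) × (Fin 3 → α))} (hP : P ⊆ arm E p d ×ˢ arm E p c)
    (heq : ∀ x ∈ P, x.1 e = x.2 e) : #P ≤ #(arm E p d) :=
  h.card_le_card_arm_of_forall_eq hce hP fun x hx y hy hxy => by rw [← heq x hx, ← heq y hy, hxy]

theorem card_outerTriples_add_sum_card_line_le (h : IsCriticalComplement A E) (p : Fin 3 → α) :
    #(outerTriples E p) + ∑ c, #(line E c (p c)) ≤ #E + 3 := by
  have pair_le {c d : Fin 3} (hcd : c ≠ d) : #{t ∈ E | t c = p c ∧ t d = p d} ≤ 1 :=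
    card_le_one.mpr fun t ht u hu => by
      rw [mem_filter] at ht hu
      exact h.ext hcd ht.1 hu.1 (ht.2.1.trans hu.2.1.symm) (ht.2.2.trans hu.2.2.symm)
  have inclusion_exclusion : #(outerTriples E p) + ∑ c, #(line E c (p c)) ≤
      #E + #{t ∈ E | t 0 = p 0 ∧ t 1 = p 1} + #{t ∈ E | t 0 = p 0 ∧ t 2 = p 2} +
        #{t ∈ E | t 1 = p 1 ∧ t 2 = p 2} := by
    simp only [outerTriples, line, Fin.sum_univ_three, card_eq_sum_ones E, card_filter,
      ← sum_add_distrib, Fin.forall_fin_succ, Fin.forall_fin_zero]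
    refine sum_le_sum fun t _ => ?_
    by_cases h₀ : t 0 = p 0 <;> by_cases h₁ : t 1 = p 1 <;> by_cases h₂ : t 2 = p 2 <;>
      simp [h₀, h₁, h₂]
  grw [inclusion_exclusion, pair_le (by decide), pair_le (by decide), pair_le (by decide)]

variable [Fintype α]

theorem exists_mem_of_card_line_le_two (h : IsCriticalComplement A E)
    (hE : 2 * #E + 14 < 7 * Fintype.card α) (hp : IsHeaviest E p) (hcd : c ≠ d) {y : α}
    (hy : #(line E d y) ≤ 2) : ∃ t ∈ E, t c = p c ∧ t d = y := by
  have hsum := h.card_add_sum_compl_image_le hcd y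
  have hmax : Fintype.card α ≤ 2 * #(line E c (p c)) := by
    grw [h.card_le_sum_card_line hcd.symm y, sum_le_card_nsmul _ _ _ fun t _ => hp c (t c),
      smul_eq_mul, hy]
  have himage := card_image_le (s := line E d y) (f := fun t => t c)
  set J := (line E d y).image fun t => t c with hJ
  by_contra hcon
  have hpJ : p c ∈ Jᶜ := by
    simp only [hJ, mem_compl, mem_image, mem_line]
    rintro ⟨t, ⟨ht, htd⟩, htc⟩
    exact hcon ⟨t, ht, htc, htd⟩
  rw [← add_sum_erase _ _ hpJ] at hsum
  have htwo := h.two_mul_card_le_sum_card_line c (Jᶜ.erase (p c))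
  have herase := card_erase_add_one hpJ
  have hcompl := card_add_card_compl J
  omega

theorem card_lightLines_le_card_filter (h : IsCriticalComplement A E)
    (hE : 2 * #E + 14 < 7 * Fintype.card α) (hp : IsHeaviest E p) (hcd : c ≠ d) :
    #(lightLines E c) ≤ #{t ∈ line E d (p d) | #(line E c (t c)) ≤ 2} := by
  refine card_le_card_of_surjOn (fun t => t c) fun x hx => ?_
  rw [mem_coe, mem_lightLines] at hx
  obtain ⟨t, ht, htd, rfl⟩ := h.exists_mem_of_card_line_le_two hE hp hcd.symm hx
  exact ⟨t, by simp [ht, htd, hx], rfl⟩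

theorem card_lightLines_add_card_lightLines_le (h : IsCriticalComplement A E)
    (hE : 2 * #E + 14 < 7 * Fintype.card α) (hp : IsHeaviest E p) (hcd : c ≠ d) (hce : c ≠ e)
    (hde : d ≠ e) :
    #(lightLines E c) + #(lightLines E d) ≤ #(arm E p e) + Fintype.card α := by
  have hinter : {t ∈ line E e (p e) | #(line E c (t c)) ≤ 2} ∩
      {t ∈ line E e (p e) | #(line E d (t d)) ≤ 2} ⊆ arm E p e := by
    rw [← filter_and]
    refine monotone_filter_right _ fun t _ ht f hf => ?_
    rcases coordinate_eq_or_eq hcd hce hde hf with rfl | rfl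
    exacts [ht.1, ht.2]
  grw [h.card_lightLines_le_card_filter hE hp hce, h.card_lightLines_le_card_filter hE hp hde,
    ← card_inter_add_card_union, hinter, union_subset (filter_subset _ _) (filter_subset _ _),
    h.card_line_le]

theorem seven_mul_card_le_card_add_card_arm (h : IsCriticalComplement A E)
    (hE : 2 * #E + 14 < 7 * Fintype.card α) (hp : IsHeaviest E p) (e : Fin 3) :
    7 * Fintype.card α ≤ 2 * #E + #(arm E p e) + 20 := by
  obtain ⟨c, hec, -⟩ := exists_third_coordinate e e
  obtain ⟨d, hed, hcd⟩ := exists_third_coordinate e c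
  have hc := h.four_mul_card_le_card_add_card_lightLines (by omega) c
  have hd := h.four_mul_card_le_card_add_card_lightLines (by omega) d
  have harm := h.card_lightLines_add_card_lightLines_le hE hp hcd hec.symm hed.symm
  omega

/-- Some triple on an arm is one of at most two triples on its column, and the other one lies in
the row `p c`. -/
theorem card_le_card_line_add_two (h : IsCriticalComplement A E)
    (hE : 2 * #E + 22 ≤ 7 * Fintype.card α) (hp : IsHeaviest E p) (c : Fin 3) :
    Fintype.card α ≤ #(line E c (p c)) + 2 := by
  obtain ⟨d, hcd, -⟩ := exists_third_coordinate c c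
  obtain ⟨e, hce, hde⟩ := exists_third_coordinate c d
  have harm := h.seven_mul_card_le_card_add_card_arm (by omega) hp e
  obtain ⟨q, hq, hqp⟩ : ∃ q ∈ arm E p e, q c ≠ p c := by
    by_contra! hcon
    have : #(arm E p e) ≤ 1 := card_le_one.mpr fun q hq r hr =>
      h.ext hce (mem_arm.mp hq).1.1 (mem_arm.mp hr).1.1 ((hcon q hq).trans (hcon r hr).symm)
        ((mem_arm.mp hq).1.2.trans (mem_arm.mp hr).1.2.symm)
    omega
  obtain ⟨⟨hqE, -⟩, hlight⟩ := mem_arm.mp hq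
  obtain ⟨r, hr, hrp, hrq⟩ :=
    h.exists_mem_of_card_line_le_two (by omega) hp hcd (hlight d hde)
  have hqr : q ≠ r := by rintro rfl; exact hqp hrp
  have hline : {q, r} = line E d (q d) := by
    refine eq_of_subset_of_card_le (by simp [insert_subset_iff, hqE, hr, hrq]) ?_
    rw [card_pair hqr]
    exact hlight d hde
  calc Fintype.card α ≤ ∑ t ∈ line E d (q d), #(line E c (t c)) :=
        h.card_le_sum_card_line hcd.symm (q d)
    _ = #(line E c (q c)) + #(line E c (p c)) := by rw [← hline, sum_pair hqr, hrp]
    _ ≤ #(line E c (p c)) + 2 := by grw [hlight c hce, add_comm]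

omit [DecidableEq α] in
theorem seven_le_card (h : IsCriticalComplement A E) (hE : 2 * #E + 22 ≤ 7 * Fintype.card α) :
    7 ≤ Fintype.card α := by
  classical
  have htwo := h.two_mul_card_le_sum_card_line 0 univ
  rw [sum_card_line, card_univ] at htwo
  omega

theorem ne_of_card_line_le_two (h : IsCriticalComplement A E)
    (hE : 2 * #E + 22 ≤ 7 * Fintype.card α) (hp : IsHeaviest E p) {x : α}
    (hx : #(line E c x) ≤ 2) : x ≠ p c := by
  rintro rfl
  have := h.seven_le_card hE
  have := h.card_le_card_line_add_two hE hp c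
  omega

theorem isThin_of_mem_arm (h : IsCriticalComplement A E)
    (hE : 2 * #E + 22 ≤ 7 * Fintype.card α) (hp : IsHeaviest E p) {u : Fin 3 → α}
    (hu : u ∈ arm E p d) (hcd : c ≠ d) : IsThin E p c (u c) := by
  obtain ⟨e, hce, hde⟩ := exists_third_coordinate c d
  obtain ⟨⟨huE, hud⟩, hlight⟩ := mem_arm.mp hu
  obtain ⟨w, hw, hwe, hwc⟩ :=
    h.exists_mem_of_card_line_le_two (by omega) hp hce.symm (hlight c hcd)
  have huw : u ≠ w := by
    rintro rfl
    exact h.ne_of_card_line_le_two hE hp (hlight e hde.symm) hwe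
  have hline : {u, w} = line E c (u c) := by
    refine eq_of_subset_of_card_le (by simp [insert_subset_iff, huE, hw, hwc]) ?_
    rw [card_pair huw]
    exact hlight c hcd
  intro q hq hqc
  have hquw : q ∈ ({u, w} : Finset (Fin 3 → α)) := by simp [hline, hq, hqc]
  rcases mem_insert.mp hquw with rfl | hqw
  · exact ⟨d, hcd.symm, hud⟩
  · exact ⟨e, hce.symm, mem_singleton.mp hqw ▸ hwe⟩

/-- Exchanging the symbol of the cell in row `u c` and column `v d` forces `p e` into that cell and
the triples `u` and `v` out of theirs, both of them into the cell in row `p c` and column `p d`. -/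
theorem exists_isBlockedBy_of_mem_arm (h : IsCriticalComplement A E)
    (hE : 2 * #E + 22 ≤ 7 * Fintype.card α) (hp : IsHeaviest E p) (hcd : c ≠ d) (hce : c ≠ e)
    (hde : d ≠ e) {u v : Fin 3 → α} (hu : u ∈ arm E p d) (hv : v ∈ arm E p c) :
    (∃ w ∈ A, w c = u c ∧ w d = v d ∧ w e = p e) ∨ u e = v e ∨
      (∃ q ∈ E, IsBlockedBy A p c d e u v q) ∨ ∃ q ∈ E, IsBlockedBy A p d c e v u q := by
  by_contra! ⟨hnot, huv, hblock, hblock'⟩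
  have hucthin := h.isThin_of_mem_arm hE hp hu hcd
  have huethin := h.isThin_of_mem_arm hE hp hu hde.symm
  have hvdthin := h.isThin_of_mem_arm hE hp hv hcd.symm
  have hvethin := h.isThin_of_mem_arm hE hp hv hce.symm
  obtain ⟨⟨huE, hud⟩, hulight⟩ := mem_arm.mp hu
  obtain ⟨⟨hvE, hvc⟩, hvlight⟩ := mem_arm.mp hv
  have hue : u e ≠ p e := h.ne_of_card_line_le_two hE hp (hulight e hde.symm)
  have hve : v e ≠ p e := h.ne_of_card_line_le_two hE hp (hvlight e hce.symm)
  have hvd : v d ≠ p d := h.ne_of_card_line_le_two hE hp (hvlight d hcd.symm)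
  have huA := h.subset huE
  have hvA := h.subset hvE
  obtain ⟨t, ht, htc, htd⟩ := h.isLatinArray.exists_mem hcd (u c) (v d)
  have hte : t e ≠ p e := hnot t ht htc htd
  have htE : t ∉ E := fun htE => by
    rcases hucthin.eq_or_eq hcd hce hde htE htc with hp' | hp'
    exacts [hvd (htd.symm.trans hp'), hte hp']
  obtain ⟨A', hA'⟩ := h.exists_switch t ht htE
  obtain ⟨s, hs, hsc, hsd⟩ := hA'.isLatinArray.exists_mem hcd (t c) (t d)
  have hse : s e = p e := by
    have hsu := hA'.eq_or_eq h hcd hce hde ht huA htc.symm hud (htc ▸ hucthin) hs hsc hsd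
    have hsv := hA'.eq_or_eq h hcd.symm hde hce ht hvA htd.symm hvc (htd ▸ hvdthin) hs hsd hsc
    exact hsu.resolve_left fun hsu => hsv.elim (fun hsv => huv (hsu.symm.trans hsv))
      fun hsv => hue (hsu.symm.trans hsv)
  obtain ⟨r, hr, hrc, hrd, hre⟩ := hA'.exists_mem_corner_of_not_isBlockedBy h hcd hce hde ht
    huE htc hud hue hucthin huethin htd hnot hblock hs hsc hsd hse
  obtain ⟨r', hr', hrd', hrc', hre'⟩ := hA'.exists_mem_corner_of_not_isBlockedBy h hcd.symm hde hce
    ht hvE htd hvc hve hvdthin hvethin htc (fun w hw hwd hwc => hnot w hw hwc hwd) hblock' hs hsd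
    hsc hse
  rw [← hre, ← hre', hA'.isLatinArray.ext hcd hr hr' (hrc.trans hrc'.symm) (hrd.trans hrd'.symm)]
    at huv
  exact huv rfl

/-- A blocking triple in the row `p c` is determined by the first component of the pair; any other
one lies on none of the lines through `p` and determines both components. -/
theorem card_le_of_forall_exists_isBlockedBy (h : IsCriticalComplement A E)
    (hE : 2 * #E + 22 ≤ 7 * Fintype.card α) (hp : IsHeaviest E p) (hcd : c ≠ d) (hce : c ≠ e)
    (hde : d ≠ e) {P : Finset ((Fin 3 → α) × (Fin 3 → α))} (hP : P ⊆ arm E p d ×ˢ arm E p c)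
    (hblock : ∀ x ∈ P, ∃ q ∈ E, IsBlockedBy A p c d e x.1 x.2 q) :
    #P ≤ #(arm E p d) + #(outerTriples E p) := by
  classical
  have pair_ext {x y} (hx : x ∈ P) (hy : y ∈ P) (hxy : x.1 c = y.1 c ∧ x.2 d = y.2 d) : x = y :=
    have hx := mem_product.mp (hP hx)
    have hy := mem_product.mp (hP hy)
    Prod.ext (h.eq_of_mem_arm hcd hx.1 hy.1 hxy.1) (h.eq_of_mem_arm hcd.symm hx.2 hy.2 hxy.2)
  rw [← card_filter_add_card_filter_not
    fun x => ∃ q ∈ E, q c = p c ∧ IsBlockedBy A p c d e x.1 x.2 q]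
  refine add_le_add
    (h.card_le_card_arm_of_forall_eq hcd ((filter_subset _ _).trans hP) fun x hx y hy hxy => ?_)
    (card_le_card_of_forall_subsingleton (fun x q => IsBlockedBy A p c d e x.1 x.2 q)
      (fun x hx => ?_) fun q _ x hx y hy => ?_)
  · obtain ⟨-, q, hq, hqc, hqx⟩ := mem_filter.mp hx
    obtain ⟨-, r, hr, hrc, hry⟩ := mem_filter.mp hy
    obtain rfl : q = r := (hxy ▸ hqx).blocker_eq hry h.isLatinArray hcd hce (h.subset hq)
      (h.subset hr) (hqc.trans hrc.symm)
    exact (hqx.eq_and_eq hry h.isLatinArray hce hde).2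
  · obtain ⟨hx, hnot⟩ := mem_filter.mp hx
    obtain ⟨q, hq, hqx⟩ := hblock x hx
    obtain ⟨⟨hu, hud⟩, hlight⟩ := mem_arm.mp (mem_product.mp (hP hx)).1
    have hue := h.ne_of_card_line_le_two hE hp (hlight e hde.symm)
    refine ⟨q, mem_filter.mpr ⟨hq, fun f => ?_⟩, hqx⟩
    by_cases hfe : f = e
    · exact hfe ▸ hqx.1
    rcases coordinate_eq_or_eq hcd hce hde hfe with rfl | rfl
    exacts [fun hqc => hnot ⟨q, hq, hqc, hqx⟩,
      hqx.apply_ne h.isLatinArray hcd (h.subset hu) hud hue]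
  · exact pair_ext (mem_filter.mp hx.1).1 (mem_filter.mp hy.1).1
      (hx.2.eq_and_eq hy.2 h.isLatinArray hce hde)

theorem card_arm_mul_card_arm_le (h : IsCriticalComplement A E)
    (hE : 2 * #E + 22 ≤ 7 * Fintype.card α) (hp : IsHeaviest E p) (hcd : c ≠ d) :
    #(arm E p d) * #(arm E p c) ≤ 3 * #(arm E p d) + #(arm E p c) + 2 * #(outerTriples E p) := by
  classical
  obtain ⟨e, hce, hde⟩ := exists_third_coordinate c d
  let P₁ := {x ∈ arm E p d ×ˢ arm E p c | ∃ w ∈ A, w c = x.1 c ∧ w d = x.2 d ∧ w e = p e}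
  let P₂ := {x ∈ arm E p d ×ˢ arm E p c | x.1 e = x.2 e}
  let P₃ := {x ∈ arm E p d ×ˢ arm E p c | ∃ q ∈ E, IsBlockedBy A p c d e x.1 x.2 q}
  let P₄ := {x ∈ arm E p c ×ˢ arm E p d | ∃ q ∈ E, IsBlockedBy A p d c e x.1 x.2 q}
  have hcover : arm E p d ×ˢ arm E p c ⊆ P₁ ∪ P₂ ∪ P₃ ∪ P₄.image Prod.swap := by
    rintro ⟨u, v⟩ huv
    obtain ⟨hu, hv⟩ := mem_product.mp huv
    have := h.exists_isBlockedBy_of_mem_arm hE hp hcd hce hde hu hv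
    simp only [P₁, P₂, P₃, P₄, mem_union, mem_filter, mem_image, mem_product, Prod.exists]
    simpa [hu, hv, or_assoc] using this
  have h₁ : #P₁ ≤ #(arm E p d) :=
    h.card_le_of_forall_exists_mem hcd hce (filter_subset _ _) fun _ hx => (mem_filter.mp hx).2
  have h₂ : #P₂ ≤ #(arm E p d) :=
    h.card_le_of_forall_apply_eq hce (filter_subset _ _) fun _ hx => (mem_filter.mp hx).2
  have h₃ : #P₃ ≤ #(arm E p d) + #(outerTriples E p) :=
    h.card_le_of_forall_exists_isBlockedBy hE hp hcd hce hde (filter_subset _ _)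
      fun _ hx => (mem_filter.mp hx).2
  have h₄ : #P₄ ≤ #(arm E p c) + #(outerTriples E p) :=
    h.card_le_of_forall_exists_isBlockedBy hE hp hcd.symm hde hce (filter_subset _ _)
      fun _ hx => (mem_filter.mp hx).2
  have hcard := card_le_card hcover
  grw [card_product, card_union_le, card_union_le, card_union_le, card_image_le, h₁, h₂, h₃, h₄]
    at hcard
  omega

omit [DecidableEq α] in
theorem sq_lt_card (h : IsCriticalComplement A E) {z : ℕ}
    (hz : 2 * #E + 22 + z ≤ 7 * Fintype.card α) : z ^ 2 < Fintype.card α := by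
  classical
  have hE : 2 * #E + 22 ≤ 7 * Fintype.card α := by omega
  have hn := h.seven_le_card hE
  have : Nonempty α := Fintype.card_pos_iff.mp (by omega)
  obtain ⟨p, hp⟩ := exists_isHeaviest E
  have harm (c : Fin 3) : z + 2 ≤ #(arm E p c) := by
    have := h.seven_mul_card_le_card_add_card_arm (by omega) hp c
    omega
  have houter : 2 * #(outerTriples E p) + z + 4 ≤ Fintype.card α := by
    have hline := h.card_le_card_line_add_two hE hp
    have hsum := h.card_outerTriples_add_sum_card_line_le p
    have h₀ := hline 0
    have h₁ := hline 1
    have h₂ := hline 2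
    rw [Fin.sum_univ_three] at hsum
    omega
  have hpairs := h.card_arm_mul_card_arm_le hE hp (c := 1) (d := 0) (by decide)
  obtain ⟨s, hs⟩ := Nat.exists_eq_add_of_le (harm 0)
  obtain ⟨t, ht⟩ := Nat.exists_eq_add_of_le (harm 1)
  rw [hs, ht] at hpairs
  rcases Nat.eq_zero_or_pos z with rfl | hzpos
  · positivity
  have hzs : s ≤ z * s := Nat.le_mul_of_pos_left s hzpos
  have hzt : t ≤ z * t := Nat.le_mul_of_pos_left t hzpos
  nlinarith [Nat.zero_le (s * t)]

omit [DecidableEq α] in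
theorem seven_mul_card_lt (h : IsCriticalComplement A E) :
    (7 * Fintype.card α : ℝ) < 2 * #E + 22 + √(Fintype.card α) := by
  by_contra! hle
  obtain ⟨z, hz⟩ : ∃ z, 7 * Fintype.card α = 2 * #E + 22 + z := by
    refine Nat.exists_eq_add_of_le ?_
    have := Real.sqrt_nonneg (Fintype.card α)
    exact_mod_cast (by linarith : (2 * #E + 22 : ℝ) ≤ 7 * Fintype.card α)
  have hzreal : (7 * Fintype.card α : ℝ) = 2 * #E + 22 + z := by exact_mod_cast hz
  have hsqrt : (Fintype.card α : ℝ) ≤ z ^ 2 := Real.sqrt_le_iff.mp (by linarith) |>.2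
  exact (h.sq_lt_card hz.ge).not_ge (by exact_mod_cast hsqrt)

end IsCriticalComplement

end CriticalComplement

section CriticalSet

variable {α : Type*} {L : α → α → α} {C : Set (α × α × α)}

/-- Identifies the two encodings of a triple, as a function on coordinates and as an iterated
pair. -/
def tripleEquiv (α : Type*) : (Fin 3 → α) ≃ α × α × α where
  toFun t := (t 0, t 1, t 2)
  invFun x := ![x.1, x.2.1, x.2.2]
  left_inv _ := triple_ext rfl rfl rfl
  right_inv _ := rfl

/-- The triples of `L` at the cells that are empty for `C`. -/
noncomputable def emptyTriples [Finite α] (L : α → α → α) (C : Set (α × α × α)) :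
    Finset (Fin 3 → α) :=
  (Set.toFinite (cellTriples L \ tripleEquiv α ⁻¹' C)).toFinset

theorem coe_emptyTriples [Finite α] (L : α → α → α) (C : Set (α × α × α)) :
    (emptyTriples L C : Set (Fin 3 → α)) = cellTriples L \ tripleEquiv α ⁻¹' C :=
  Set.Finite.coe_toFinset _

theorem ContainedIn.preimage_subset (hC : ContainedIn C L) : tripleEquiv α ⁻¹' C ⊆ cellTriples L :=
  fun _ ht => hC _ ht

theorem ContainedIn.card_emptyTriples_add_ncard [Fintype α] (hC : ContainedIn C L) :
    #(emptyTriples L C) + C.ncard = Fintype.card α ^ 2 := by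
  rw [← ncard_cellTriples L, ← Set.ncard_sdiff_add_ncard_of_subset hC.preimage_subset,
    ← coe_emptyTriples, Set.ncard_coe_finset, Set.ncard_preimage_of_injective_subset_range
      (tripleEquiv α).injective (by simp)]

theorem IsCriticalSet.isCriticalComplement [Finite α] (hC : IsCriticalSet C L)
    (hL : IsLatinSquare L) :
    IsCriticalComplement (cellTriples L) (emptyTriples L C) := by
  obtain ⟨hCL, hunique, hminimal⟩ := hC
  have hdiff : cellTriples L \ ↑(emptyTriples L C) = tripleEquiv α ⁻¹' C := by
    rw [coe_emptyTriples, Set.sdiff_sdiff_cancel_left hCL.preimage_subset]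
  refine ⟨hL.isLatinArray, ?_, fun A' hA' hsub => ?_, fun t ht htE => ?_⟩
  · rw [coe_emptyTriples]
    exact Set.sdiff_subset
  · obtain ⟨L', hL', rfl⟩ := hA'.exists_isLatinSquare
    rw [hdiff] at hsub
    rw [hunique L' hL' fun x hx => hsub (a := (tripleEquiv α).symm x) hx]
  · have htC : tripleEquiv α t ∈ C := hdiff.le ⟨ht, htE⟩
    obtain ⟨L', hL', hCL', hne⟩ := hminimal _ (Set.sdiff_singleton_ssubset.mpr htC)
    refine ⟨cellTriples L', hL'.isLatinArray, fun htL' => hne (hunique L' hL' fun x hx => ?_), ?_⟩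
    · by_cases hxt : x = tripleEquiv α t
      · exact hxt ▸ htL'
      · exact hCL' x ⟨hx, hxt⟩
    · rw [hdiff]
      intro u hu
      by_cases hut : u = t
      · exact Or.inl hut
      · exact Or.inr (hCL' _ ⟨hu, (tripleEquiv α).injective.ne hut⟩)

end CriticalSet

theorem criticalSet_empty_cells_bound_general {Q : Type*} [Fintype Q] {L : Q → Q → Q}
    (hL : IsLatinSquare L) {C : Set (Q × Q × Q)} (hC : IsCriticalSet C L) :
    ⌊((7 * Fintype.card Q - √(Fintype.card Q) - 20) / 2 : ℝ)⌋₊ ≤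
      Fintype.card Q ^ 2 - C.ncard := by
  rw [← hC.1.card_emptyTriples_add_ncard, Nat.add_sub_cancel, ← Nat.lt_add_one_iff,
    Nat.floor_lt' (Nat.succ_ne_zero _)]
  have := (hC.isCriticalComplement hL).seven_mul_card_lt
  push_cast
  linarith

/-- every critical set `C` of a Latin square of order `n ≥ 7`
leaves at least `⌊(7n − √n − 20)/2⌋` cells empty, i.e.
`n² − |C| ≥ ⌊(7n − √n − 20)/2⌋`. -/
theorem criticalSet_empty_cells_bound (n : ℕ) (hn : 7 ≤ n)
    (L : Fin n → Fin n → Fin n) (hL : IsLatinSquare L)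
    (C : Set (Fin n × Fin n × Fin n)) (hC : IsCriticalSet C L) :
    ⌊((7 * n - Real.sqrt n - 20) / 2 : ℝ)⌋₊ ≤ n ^ 2 - C.ncard := by
  simpa using criticalSet_empty_cells_bound_general hL hC
end

section
/- For every positive integer n and every integer m with ⌊n²/4⌋ ≤ m ≤ ⌊(n² − n)/2⌋, except when n is even and m = n²/4 + 1, there exist a Latin square L of order n and a critical set C of L with |C| = m. -/
/-!
All squares are cyclic, `L i j = i + j` modulo `n`, up to a switch of one intercalate. A set of
cells is critical once it determines the square and each of its cells is indispensable, that is,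
lies in a trade meeting the set in no other cell.

To make such trades, run the Euclidean algorithm on `(p, q)`: it changes a `(p + 1) × (q + 1)` piece
of an addition table into another filling with the same row and column contents. Apart
from two corners the changes avoid the first `p` columns. A suitable choice of `p`, of the place of
the piece and of the roles of the three coordinates therefore keeps the trade off all cells of the
set but one. Uniqueness of completion is proved by induction along the antidiagonals.

Taking for each symbol one of the antidiagonals `i + j = s` and `i + j = n + s` gives the sizes
near `n² / 4` and the maximum. For other large sizes, pairs of border cells are exchanged for single
cells of an antidiagonal, each exchange lowering the size by one. For even `n` whole antidiagonals
give only even distances from `n² / 4`; the odd ones come from a square with a switched intercalate.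
-/

open Finset

/-! ### Pretrades -/

/-- The rows `0, …, p` of the array `g`, read in the columns `0, …, q`, have the contents of the
rows of the addition table, except that the first row has `q` in place of `0` and the last row has
`p` in place of `p + q`. Contents are compared by summing test functions. -/
def RowPretrade (p q : ℕ) (g : ℕ → ℕ → ℕ) : Prop :=
  ∀ φ : ℕ → ℤ, ∀ x ≤ p, ∑ y ∈ range (q + 1), (φ (g x y) - φ (x + y)) =
    (if x = 0 then φ q - φ 0 else 0) + (if x = p then φ p - φ (p + q) else 0)

/-- An array with rows `0, …, p` and columns `0, …, q` which is a trade of the addition table up to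
prescribed defects in the extreme rows and columns. Pretrades are built by the Euclidean algorithm
on `(p, q)` and become trades once the corners are corrected. -/
structure IsPretrade (p q : ℕ) (g : ℕ → ℕ → ℕ) : Prop where
  row : RowPretrade p q g
  col : RowPretrade q p fun y x => g x y
  corner_right : g 0 q = q
  corner_bot : g p 0 = p

theorem IsPretrade.symm {p q : ℕ} {g : ℕ → ℕ → ℕ} (h : IsPretrade p q g) :
    IsPretrade q p fun y x => g x y :=
  ⟨h.col, h.row, h.corner_bot, h.corner_right⟩

/-- The pretrade of a square: the extreme symbols `0` and `2 * p` are replaced by `p`. -/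
def squarePretrade (p x y : ℕ) : ℕ :=
  if x = 0 ∧ y = 0 ∨ x = p ∧ y = p then p else x + y

theorem rowPretrade_squarePretrade {p : ℕ} (hp : 0 < p) : RowPretrade p p (squarePretrade p) := by
  intro φ x _
  have defect : ∀ y, φ (squarePretrade p x y) - φ (x + y) =
      (if y = 0 then (if x = 0 then φ p - φ 0 else 0) else 0) +
      (if y = p then (if x = p then φ p - φ (p + p) else 0) else 0) := by
    intro y
    unfold squarePretrade
    split_ifs <;> first | omega | (subst_vars; simp)
  simp [defect, sum_add_distrib]

theorem squarePretrade_comm (p x y : ℕ) : squarePretrade p x y = squarePretrade p y x := by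
  simp only [squarePretrade, and_comm, add_comm]

theorem isPretrade_squarePretrade {p : ℕ} (hp : 0 < p) : IsPretrade p p (squarePretrade p) where
  row := rowPretrade_squarePretrade hp
  col := by simpa only [squarePretrade_comm p _ _] using rowPretrade_squarePretrade hp
  corner_right := by simp [squarePretrade, hp.ne']
  corner_bot := by simp [squarePretrade, hp.ne']

/-- The step of the Euclidean algorithm: a pretrade `g` is moved `p` columns to the right, and half
of a square pretrade is put in front of it. -/
def extendPretrade (p : ℕ) (g : ℕ → ℕ → ℕ) (x y : ℕ) : ℕ :=
  if y < p then (if x = 0 ∧ y = 0 then p else x + y)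
  else if x = p ∧ y = p then p else g x (y - p) + p

section Extend

variable {p q : ℕ} {g : ℕ → ℕ → ℕ}

theorem extendPretrade_defect_of_lt (φ : ℕ → ℤ) (x : ℕ) {y : ℕ} (hy : y < p) :
    φ (extendPretrade p g x y) - φ (x + y) =
      if y = 0 then (if x = 0 then φ p - φ 0 else 0) else 0 := by
  unfold extendPretrade
  split_ifs <;> first | omega | (subst_vars; simp)

theorem IsPretrade.extendPretrade_defect_add (h : IsPretrade p q g) (φ : ℕ → ℤ) (x y : ℕ) :
    φ (extendPretrade p g x (p + y)) - φ (x + (p + y)) =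
      (φ (g x y + p) - φ (x + y + p)) +
        if y = 0 then (if x = p then φ p - φ (p + p) else 0) else 0 := by
  have assoc : x + (p + y) = x + y + p := by ring
  rw [assoc]
  by_cases hxy : x = p ∧ y = 0
  · obtain ⟨rfl, rfl⟩ := hxy
    simp [extendPretrade, h.corner_bot]
  · have : ¬ (x = p ∧ p + y = p) := by omega
    simp only [extendPretrade, this, if_false, Nat.add_sub_cancel_left]
    split_ifs <;> omega

theorem IsPretrade.rowPretrade_extendPretrade (hp : 0 < p) (h : IsPretrade p q g) :
    RowPretrade p (p + q) (extendPretrade p g) := by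
  intro φ x hx
  have front := sum_congr rfl fun y (hy : y ∈ range p) =>
    extendPretrade_defect_of_lt (g := g) φ x (mem_range.1 hy)
  rw [add_assoc, sum_range_add, front]
  simp only [h.extendPretrade_defect_add, sum_add_distrib, h.row (fun t => φ (t + p)) x hx,
    sum_ite_eq', mem_range, hp, Nat.succ_pos, if_true, add_comm p q]
  split_ifs <;> ring_nf

theorem IsPretrade.colPretrade_extendPretrade (hp : 0 < p) (hq : 0 < q) (h : IsPretrade p q g) :
    RowPretrade (p + q) p fun y x => extendPretrade p g x y := by
  intro φ y hy
  simp only [add_comm y]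
  rcases lt_or_ge y p with hyp | hyp
  · have : y ≠ p + q := by omega
    simp [extendPretrade_defect_of_lt φ _ hyp, this]
  · obtain ⟨y, rfl⟩ := Nat.exists_eq_add_of_le hyp
    have old := h.col (fun t => φ (t + p)) y (by omega)
    simp only [add_comm y] at old
    simp only [h.extendPretrade_defect_add, sum_add_distrib, old, add_comm p q]
    split_ifs <;> first | omega | simp [*]

theorem IsPretrade.extend (hp : 0 < p) (hq : 0 < q) (h : IsPretrade p q g) :
    IsPretrade p (p + q) (extendPretrade p g) where
  row := h.rowPretrade_extendPretrade hp
  col := h.colPretrade_extendPretrade hp hq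
  corner_right := by
    simp [extendPretrade, hq.ne', h.corner_right, add_comm]
  corner_bot := by simp [extendPretrade, hp, hp.ne']

end Extend

theorem exists_isPretrade {p q : ℕ} (hp : 0 < p) (hq : 0 < q) : ∃ g, IsPretrade p q g := by
  induction hN : p + q using Nat.strong_induction_on generalizing p q with
  | _ N ih =>
    rcases lt_trichotomy p q with h | rfl | h
    · obtain ⟨d, rfl⟩ := Nat.exists_eq_add_of_lt h
      obtain ⟨g, hg⟩ := ih (p + (d + 1)) (by omega) hp d.succ_pos rfl
      exact ⟨_, hg.extend hp d.succ_pos⟩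
    · exact ⟨_, isPretrade_squarePretrade hp⟩
    · obtain ⟨d, rfl⟩ := Nat.exists_eq_add_of_lt h
      obtain ⟨g, hg⟩ := ih (q + (d + 1)) (by omega) hq d.succ_pos rfl
      exact ⟨_, (hg.extend hq d.succ_pos).symm⟩

theorem exists_isPretrade_of_le {p q : ℕ} (hp : 0 < p) (hpq : p ≤ q) :
    ∃ g, IsPretrade p q g ∧ g 0 0 = p ∧ ∀ x y, g x y ≠ x + y → x = 0 ∧ y = 0 ∨ p ≤ y := by
  rcases hpq.eq_or_lt with rfl | h
  · refine ⟨_, isPretrade_squarePretrade hp, by simp [squarePretrade], fun x y hxy => ?_⟩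
    unfold squarePretrade at hxy
    split_ifs at hxy <;> omega
  · obtain ⟨d, rfl⟩ := Nat.exists_eq_add_of_lt h
    obtain ⟨g, hg⟩ := exists_isPretrade hp d.succ_pos
    refine ⟨_, hg.extend hp d.succ_pos, by simp [extendPretrade, hp], fun x y hxy => ?_⟩
    unfold extendPretrade at hxy
    split_ifs at hxy <;> omega

/-- The addition table with `p + q` in place of the corner `0`. -/
def corneredTable (p q x y : ℕ) : ℕ :=
  if x = 0 ∧ y = 0 then p + q else x + y

theorem corneredTable_comm (p q x y : ℕ) : corneredTable q p y x = corneredTable p q x y := by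
  simp only [corneredTable, and_comm, add_comm]

/-- The correction of the corners of a pretrade which turns it into a trade of `corneredTable`. -/
def closePretrade (p q : ℕ) (g : ℕ → ℕ → ℕ) (x y : ℕ) : ℕ :=
  if x = 0 ∧ y = q ∨ x = p ∧ y = 0 then p + q else g x y

section Close

variable {p q : ℕ} {g : ℕ → ℕ → ℕ}

theorem IsPretrade.closePretrade_defect (hp : 0 < p) (hq : 0 < q) (hg : IsPretrade p q g)
    (φ : ℕ → ℤ) (x y : ℕ) :
    φ (closePretrade p q g x y) - φ (corneredTable p q x y) = (φ (g x y) - φ (x + y)) +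
      (if y = q then (if x = 0 then φ (p + q) - φ q else 0) else 0) +
      (if y = 0 then (if x = p then φ (p + q) - φ p else 0) else 0) -
      (if y = 0 then (if x = 0 then φ (p + q) - φ 0 else 0) else 0) := by
  have right := hg.corner_right
  have bot := hg.corner_bot
  unfold closePretrade corneredTable
  split_ifs <;> first | omega | (subst_vars; simp [right, bot])

theorem IsPretrade.sum_closePretrade_row (hp : 0 < p) (hq : 0 < q) (hg : IsPretrade p q g)
    (φ : ℕ → ℤ) {x : ℕ} (hx : x ≤ p) :
    ∑ y ∈ range (q + 1), (φ (closePretrade p q g x y) - φ (corneredTable p q x y)) = 0 := by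
  simp only [hg.closePretrade_defect hp hq, sum_sub_distrib (fun _ => _ + _), sum_add_distrib,
    hg.row φ x hx, sum_ite_eq', mem_range, lt_add_one, Nat.succ_pos, if_true]
  split_ifs <;> omega

theorem closePretrade_comm (p q : ℕ) (g : ℕ → ℕ → ℕ) (x y : ℕ) :
    closePretrade q p (fun y x => g x y) y x = closePretrade p q g x y := by
  simp only [closePretrade, and_comm, or_comm, add_comm]

theorem exists_corneredTable_trade (hp : 0 < p) (hpq : p ≤ q) :
    ∃ h : ℕ → ℕ → ℕ,
      (∀ φ : ℕ → ℤ, ∀ x ≤ p, ∑ y ∈ range (q + 1), (φ (h x y) - φ (corneredTable p q x y)) = 0) ∧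
      (∀ φ : ℕ → ℤ, ∀ y ≤ q, ∑ x ∈ range (p + 1), (φ (h x y) - φ (corneredTable p q x y)) = 0) ∧
      h 0 0 = p ∧
      ∀ x y, h x y ≠ corneredTable p q x y → y = 0 ∧ (x = 0 ∨ x = p) ∨ p ≤ y := by
  obtain ⟨g, hg, hg0, hsupp⟩ := exists_isPretrade_of_le hp hpq
  have hq : 0 < q := by omega
  refine ⟨closePretrade p q g, fun φ x => hg.sum_closePretrade_row hp hq φ, fun φ y hy => ?_,
    ?_, fun x y hxy => ?_⟩
  · simpa only [closePretrade_comm q p, corneredTable_comm q p] using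
      hg.symm.sum_closePretrade_row hq hp φ hy
  · have : ¬ (0 = q ∨ 0 = p) := by omega
    simp [closePretrade, hp.ne, hq.ne, hg0]
  · have := hsupp x y
    unfold closePretrade corneredTable at hxy
    split_ifs at hxy <;> omega

end Close

/-! ### Overwriting a rectangle of a Latin square -/

theorem bijective_of_sum_eq {Q : Type*} [Fintype Q] {f g : Q → Q} (hg : Function.Bijective g)
    (h : ∀ ψ : Q → ℤ, ∑ c, (ψ (f c) - ψ (g c)) = 0) : Function.Bijective f := by
  classical
  refine Function.Surjective.bijective_of_finite fun s => ?_
  by_contra! hs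
  obtain ⟨c, rfl⟩ := hg.2 s
  have count := h fun t => if t = g c then 1 else 0
  simp [hs, hg.1.eq_iff] at count

section Overwrite

variable {Q ι κ : Type*} {L : Q → Q → Q} {a : ι → Q} {b : κ → Q} {e : ι → κ → Q}

/-- The square `L` with the entry `e x y` in the cells `(a x, b y)`. -/
noncomputable def overwrite (L : Q → Q → Q) (a : ι → Q) (b : κ → Q) (e : ι → κ → Q) (r c : Q) : Q :=
  Function.extend (Prod.map a b) (Function.uncurry e) (Function.uncurry L) (r, c)

theorem overwrite_apply (ha : a.Injective) (hb : b.Injective) (x : ι) (y : κ) :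
    overwrite L a b e (a x) (b y) = e x y :=
  (ha.prodMap hb).extend_apply (Function.uncurry e) _ (x, y)

theorem overwrite_of_forall_ne {r c : Q} (h : ∀ x y, a x = r → b y ≠ c) :
    overwrite L a b e r c = L r c :=
  Function.extend_apply' _ _ _ fun ⟨(x, y), hxy⟩ =>
    h x y (congrArg Prod.fst hxy) (congrArg Prod.snd hxy)

theorem overwrite_swap (ha : a.Injective) (hb : b.Injective) (r c : Q) :
    overwrite (fun c r => L r c) b a (fun y x => e x y) c r = overwrite L a b e r c := by
  by_cases h : ∃ x y, a x = r ∧ b y = c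
  · obtain ⟨x, y, rfl, rfl⟩ := h
    rw [overwrite_apply ha hb, overwrite_apply hb ha]
  · rw [overwrite_of_forall_ne fun x y hx hy => h ⟨x, y, hx, hy⟩,
      overwrite_of_forall_ne fun y x hy hx => h ⟨x, y, hx, hy⟩]

variable [Finite Q] [Fintype κ]

theorem bijective_overwrite (hL : ∀ r, Function.Bijective (L r))
    (ha : a.Injective) (hb : b.Injective)
    (hrow : ∀ (ψ : Q → ℤ) (x : ι), ∑ y, (ψ (e x y) - ψ (L (a x) (b y))) = 0) (r : Q) :
    Function.Bijective (overwrite L a b e r) := by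
  have := Fintype.ofFinite Q
  refine bijective_of_sum_eq (hL r) fun ψ => ?_
  by_cases hr : ∃ x, a x = r
  · obtain ⟨x, rfl⟩ := hr
    rw [← hrow ψ x]
    refine (Fintype.sum_of_injective b hb _ _ (fun c hc => ?_) fun y => ?_).symm
    · rw [overwrite_of_forall_ne fun _ y _ hy => hc ⟨y, hy⟩, sub_self]
    · rw [overwrite_apply ha hb]
  · refine sum_eq_zero fun c _ => ?_
    rw [overwrite_of_forall_ne fun x _ hx => absurd ⟨x, hx⟩ hr, sub_self]

theorem IsLatinSquare.overwrite [Fintype ι] (hL : IsLatinSquare L)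
    (ha : a.Injective) (hb : b.Injective)
    (hrow : ∀ (ψ : Q → ℤ) (x : ι), ∑ y, (ψ (e x y) - ψ (L (a x) (b y))) = 0)
    (hcol : ∀ (ψ : Q → ℤ) (y : κ), ∑ x, (ψ (e x y) - ψ (L (a x) (b y))) = 0) :
    IsLatinSquare (overwrite L a b e) :=
  ⟨bijective_overwrite hL.1 ha hb hrow, fun c => by
    rw [← funext fun r => overwrite_swap (L := L) (e := e) ha hb r c]
    exact bijective_overwrite hL.2 hb ha hcol c⟩

end Overwrite

theorem exists_isLatinSquare_of_trade {Q : Type*} [Finite Q] {L : Q → Q → Q} (hL : IsLatinSquare L)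
    {p q : ℕ} {a b σ : ℕ → Q} {h t : ℕ → ℕ → ℕ}
    (ha : Set.InjOn a (Set.Iio (p + 1))) (hb : Set.InjOn b (Set.Iio (q + 1)))
    (hrow : ∀ φ : ℕ → ℤ, ∀ x ≤ p, ∑ y ∈ range (q + 1), (φ (h x y) - φ (t x y)) = 0)
    (hcol : ∀ φ : ℕ → ℤ, ∀ y ≤ q, ∑ x ∈ range (p + 1), (φ (h x y) - φ (t x y)) = 0)
    (hσ : ∀ x ≤ p, ∀ y ≤ q, h x y ≠ t x y → L (a x) (b y) = σ (t x y)) :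
    ∃ L' : Q → Q → Q, IsLatinSquare L' ∧
      (∀ x ≤ p, ∀ y ≤ q, h x y ≠ t x y → L' (a x) (b y) = σ (h x y)) ∧
      ∀ r c, (∀ x ≤ p, ∀ y ≤ q, h x y ≠ t x y → a x = r → b y ≠ c) → L' r c = L r c := by
  classical
  let e : Fin (p + 1) → Fin (q + 1) → Q := fun x y =>
    if h x y = t x y then L (a x) (b y) else σ (h x y)
  have defect : ∀ (ψ : Q → ℤ) (x : Fin (p + 1)) (y : Fin (q + 1)),
      ψ (e x y) - ψ (L (a x) (b y)) = ψ (σ (h x y)) - ψ (σ (t x y)) := by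
    intro ψ x y
    by_cases hxy : h x y = t x y
    · simp [e, hxy]
    · simp [e, hxy, hσ x x.is_le y y.is_le hxy]
  have ha' : (fun x : Fin (p + 1) => a x).Injective := fun x x' hx => Fin.ext (ha x.2 x'.2 hx)
  have hb' : (fun y : Fin (q + 1) => b y).Injective := fun y y' hy => Fin.ext (hb y.2 y'.2 hy)
  refine ⟨overwrite L (fun x : Fin (p + 1) => a x) (fun y : Fin (q + 1) => b y) e,
    hL.overwrite ha' hb' (fun ψ x => ?_) (fun ψ y => ?_), fun x hx y hy hxy => ?_,
    fun r c hrc => ?_⟩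
  · simpa only [defect, sum_range] using hrow (fun s => ψ (σ s)) x x.is_le
  · simpa only [defect, sum_range] using hcol (fun s => ψ (σ s)) y y.is_le
  · exact (overwrite_apply ha' hb' ⟨x, Nat.lt_succ_of_le hx⟩ ⟨y, Nat.lt_succ_of_le hy⟩).trans
      (if_neg hxy)
  · by_cases hcell : ∃ (x : Fin (p + 1)) (y : Fin (q + 1)), a x = r ∧ b y = c
    · obtain ⟨x, y, rfl, rfl⟩ := hcell
      have kept : h x y = t x y := by
        by_contra hxy
        exact hrc x x.is_le y y.is_le hxy rfl rfl
      exact (overwrite_apply ha' hb' x y).trans (if_pos kept)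
    · exact overwrite_of_forall_ne fun x y hx hy => hcell ⟨x, y, hx, hy⟩

theorem exists_trade {Q : Type*} [Finite Q] {L : Q → Q → Q} (hL : IsLatinSquare L) {p q : ℕ}
    (hp : 0 < p) (hpq : p ≤ q) {a b σ : ℕ → Q}
    (ha : Set.InjOn a (Set.Iio (p + 1))) (hb : Set.InjOn b (Set.Iio (q + 1)))
    (h00 : L (a 0) (b 0) = σ (p + q)) (hp0 : L (a p) (b 0) = σ p)
    (hσ : ∀ x ≤ p, ∀ y ≤ q, p ≤ y → L (a x) (b y) = σ (x + y)) :
    ∃ L' : Q → Q → Q, IsLatinSquare L' ∧ L' (a 0) (b 0) ≠ L (a 0) (b 0) ∧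
      ∀ r c, (∀ x ≤ p, ∀ y ≤ q, y = 0 ∧ (x = 0 ∨ x = p) ∨ p ≤ y → a x = r → b y ≠ c) →
        L' r c = L r c := by
  obtain ⟨h, hrow, hcol, hh0, hsupp⟩ := exists_corneredTable_trade hp hpq
  obtain ⟨L', hL', hnew, hold⟩ :=
    exists_isLatinSquare_of_trade hL (σ := σ) ha hb hrow hcol fun x hx y hy hxy => by
      rcases hsupp x y hxy with ⟨rfl, rfl | rfl⟩ | hpy
      · simpa [corneredTable] using h00
      · simpa [corneredTable, hp.ne'] using hp0
      · rw [corneredTable, if_neg (by omega)]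
        exact hσ x hx y hy hpy
  refine ⟨L', hL', ?_, fun r c hrc => hold r c fun x hx y hy hxy => hrc x hx y hy (hsupp x y hxy)⟩
  have moved : h 0 0 ≠ corneredTable p q 0 0 := by
    simp only [hh0, corneredTable, and_self, if_true]
    omega
  rw [hnew 0 p.zero_le 0 q.zero_le moved, hh0, ← hp0]
  exact fun eq => hp.ne (ha (by simp) (by simp) ((hL.2 (b 0)).1 eq)).symm

/-! ### Trades in strips -/

/-- A Latin square given by its set of triples: any two coordinates determine the third. In this
form the three coordinates play the same role. -/
structure IsLatinRel {Q : Type*} (R : Q → Q → Q → Prop) : Prop where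
  symbol : ∀ r c, ∃! s, R r c s
  col : ∀ r s, ∃! c, R r c s
  row : ∀ c s, ∃! r, R r c s

/-- Some Latin square contains all triples satisfying `K` but not the triple `(r, c, s)`. -/
def IsAvoidable {Q : Type*} (K : Q → Q → Q → Prop) (r c s : Q) : Prop :=
  ∃ R : Q → Q → Q → Prop, IsLatinRel R ∧ ¬ R r c s ∧ ∀ i j k, K i j k → R i j k

section Relation

variable {Q : Type*} {R K : Q → Q → Q → Prop} {r c s : Q}

theorem IsLatinRel.swap_row_col (h : IsLatinRel R) : IsLatinRel fun c r s => R r c s :=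
  ⟨fun c r => h.symbol r c, fun c s => h.row c s, fun r s => h.col r s⟩

theorem IsLatinRel.swap_col_symbol (h : IsLatinRel R) : IsLatinRel fun r s c => R r c s :=
  ⟨fun r s => h.col r s, fun r c => h.symbol r c, fun s c => h.row c s⟩

theorem IsAvoidable.swap_row_col (h : IsAvoidable (fun c r s => K r c s) c r s) :
    IsAvoidable K r c s :=
  let ⟨R, hR, hne, hK⟩ := h
  ⟨fun r c s => R c r s, hR.swap_row_col, hne, fun i j k => hK j i k⟩

theorem IsAvoidable.swap_col_symbol (h : IsAvoidable (fun r s c => K r c s) r s c) :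
    IsAvoidable K r c s :=
  let ⟨R, hR, hne, hK⟩ := h
  ⟨fun r c s => R r s c, hR.swap_col_symbol, hne, fun i j k => hK i k j⟩

theorem IsLatinSquare.isLatinRel {L : Q → Q → Q} (h : IsLatinSquare L) :
    IsLatinRel fun r c s => L r c = s :=
  ⟨fun _ _ => existsUnique_eq', fun r s => (h.1 r).existsUnique s,
    fun c s => (h.2 c).existsUnique s⟩

theorem IsLatinRel.exists_isLatinSquare (h : IsLatinRel R) :
    ∃ L : Q → Q → Q, IsLatinSquare L ∧ R = fun r c s => L r c = s := by
  choose L hL hunique using h.symbol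
  obtain rfl : R = fun r c s => L r c = s := by
    ext r c s
    exact ⟨fun hs => (hunique r c s hs).symm, fun hs => hs ▸ hL r c⟩
  exact ⟨L, ⟨fun r => Function.bijective_iff_existsUnique _ |>.2 (h.col r),
    fun c => Function.bijective_iff_existsUnique _ |>.2 (h.row c)⟩, rfl⟩

end Relation

/-- The support, apart from the starting triple, of a trade in a strip of width `N`. The first
coordinate is displaced by `u` and the second by `v`; the displacement `w` of the third is counted
backwards from the far border of the strip, so that `u + v + w = N`. -/
def StripShape (p N u v w : ℕ) : Prop :=
  u + v + w = N ∧ (u = p ∧ v = 0 ∨ u ≤ p ∧ p ≤ v ∧ v + p ≤ N)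

/-- The assignment of the first, second and third coordinate of a strip trade to the row
displacement `x`, the column displacement `y` and the symbol displacement `z`. -/
inductive Role
  | xyz | xzy | yxz | yzx | zxy | zyx

/-- The support of a strip trade with given roles, in terms of the displacements of the row, the
column and the symbol. -/
def Role.Shape (p N x y z : ℕ) : Role → Prop
  | xyz => StripShape p N x y z
  | xzy => StripShape p N x z y
  | yxz => StripShape p N y x z
  | yzx => StripShape p N y z x
  | zxy => StripShape p N z x y
  | zyx => StripShape p N z y x

theorem Role.Shape.add_eq {p N x y z : ℕ} {ρ : Role} (h : ρ.Shape p N x y z) : x + y + z = N := by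
  cases ρ <;> simp only [Role.Shape, StripShape] at h <;> omega

section Strip

variable {Q : Type*} [Finite Q] {R K : Q → Q → Q → Prop} {p N : ℕ} {A B Γ : ℕ → Q}

theorem isAvoidable_of_stripShape (hR : IsLatinRel R) (hp : 0 < p) (hpN : 2 * p ≤ N)
    (hA : Set.InjOn A (Set.Iio N)) (hB : Set.InjOn B (Set.Iio N))
    (hKR : ∀ r c s, K r c s → R r c s) (h0 : R (A 0) (B 0) (Γ 0)) (hK0 : ¬ K (A 0) (B 0) (Γ 0))
    (hstrip : ∀ u v w, StripShape p N u v w → R (A u) (B v) (Γ w) ∧ ¬ K (A u) (B v) (Γ w)) :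
    IsAvoidable K (A 0) (B 0) (Γ 0) := by
  obtain ⟨L, hL, rfl⟩ := hR.exists_isLatinSquare
  have narrow {m : ℕ} (hm : m < N) : Set.Iio (m + 1) ⊆ Set.Iio N := Set.Iio_subset_Iio hm
  have far : N - (p + (N - p)) = 0 := by omega
  obtain ⟨L', hL', hne, heq⟩ := exists_trade hL hp (q := N - p) (by omega)
    (hA.mono (narrow (by omega))) (hB.mono (narrow (by omega)))
    (σ := fun t => Γ (N - t)) (by rw [far, h0]) (hstrip p 0 _ ⟨by omega, by omega⟩).1
    (fun x hx y hy hpy => (hstrip x y _ ⟨by omega, by omega⟩).1)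
  refine ⟨_, hL'.isLatinRel, fun h => hne (h.trans h0.symm), fun r c s hs => ?_⟩
  obtain rfl := hKR r c s hs
  refine heq r c ?_
  rintro x hx y hy hxy rfl rfl
  by_cases hcorner : x = 0 ∧ y = 0
  · obtain ⟨rfl, rfl⟩ := hcorner
    exact hK0 (h0 ▸ hs)
  · obtain ⟨hL, hnK⟩ := hstrip x y (N - (x + y)) ⟨by omega, by omega⟩
    exact hnK (hL ▸ hs)

theorem isAvoidable_of_shape (hR : IsLatinRel R) (hp : 0 < p) (hpN : 2 * p ≤ N)
    (hA : Set.InjOn A (Set.Iio N)) (hB : Set.InjOn B (Set.Iio N)) (hΓ : Set.InjOn Γ (Set.Iio N))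
    (hKR : ∀ r c s, K r c s → R r c s) (h0 : R (A 0) (B 0) (Γ 0)) (hK0 : ¬ K (A 0) (B 0) (Γ 0))
    (ρ : Role)
    (hshape : ∀ x y z, ρ.Shape p N x y z → R (A x) (B y) (Γ z) ∧ ¬ K (A x) (B y) (Γ z)) :
    IsAvoidable K (A 0) (B 0) (Γ 0) := by
  have hR' := hR.swap_row_col
  have hR'' := hR.swap_col_symbol
  cases ρ with
  | xyz => exact isAvoidable_of_stripShape hR hp hpN hA hB hKR h0 hK0 hshape
  | yxz =>
    exact (isAvoidable_of_stripShape hR' hp hpN hB hA (fun c r s => hKR r c s) h0 hK0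
      fun u v w => hshape v u w).swap_row_col
  | xzy =>
    exact (isAvoidable_of_stripShape hR'' hp hpN hA hΓ (fun r s c => hKR r c s) h0 hK0
      fun u v w => hshape u w v).swap_col_symbol
  | yzx =>
    exact (isAvoidable_of_stripShape hR'.swap_col_symbol hp hpN hB hΓ
      (fun c s r => hKR r c s) h0 hK0 fun u v w => hshape w u v).swap_col_symbol.swap_row_col
  | zxy =>
    exact (isAvoidable_of_stripShape hR''.swap_row_col hp hpN hΓ hA
      (fun s r c => hKR r c s) h0 hK0 fun u v w => hshape v w u).swap_row_col.swap_col_symbol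
  | zyx =>
    exact (isAvoidable_of_stripShape hR'.swap_col_symbol.swap_row_col hp hpN hΓ hB
      (fun s c r => hKR r c s) h0 hK0
      fun u v w => hshape w v u).swap_row_col.swap_col_symbol.swap_row_col

end Strip

/-! ### Cells that cannot be omitted -/

/-- Some Latin square differs from `L` in the cell `(i, j)` but in no other cell of `C`: this cell
cannot be omitted from a critical set with the cells `C`. -/
def IsNeeded {Q : Type*} (L : Q → Q → Q) (C : Q → Q → Prop) (i j : Q) : Prop :=
  ∃ L' : Q → Q → Q, IsLatinSquare L' ∧ L' i j ≠ L i j ∧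
    ∀ r c, C r c → ¬ (r = i ∧ c = j) → L' r c = L r c

theorem IsAvoidable.isNeeded {Q : Type*} {L : Q → Q → Q} {C : Q → Q → Prop} {i j : Q}
    (h : IsAvoidable (fun r c s => C r c ∧ ¬ (r = i ∧ c = j) ∧ L r c = s) i j (L i j)) :
    IsNeeded L C i j := by
  obtain ⟨R, hR, hne, hK⟩ := h
  obtain ⟨L', hL', rfl⟩ := hR.exists_isLatinSquare
  exact ⟨L', hL', hne, fun r c hC hrc => hK r c _ ⟨hC, hrc, rfl⟩⟩

theorem isNeeded_of_shape {G : Type*} [AddCommGroup G] [Finite G] {L : G → G → G}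
    (hL : IsLatinSquare L) {C : G → G → Prop} (hC : ∀ r c, ¬ C r c → L r c = r + c) {i j : G}
    (d : G) (ρ : Role) {p N : ℕ} (hN : N ≤ addOrderOf d) (hij : L i j = i + j + N • d)
    (hp : 0 < p) (hpN : 2 * p ≤ N)
    (hS : ∀ x y z, ρ.Shape p N x y z → ¬ C (i + x • d) (j + y • d)) : IsNeeded L C i j := by
  have inj : Set.InjOn (fun x : ℕ => x • d) (Set.Iio N) :=
    nsmul_injOn_Iio_addOrderOf.mono (Set.Iio_subset_Iio hN)
  have inj_add : ∀ g : G, Set.InjOn (fun x : ℕ => g + x • d) (Set.Iio N) :=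
    fun g => (add_right_injective g).comp_injOn inj
  have inj_sub : Set.InjOn (fun z : ℕ => i + j + N • d - z • d) (Set.Iio N) :=
    sub_right_injective.comp_injOn inj
  have avoid := isAvoidable_of_shape hL.isLatinRel hp hpN (inj_add i) (inj_add j) inj_sub
    (K := fun r c s => C r c ∧ ¬ (r = i ∧ c = j) ∧ L r c = s) (fun r c s hs => hs.2.2)
    (by simpa using hij) (by simp) ρ fun x y z hxyz => ⟨?_, fun h => hS x y z hxyz h.1⟩
  · simp only [zero_smul, add_zero, sub_zero, ← hij] at avoid
    exact avoid.isNeeded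
  · rw [hC _ _ (hS x y z hxyz), ← hxyz.add_eq, add_smul, add_smul]
    abel

/-! ### The cyclic square -/

/-- The addition table of the integers modulo `n`. -/
abbrev cyclicSquare (n : ℕ) (i j : Fin n) : Fin n := i + j

theorem isLatinSquare_add {G : Type*} [AddGroup G] : IsLatinSquare fun i j : G => i + j :=
  ⟨AddGroup.addLeft_bijective, AddGroup.addRight_bijective⟩

theorem isLatinSquare_cyclicSquare (n : ℕ) : IsLatinSquare (cyclicSquare n) := by
  rcases n with _ | n
  · exact ⟨fun i => i.elim0, fun j => j.elim0⟩
  · exact isLatinSquare_add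

section Step

variable {n : ℕ}

theorem mod_eq_or {a r : ℕ} (h : a < 2 * n) (hr : r = a % n) : r = a ∨ r + n = a := by
  rcases lt_or_ge a n with hlt | hle
  · exact Or.inl (hr.trans (Nat.mod_eq_of_lt hlt))
  · rw [Nat.mod_eq_sub_mod hle, Nat.mod_eq_of_lt (by omega)] at hr
    omega

theorem addOrderOf_fin_one [NeZero n] : addOrderOf (1 : Fin n) = n := by
  obtain ⟨n, rfl⟩ := Nat.exists_eq_succ_of_ne_zero (NeZero.ne n)
  exact ZMod.addOrderOf_one (n + 1)

theorem val_nsmul_one [NeZero n] (x : ℕ) : ((x • (1 : Fin n) : Fin n) : ℕ) = x % n := by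
  induction x with
  | zero => simp
  | succ x ih => rw [succ_nsmul, Fin.val_add, ih, Fin.val_one', ← Nat.add_mod]

variable {L : Fin n → Fin n → Fin n} {C : ℕ → ℕ → Prop} {i j : Fin n}

theorem isNeeded_of_step (hL : IsLatinSquare L) (hC : ∀ r c : Fin n, ¬ C r c → L r c = r + c)
    (t : ℕ) (ρ : Role) {p N : ℕ} (hN : N ≤ n / n.gcd t)
    (hij : (L i j : ℕ) = (i + j + t * N) % n) (hp : 0 < p) (hpN : 2 * p ≤ N)
    (hS : ∀ x y z, ρ.Shape p N x y z → ¬ C ((i + t * x) % n) ((j + t * y) % n)) :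
    IsNeeded L (fun r c => C r c) i j := by
  have : NeZero n := ⟨i.pos.ne'⟩
  have val (a : Fin n) (x : ℕ) : ((a + x • t • (1 : Fin n) : Fin n) : ℕ) = (a + t * x) % n := by
    rw [← mul_nsmul, Fin.val_add, val_nsmul_one, Nat.add_mod_mod]
  refine isNeeded_of_shape hL hC (t • 1) ρ (p := p) (N := N) ?_ (Fin.ext ?_) hp hpN ?_
  · rwa [addOrderOf_nsmul, addOrderOf_fin_one]
  · rw [hij, val, Fin.val_add, Nat.mod_add_mod]
  · intro x y z hxyz
    rw [val, val]
    exact hS x y z hxyz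

theorem isNeeded_of_pos (hL : IsLatinSquare L) (hC : ∀ r c : Fin n, ¬ C r c → L r c = r + c)
    (ρ : Role) {p N : ℕ} (hN : N ≤ n) (hij : (L i j : ℕ) = (i + j + N) % n) (hp : 0 < p)
    (hpN : 2 * p ≤ N)
    (hS : ∀ r c x y z : ℕ, ρ.Shape p N x y z → r < n → c < n →
      (r = i + x ∨ r + n = i + x) → (c = j + y ∨ c + n = j + y) → ¬ C r c) :
    IsNeeded L (fun r c => C r c) i j := by
  refine isNeeded_of_step hL hC 1 ρ (by simpa using hN) (by rw [one_mul, hij]) hp hpN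
    fun x y z hxyz => hS _ _ x y z hxyz (Nat.mod_lt _ i.pos) (Nat.mod_lt _ i.pos) ?_ ?_
  all_goals
    have := hxyz.add_eq
    rw [one_mul]
    exact mod_eq_or (by omega) rfl

theorem isNeeded_of_neg (hL : IsLatinSquare L) (hC : ∀ r c : Fin n, ¬ C r c → L r c = r + c)
    (ρ : Role) {p N : ℕ} (hN : N ≤ n) (hij : (L i j + N) % n = (i + j : ℕ) % n) (hp : 0 < p)
    (hpN : 2 * p ≤ N)
    (hS : ∀ r c x y z : ℕ, ρ.Shape p N x y z → r < n → c < n →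
      (r + x = i ∨ r + x = i + n) → (c + y = j ∨ c + y = j + n) → ¬ C r c) :
    IsNeeded L (fun r c => C r c) i j := by
  have hn : 1 ≤ n := i.pos
  have add_mul (a x : ℕ) : a + (n - 1) * x + x = a + n * x := by
    rw [add_assoc, ← Nat.succ_mul, Nat.succ_eq_add_one, Nat.sub_add_cancel hn]
  have cancel (a : Fin n) (x : ℕ) (hx : x ≤ n) :
      (a + (n - 1) * x) % n + x = a ∨ (a + (n - 1) * x) % n + x = a + n := by
    have hlt := Nat.mod_lt (a + (n - 1) * x) i.pos
    have := mod_eq_or (n := n) (a := (a + (n - 1) * x) % n + x) (r := a) (by omega) <| by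
      rw [Nat.mod_add_mod, add_mul, Nat.add_mul_mod_self_left, Nat.mod_eq_of_lt a.2]
    omega
  refine isNeeded_of_step hL hC (n - 1) ρ ?_ ?_ hp hpN
    fun x y z hxyz => hS _ _ x y z hxyz (Nat.mod_lt _ i.pos) (Nat.mod_lt _ i.pos) ?_ ?_
  · rwa [Nat.gcd_self_sub_right hn, Nat.gcd_one_right, Nat.div_one]
  · refine (Nat.mod_eq_of_lt (L i j).2).symm.trans (Nat.ModEq.add_right_cancel' N ?_)
    change _ % n = _ % n
    rw [add_mul, Nat.add_mul_mod_self_left, hij]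
  all_goals
    have := hxyz.add_eq
    exact cancel _ _ (by omega)

theorem isNeeded_cyclicSquare_of_step (t : ℕ) (ρ : Role) {p N : ℕ} (hN : N ≤ n / n.gcd t)
    (ht : n ∣ t * N) (hp : 0 < p) (hpN : 2 * p ≤ N)
    (hS : ∀ x y z, ρ.Shape p N x y z → ¬ C ((i + t * x) % n) ((j + t * y) % n)) :
    IsNeeded (cyclicSquare n) (fun r c => C r c) i j :=
  isNeeded_of_step (isLatinSquare_cyclicSquare n) (fun _ _ _ => rfl) t ρ hN
    (by rw [Nat.add_mod, Nat.mod_eq_zero_of_dvd ht]; simp [Fin.val_add]) hp hpN hS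

theorem isNeeded_cyclicSquare_of_pos (ρ : Role) {p : ℕ} (hp : 0 < p) (hpn : 2 * p ≤ n)
    (hS : ∀ r c x y z : ℕ, ρ.Shape p n x y z → r < n → c < n →
      (r = i + x ∨ r + n = i + x) → (c = j + y ∨ c + n = j + y) → ¬ C r c) :
    IsNeeded (cyclicSquare n) (fun r c => C r c) i j :=
  isNeeded_of_pos (isLatinSquare_cyclicSquare n) (fun _ _ _ => rfl) ρ le_rfl
    (by rw [Fin.val_add, Nat.add_mod_right]) hp hpn hS

theorem isNeeded_cyclicSquare_of_neg (ρ : Role) {p : ℕ} (hp : 0 < p) (hpn : 2 * p ≤ n)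
    (hS : ∀ r c x y z : ℕ, ρ.Shape p n x y z → r < n → c < n →
      (r + x = i ∨ r + x = i + n) → (c + y = j ∨ c + y = j + n) → ¬ C r c) :
    IsNeeded (cyclicSquare n) (fun r c => C r c) i j :=
  isNeeded_of_neg (isLatinSquare_cyclicSquare n) (fun _ _ _ => rfl) ρ le_rfl
    (by rw [Nat.add_mod_right, Fin.val_add, Nat.mod_mod]) hp hpn hS

end Step

theorem isNeeded_cyclicSquare_swap {n : ℕ} {C D : Fin n → Fin n → Prop}
    (hCD : ∀ r c, C r c → D c r) {i j : Fin n} (h : IsNeeded (cyclicSquare n) D j i) :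
    IsNeeded (cyclicSquare n) C i j := by
  obtain ⟨L', hL', hne, heq⟩ := h
  refine ⟨fun r c => L' c r, ⟨hL'.2, hL'.1⟩, ?_, fun r c hrc hne => ?_⟩
  · rwa [cyclicSquare, add_comm i j]
  · exact (heq c r (hCD r c hrc) (mt And.symm hne)).trans (add_comm c r)

theorem isNeeded_cyclicSquare_of_symm {n : ℕ} {C : ℕ → ℕ → Prop} (symm : ∀ i j, C i j → C j i)
    (h : ∀ i j : Fin n, (i : ℕ) ≤ j → C i j → IsNeeded (cyclicSquare n) (fun r c => C r c) i j)
    (i j : Fin n) (hij : C i j) : IsNeeded (cyclicSquare n) (fun r c => C r c) i j := by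
  rcases le_total (i : ℕ) j with hle | hle
  · exact h i j hle hij
  · exact isNeeded_cyclicSquare_swap (fun r c => symm r c) (h j i hle (symm _ _ hij))

/-! ### Corner cells of the cyclic square -/

/-- The cells given by a word of choices: for each symbol `s < n - 1`, either the cells `i + j = s`
or the cells `i + j = n + s`, namely the former if `s < f` or `s = f + h`. -/
def WordCells (n f h i j : ℕ) : Prop :=
  i + j < f ∨ i + j = f + h ∨ (n + f ≤ i + j ∧ i + j < n + f + h) ∨ n + f + h < i + j

section WordCells

variable {n f h : ℕ} {i j : Fin n}

theorem isNeeded_wordCells_upper (hf : h ≤ f) (hn : f + 2 * h + 2 ≤ n) (hle : (i : ℕ) ≤ j)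
    (hij : (i + j : ℕ) < f) : IsNeeded (cyclicSquare n) (fun r c => WordCells n f h r c) i j := by
  by_cases hj : 2 * (j + 1 : ℕ) ≤ n
  · refine isNeeded_cyclicSquare_of_pos .zxy (p := j + 1) (by omega) hj ?_
    simp only [Role.Shape, StripShape, WordCells]
    omega
  · refine isNeeded_cyclicSquare_of_pos .yzx (p := n - j - 1) (by omega) (by omega) ?_
    simp only [Role.Shape, StripShape, WordCells]
    omega

theorem isNeeded_wordCells_diag (hf : h ≤ f) (hn : f + 2 * h + 2 ≤ n) (hle : (i : ℕ) ≤ j)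
    (hij : (i + j : ℕ) = f + h) :
    IsNeeded (cyclicSquare n) (fun r c => WordCells n f h r c) i j := by
  refine isNeeded_cyclicSquare_of_pos .yzx (p := max (i : ℕ) h + 1) (by omega) (by omega) ?_
  simp only [Role.Shape, StripShape, WordCells]
  omega

theorem isNeeded_wordCells_lower (hf : h ≤ f) (hn : f + 2 * h + 2 ≤ n) (hle : (i : ℕ) ≤ j)
    (hij : n + f ≤ (i + j : ℕ)) (hne : (i + j : ℕ) ≠ n + f + h) :
    IsNeeded (cyclicSquare n) (fun r c => WordCells n f h r c) i j := by
  have := j.2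
  by_cases hi : n ≤ 2 * (i : ℕ)
  · rcases hne.lt_or_gt with hlt | hgt
    · refine isNeeded_cyclicSquare_of_neg .xzy (p := max (n - i) h) (by omega) (by omega) ?_
      simp only [Role.Shape, StripShape, WordCells]
      omega
    · refine isNeeded_cyclicSquare_of_neg .zxy (p := n - i) (by omega) (by omega) ?_
      simp only [Role.Shape, StripShape, WordCells]
      omega
  · refine isNeeded_cyclicSquare_of_neg .xzy (p := i) (by omega) (by omega) ?_
    simp only [Role.Shape, StripShape, WordCells]
    omega

theorem isNeeded_wordCells (hf : h ≤ f) (hn : f + 2 * h + 2 ≤ n) :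
    ∀ i j : Fin n, WordCells n f h i j →
      IsNeeded (cyclicSquare n) (fun r c => WordCells n f h r c) i j := by
  refine isNeeded_cyclicSquare_of_symm (fun i j => ?_) fun i j hle hij => ?_
  · simp only [WordCells, add_comm i j]
    exact id
  · rcases hij with hij | hij | hij | hij
    · exact isNeeded_wordCells_upper hf hn hle hij
    · exact isNeeded_wordCells_diag hf hn hle hij
    · exact isNeeded_wordCells_lower hf hn hle hij.1 (by omega)
    · exact isNeeded_wordCells_lower hf hn hle (by omega) (by omega)

end WordCells

/-! ### Unique completion -/

section Completion

theorem eq_of_row {Q : Type*} {L L' : Q → Q → Q} (hL : IsLatinSquare L) (hL' : IsLatinSquare L')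
    {i j : Q} (h : ∀ r c, r ≠ i → c ≠ j → L r c = L i j → L' i c = L i c ∨ L' r c = L r c) :
    L' i j = L i j := by
  obtain ⟨c, hc⟩ := (hL'.1 i).2 (L i j)
  obtain ⟨r, hr⟩ := (hL.2 c).2 (L i j)
  by_cases hcj : c = j
  · rwa [hcj] at hc
  have hri : r ≠ i := by
    rintro rfl
    exact hcj ((hL.1 r).1 hr)
  rcases h r c hri hcj hr with heq | heq
  · exact absurd ((hL.1 i).1 (heq.symm.trans hc)) hcj
  · exact absurd ((hL'.2 c).1 (heq.trans (hr.trans hc.symm))) hri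

theorem eq_of_rank {Q : Type*} {L L' : Q → Q → Q} (hL : IsLatinSquare L) (hL' : IsLatinSquare L')
    (S : Q → Q → Prop) (rank : Q → Q → ℕ)
    (h : ∀ i j r c, S i j → r ≠ i → c ≠ j → L r c = L i j →
      L' i j ≠ L i j → L' i c ≠ L i c → L' r c ≠ L r c →
      S i c ∧ rank i c < rank i j ∨ S r c ∧ rank r c < rank i j) {i j : Q} (hij : S i j) :
    L' i j = L i j := by
  induction hk : rank i j using Nat.strong_induction_on generalizing i j with
  | _ k ih =>
    subst hk
    by_contra hne
    refine hne (eq_of_row hL hL' fun r c hr hc heq => ?_)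
    by_contra! hne'
    rcases h i j r c hij hr hc heq hne hne'.1 hne'.2 with ⟨hS, hlt⟩ | ⟨hS, hlt⟩
    · exact hne'.1 (ih _ hlt hS rfl)
    · exact hne'.2 (ih _ hlt hS rfl)

variable {n : ℕ}

theorem val_eq_or {i j k : Fin n} (h : k = i + j) : (k : ℕ) = i + j ∨ (k + n : ℕ) = i + j :=
  mod_eq_or (by omega) (h ▸ Fin.val_add i j)

variable {L L' : Fin n → Fin n → Fin n} (hL : IsLatinSquare L) (hL' : IsLatinSquare L')
  {U : ℕ → Prop} (hK : ∀ i j, L' i j = L i j ∨ L i j = i + j)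
  (hU : ∀ i j : Fin n, (i + j : ℕ) + 1 < n → U (i + j) → L' i j = L i j)
  (hV : ∀ i j : Fin n, n ≤ (i + j : ℕ) → ¬ U (i + j - n) → L' i j = L i j)
include hL hL' hK hU hV

theorem eq_of_word_lower {i j : Fin n} (hij : n ≤ (i + j : ℕ)) : L' i j = L i j := by
  refine eq_of_rank hL hL' (fun i j => n ≤ (i + j : ℕ)) (fun i j => 3 * n - (2 * i + j)) ?_ hij
  intro i j r c hij hri hcj heq hne hic hrc
  rw [Ne, Fin.ext_iff] at hri hcj
  have hsymbol := val_eq_or ((hK i j).resolve_left hne)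
  have hsymbol' := val_eq_or ((hK r c).resolve_left hrc)
  rw [heq] at hsymbol'
  have hUs : U (i + j - n) := by
    by_contra hUs
    exact hne (hV i j hij hUs)
  have hsum : (r + c : ℕ) = i + j := by
    by_contra hsum
    have hs : (r + c : ℕ) = i + j - n := by omega
    exact hrc (hU r c (by omega) (hs ▸ hUs))
  omega

theorem eq_of_word_upper {i j : Fin n} (hij : (i + j : ℕ) + 1 < n) : L' i j = L i j := by
  refine eq_of_rank hL hL' (fun i j => (i + j : ℕ) + 1 < n) (fun i j => 2 * i + j) ?_ hij
  intro i j r c hij hri hcj heq hne hic hrc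
  rw [Ne, Fin.ext_iff] at hri hcj
  have hsymbol := val_eq_or ((hK i j).resolve_left hne)
  have hsymbol' := val_eq_or ((hK r c).resolve_left hrc)
  rw [heq] at hsymbol'
  have hUs : ¬ U (i + j) := fun hUs => hne (hU i j hij hUs)
  have hsum : (r + c : ℕ) = i + j := by
    by_contra hsum
    have hs : (r + c - n : ℕ) = i + j := by omega
    exact hrc (hV r c (by omega) (hs ▸ hUs))
  omega

theorem eq_of_word : L' = L := by
  have off_diag (i j : Fin n) (hij : (i + j : ℕ) + 1 ≠ n) : L' i j = L i j := by
    rcases lt_or_ge (i + j : ℕ) n with hlt | hle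
    · exact eq_of_word_upper hL hL' hK hU hV (by omega)
    · exact eq_of_word_lower hL hL' hK hU hV hle
  funext i j
  by_cases hij : (i + j : ℕ) + 1 = n
  · refine eq_of_row hL hL' fun r c _ hc _ => Or.inl (off_diag i c ?_)
    rw [Ne, Fin.ext_iff] at hc
    omega
  · exact off_diag i j hij

end Completion

/-! ### From cells to critical sets -/

open Classical in
/-- The number of cells of an `n × n` square satisfying `C`. -/
noncomputable def cellCount (n : ℕ) (C : ℕ → ℕ → Prop) : ℕ :=
  #{c ∈ range n ×ˢ range n | C c.1 c.2}

/-- Some Latin square of order `n` has a critical set of size `m`. -/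
def HasCriticalSet (n m : ℕ) : Prop :=
  ∃ (L : Fin n → Fin n → Fin n) (C : Set (Fin n × Fin n × Fin n)),
    IsLatinSquare L ∧ IsCriticalSet C L ∧ C.ncard = m

theorem isCriticalSet_image {Q : Type*} {L : Q → Q → Q} {C : Q → Q → Prop}
    (hunique : ∀ L', IsLatinSquare L' → (∀ i j, C i j → L' i j = L i j) → L' = L)
    (hneeded : ∀ i j, C i j → IsNeeded L C i j) :
    IsCriticalSet ((fun c : Q × Q => (c.1, c.2, L c.1 c.2)) '' {c | C c.1 c.2}) L := by
  refine ⟨?_, fun L' hL' h => hunique L' hL' fun i j hC => h _ ⟨(i, j), hC, rfl⟩, fun S hS => ?_⟩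
  · rintro _ ⟨c, -, rfl⟩
    rfl
  · obtain ⟨hsub, _, ⟨⟨i, j⟩, hC, rfl⟩, hnot_mem⟩ := Set.ssubset_iff_exists.1 hS
    obtain ⟨L', hL', hne, heq⟩ := hneeded i j hC
    refine ⟨L', hL', fun t ht => ?_, fun h => hne (by rw [h])⟩
    obtain ⟨⟨r, c⟩, hrc, rfl⟩ := hsub ht
    refine heq r c hrc ?_
    rintro ⟨rfl, rfl⟩
    exact hnot_mem ht

theorem hasCriticalSet_of_cells {n : ℕ} {L : Fin n → Fin n → Fin n} (C : ℕ → ℕ → Prop)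
    (hL : IsLatinSquare L)
    (hunique : ∀ L', IsLatinSquare L' → (∀ i j : Fin n, C i j → L' i j = L i j) → L' = L)
    (hneeded : ∀ i j : Fin n, C i j → IsNeeded L (fun r c => C r c) i j) :
    HasCriticalSet n (cellCount n C) := by
  classical
  refine ⟨L, _, hL, isCriticalSet_image hunique hneeded, ?_⟩
  have inj : Function.Injective fun c : Fin n × Fin n => (c.1, c.2, L c.1 c.2) :=
    fun c c' h => Prod.ext (Prod.mk.inj h).1 (Prod.mk.inj (Prod.mk.inj h).2).1
  rw [Set.ncard_image_of_injective _ inj, cellCount]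
  rw [← Finset.coe_filter_univ, Set.ncard_coe_finset]
  refine Finset.card_bij (fun c _ => (↑c.1, ↑c.2)) (by simp) (fun c _ c' _ h => ?_) ?_
  · exact Prod.ext (Fin.ext (Prod.mk.inj h).1) (Fin.ext (Prod.mk.inj h).2)
  · simp only [mem_filter, mem_product, mem_range, mem_univ, true_and, Prod.forall]
    exact fun i j h => ⟨(⟨i, h.1.1⟩, ⟨j, h.1.2⟩), h.2, rfl⟩

theorem hasCriticalSet_wordCells {n f h : ℕ} (hf : h ≤ f) (hn : f + 2 * h + 2 ≤ n) :
    HasCriticalSet n (cellCount n (WordCells n f h)) := by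
  refine hasCriticalSet_of_cells _ (isLatinSquare_cyclicSquare n) (fun L' hL' heq => ?_)
    (isNeeded_wordCells hf hn)
  refine eq_of_word (isLatinSquare_cyclicSquare n) hL' (U := fun s => s < f ∨ s = f + h)
    (fun i j => Or.inr rfl) (fun i j _ _ => heq i j ?_) (fun i j _ _ => heq i j ?_)
  all_goals simp only [WordCells]; omega

/-! ### Counting cells -/

section Counting

variable {n : ℕ} {A B C : ℕ → ℕ → Prop}

theorem cellCount_eq_add
    (h : ∀ i j, i < n → j < n → (A i j ↔ B i j ∨ C i j) ∧ ¬ (B i j ∧ C i j)) :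
    cellCount n A = cellCount n B + cellCount n C := by
  classical
  simp only [cellCount]
  rw [← card_union_of_disjoint, ← filter_or]
  · refine congrArg card (filter_congr fun c hc => ?_)
    rw [mem_product, mem_range, mem_range] at hc
    exact (h _ _ hc.1 hc.2).1
  · refine disjoint_filter.2 fun c hc hB hC => ?_
    rw [mem_product, mem_range, mem_range] at hc
    exact (h _ _ hc.1 hc.2).2 ⟨hB, hC⟩

theorem cellCount_graph (s : Finset ℕ) (g : ℕ → ℕ)
    (h : ∀ i j, i < n → j < n → (A i j ↔ i ∈ s ∧ j = g i)) (hs : ∀ i ∈ s, i < n ∧ g i < n) :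
    cellCount n A = #s := by
  classical
  refine (card_bij (fun i _ => (i, g i)) (fun i hi => ?_)
    (fun _ _ _ _ h => (Prod.mk.inj h).1) fun c hc => ?_).symm
  · obtain ⟨hin, hgn⟩ := hs i hi
    simp only [mem_filter, mem_product, mem_range]
    exact ⟨⟨hin, hgn⟩, (h _ _ hin hgn).2 ⟨hi, rfl⟩⟩
  · simp only [mem_filter, mem_product, mem_range] at hc
    obtain ⟨hmem, hg⟩ := (h _ _ hc.1.1 hc.1.2).1 hc.2
    exact ⟨c.1, hmem, Prod.ext rfl hg.symm⟩

theorem cellCount_eq_zero (h : ∀ i j, i < n → j < n → ¬ A i j) : cellCount n A = 0 :=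
  cellCount_graph ∅ id (fun i j hi hj => iff_of_false (h i j hi hj) (by simp)) (by simp)

theorem cellCount_singleton {r c : ℕ} (hr : r < n) (hc : c < n) :
    cellCount n (fun i j => i = r ∧ j = c) = 1 := by
  refine (cellCount_graph {r} (fun _ => c) (fun i j _ _ => by rw [mem_singleton]) ?_).trans
    (card_singleton r)
  exact fun i hi => ⟨mem_singleton.1 hi ▸ hr, hc⟩

theorem cellCount_swap (n : ℕ) (A : ℕ → ℕ → Prop) :
    cellCount n (fun i j => A j i) = cellCount n A :=
  card_equiv (Equiv.prodComm ℕ ℕ) fun c => by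
    simp only [mem_filter, mem_product, Equiv.prodComm_apply, Prod.fst_swap, Prod.snd_swap,
      and_comm (a := c.1 ∈ range n)]

theorem cellCount_add_eq {t : ℕ} (ht : t < n) : cellCount n (fun i j => i + j = t) = t + 1 := by
  rw [cellCount_graph (range (t + 1)) (t - ·), card_range] <;> simp only [mem_range] <;> omega

theorem cellCount_add_eq_add {s d : ℕ} (hn : s + d + 1 = n) :
    cellCount n (fun i j => i + j = n + s) = d := by
  rw [cellCount_graph (Ico (s + 1) n) (n + s - ·), Nat.card_Ico]
  · omega
  all_goals
    simp only [mem_Ico]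
    omega

theorem two_mul_cellCount_add_lt {f : ℕ} (hf : f ≤ n) :
    2 * cellCount n (fun i j => i + j < f) = f * (f + 1) := by
  induction f with
  | zero => rw [cellCount_eq_zero (by omega)]
  | succ f ih =>
    rw [cellCount_eq_add (B := fun i j => i + j < f) (C := fun i j => i + j = f) (by omega),
      mul_add, ih (by omega), cellCount_add_eq (by omega)]
    ring

theorem two_mul_cellCount_le_add {s d : ℕ} (hn : s + d + 1 = n) :
    2 * cellCount n (fun i j => n + s ≤ i + j) = d * (d + 1) := by
  induction d generalizing s with
  | zero => rw [cellCount_eq_zero (by omega)]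
  | succ d ih =>
    rw [cellCount_eq_add (B := fun i j => n + (s + 1) ≤ i + j) (C := fun i j => i + j = n + s)
      (by omega), mul_add, ih (by omega), cellCount_add_eq_add (d := d + 1) (by omega)]
    ring

theorem two_mul_cellCount_wordCells {f h d : ℕ} (hn : f + d + 2 = n) (hd : h ≤ d) :
    2 * cellCount n (WordCells n f h) = (f + 1) * (f + 2) + d * (d + 1) + 4 * h := by
  obtain ⟨e, rfl⟩ := Nat.exists_eq_add_of_le hd
  let lower : ℕ → ℕ → Prop := fun i j =>
    (n + f ≤ i + j ∧ i + j < n + f + h) ∨ n + f + h < i + j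
  have split_upper : cellCount n (WordCells n f h) =
      cellCount n (fun i j => i + j < f) + cellCount n (fun i j => i + j = f + h ∨ lower i j) :=
    cellCount_eq_add (by dsimp only [WordCells, lower]; omega)
  have split_diag : cellCount n (fun i j => i + j = f + h ∨ lower i j) =
      cellCount n (fun i j => i + j = f + h) + cellCount n lower :=
    cellCount_eq_add (by dsimp only [lower]; omega)
  have split_lower : cellCount n (fun i j => n + f ≤ i + j) =
      cellCount n lower + cellCount n (fun i j => i + j = n + (f + h)) :=
    cellCount_eq_add (by dsimp only [lower]; omega)
  have upper_count := two_mul_cellCount_add_lt (n := n) (f := f) (by omega)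
  have lower_count := two_mul_cellCount_le_add (n := n) (s := f) (d := h + e + 1) (by omega)
  rw [cellCount_add_eq (by omega)] at split_diag
  rw [cellCount_add_eq_add (d := e + 1) (by omega)] at split_lower
  linarith

end Counting

/-! ### Exchanging cells of the first row and column -/

/-- Membership of `q` in `[1, l] ∪ [a - m, a - 1]`, which holds `l + m` of the numbers below `a`
when `l + m < a`. -/
def IsExchanged (a l m q : ℕ) : Prop :=
  1 ≤ q ∧ q ≤ l ∨ a ≤ q + m ∧ q < a

/-- The cells above the antidiagonal `i + j = a`, those with `n + a ≤ i + j` and those in the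
first row or column beyond `a`, except that for each `q` with `IsExchanged a l m q` the cells
`(q, 0)` and `(0, a - q)` are replaced by the single cell `(q, a - q)`. -/
def ExchangeCells (n a l m i j : ℕ) : Prop :=
  i + j < a ∧ ¬ (j = 0 ∧ IsExchanged a l m i) ∧ ¬ (i = 0 ∧ IsExchanged a m l j) ∨
    i + j = a ∧ IsExchanged a l m i ∨ n + a ≤ i + j ∨ i = 0 ∧ a < j ∨ j = 0 ∧ a < i

theorem ExchangeCells.swap {n a l m i j : ℕ} (h : ExchangeCells n a l m i j) :
    ExchangeCells n a m l j i := by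
  simp only [ExchangeCells, IsExchanged] at h ⊢
  omega

section ExchangeCells

variable {n a l m : ℕ} (ha : a < n) (hna : n ≤ a + l + m) (hlma : l + m + 2 ≤ a)
  (hlm : l ≤ m + 1) (hml : m ≤ l + 1) {i j : Fin n}
include ha hna hlma hlm hml

theorem isNeeded_exchangeCells_lower (hij : n + a ≤ (i + j : ℕ)) :
    IsNeeded (cyclicSquare n) (fun r c => ExchangeCells n a l m r c) i j := by
  by_cases heq : (i + j : ℕ) = n + a
  · by_cases hi : 2 * (i - (l + 1) : ℕ) ≤ n
    · refine isNeeded_cyclicSquare_of_neg .xzy (p := i - (l + 1)) (by omega) hi ?_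
      simp only [Role.Shape, StripShape, ExchangeCells, IsExchanged]
      omega
    · refine isNeeded_cyclicSquare_of_neg .yzx (p := n - (i - (l + 1))) (by omega) (by omega) ?_
      simp only [Role.Shape, StripShape, ExchangeCells, IsExchanged]
      omega
  · refine isNeeded_cyclicSquare_of_neg .xzy (p := n / 2) (by omega) (by omega) ?_
    simp only [Role.Shape, StripShape, ExchangeCells, IsExchanged]
    omega

theorem isNeeded_exchangeCells_corner (hcorner : ¬ (a + 1 = n ∧ l + m = 1)) (hi : (i : ℕ) = 0)
    (hj : (j : ℕ) = 0) :
    IsNeeded (cyclicSquare n) (fun r c => ExchangeCells n a l m r c) i j := by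
  refine isNeeded_cyclicSquare_of_neg .zxy (p := 1) (by omega) (by omega) ?_
  simp only [Role.Shape, StripShape, ExchangeCells, IsExchanged]
  omega

theorem isNeeded_exchangeCells_row (hi : (i : ℕ) = 0) (hj : (j : ℕ) ≠ 0)
    (hij : ExchangeCells n a l m i j) :
    IsNeeded (cyclicSquare n) (fun r c => ExchangeCells n a l m r c) i j := by
  simp only [ExchangeCells, IsExchanged] at hij
  by_cases haj : a < j
  · refine isNeeded_cyclicSquare_of_neg .zxy (p := n - j + 1) (by omega) (by omega) ?_
    simp only [Role.Shape, StripShape, ExchangeCells, IsExchanged]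
    omega
  by_cases h : 2 * (a - j) ≤ n
  · refine isNeeded_cyclicSquare_of_pos .yxz (p := a - j) (by omega) h ?_
    simp only [Role.Shape, StripShape, ExchangeCells, IsExchanged]
    omega
  · refine isNeeded_cyclicSquare_of_pos .zxy (p := n - a + j) (by omega) (by omega) ?_
    simp only [Role.Shape, StripShape, ExchangeCells, IsExchanged]
    omega

theorem isNeeded_exchangeCells_column (hi : (i : ℕ) ≠ 0) (hj : (j : ℕ) = 0)
    (hij : ExchangeCells n a l m i j) :
    IsNeeded (cyclicSquare n) (fun r c => ExchangeCells n a l m r c) i j :=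
  isNeeded_cyclicSquare_swap (fun r c => ExchangeCells.swap)
    (isNeeded_exchangeCells_row ha (by omega) (by omega) hml hlm hj hi hij.swap)

theorem isNeeded_exchangeCells_diag (heq : (i + j : ℕ) = a)
    (hij : ExchangeCells n a l m i j) :
    IsNeeded (cyclicSquare n) (fun r c => ExchangeCells n a l m r c) i j := by
  simp only [ExchangeCells, IsExchanged] at hij
  by_cases hl : (i : ℕ) ≤ l
  · refine isNeeded_cyclicSquare_of_pos .yzx (p := i) (by omega) (by omega) ?_
    simp only [Role.Shape, StripShape, ExchangeCells, IsExchanged]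
    omega
  · refine isNeeded_cyclicSquare_of_pos .xzy (p := j) (by omega) (by omega) ?_
    simp only [Role.Shape, StripShape, ExchangeCells, IsExchanged]
    omega

theorem isNeeded_exchangeCells_upper (hi : (i : ℕ) ≠ 0) (hj : (j : ℕ) ≠ 0)
    (hlt : (i + j : ℕ) < a) :
    IsNeeded (cyclicSquare n) (fun r c => ExchangeCells n a l m r c) i j := by
  by_cases h : 2 * (max (i : ℕ) j + 1) ≤ n
  · refine isNeeded_cyclicSquare_of_pos .zxy (p := max (i : ℕ) j + 1) (by omega) h ?_
    simp only [Role.Shape, StripShape, ExchangeCells, IsExchanged]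
    omega
  by_cases hji : (j : ℕ) ≤ i
  · refine isNeeded_cyclicSquare_of_pos .xzy (p := n - i - 1) (by omega) (by omega) ?_
    simp only [Role.Shape, StripShape, ExchangeCells, IsExchanged]
    omega
  · refine isNeeded_cyclicSquare_of_pos .yzx (p := n - j - 1) (by omega) (by omega) ?_
    simp only [Role.Shape, StripShape, ExchangeCells, IsExchanged]
    omega

theorem isNeeded_exchangeCells (hcorner : ¬ (a + 1 = n ∧ l + m = 1 ∧ (i + j : ℕ) = 0))
    (hij : ExchangeCells n a l m i j) :
    IsNeeded (cyclicSquare n) (fun r c => ExchangeCells n a l m r c) i j := by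
  by_cases hlow : n + a ≤ (i + j : ℕ)
  · exact isNeeded_exchangeCells_lower ha hna hlma hlm hml hlow
  by_cases hi : (i : ℕ) = 0 <;> by_cases hj : (j : ℕ) = 0
  · exact isNeeded_exchangeCells_corner ha hna hlma hlm hml (by omega) hi hj
  · exact isNeeded_exchangeCells_row ha hna hlma hlm hml hi hj hij
  · exact isNeeded_exchangeCells_column ha hna hlma hlm hml hi hj hij
  by_cases heq : (i + j : ℕ) = a
  · exact isNeeded_exchangeCells_diag ha hna hlma hlm hml heq hij
  · refine isNeeded_exchangeCells_upper ha hna hlma hlm hml hi hj ?_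
    simp only [ExchangeCells] at hij
    omega

end ExchangeCells

section Completion

variable {n a l m : ℕ} {i j : Fin n}

theorem add_eq_or_of_cyclicSquare_eq {r c : Fin n} (h : cyclicSquare n r c = cyclicSquare n i j) :
    (r + c : ℕ) = i + j ∨ (r + c : ℕ) = i + j + n ∨ (r + c + n : ℕ) = i + j := by
  have := val_eq_or (k := cyclicSquare n i j) (i := i) (j := j) rfl
  have := val_eq_or (k := cyclicSquare n i j) (i := r) (j := c) h.symm
  omega

variable {L' : Fin n → Fin n → Fin n} (hL' : IsLatinSquare L') (ha : a < n)
  (hlm : l + m < a)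
  (h : ∀ i j : Fin n, ExchangeCells n a l m i j → L' i j = cyclicSquare n i j)
include hL' ha hlm h

theorem eq_of_exchangeCells_diag (hij : (i + j : ℕ) = a) : L' i j = cyclicSquare n i j := by
  refine eq_of_rank (isLatinSquare_cyclicSquare n) hL' (fun i j => (i + j : ℕ) = a)
    (fun i _ => i) ?_ hij
  intro i j r c hij hri hcj heq hne hic hrc
  rw [Ne, Fin.ext_iff] at hri hcj
  have hne := mt (h i j) hne
  have hic := mt (h i c) hic
  have hrc := mt (h r c) hrc
  have hsum : (r + c : ℕ) = a := by
    rcases add_eq_or_of_cyclicSquare_eq heq with hsum | hsum | hsum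
    · omega
    · exact absurd (Or.inr (Or.inr (Or.inl (by omega)))) hrc
    · omega
  refine Or.inr ⟨hsum, ?_⟩
  by_contra hlt
  have hi : ¬ IsExchanged a l m i := fun hi => hne (Or.inr (Or.inl ⟨hij, hi⟩))
  have hr : ¬ IsExchanged a l m r := fun hr => hrc (Or.inr (Or.inl ⟨hsum, hr⟩))
  refine hic (Or.inl ⟨by omega, fun h => hi h.2, fun h => hr ?_⟩)
  simp only [IsExchanged] at h ⊢
  omega

theorem eq_of_exchangeCells_row (hi : (i : ℕ) = 0) : L' i j = cyclicSquare n i j := by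
  refine eq_of_rank (isLatinSquare_cyclicSquare n) hL' (fun i _ => (i : ℕ) = 0)
    (fun _ j => n - j) ?_ hi
  intro i j r c hi hri hcj heq hne hic hrc
  rw [Ne, Fin.ext_iff] at hri hcj
  refine Or.inl ⟨hi, ?_⟩
  by_contra hlt
  have hne := mt (h i j) hne
  have hsum : (r + c : ℕ) = j := by
    have := add_eq_or_of_cyclicSquare_eq heq
    omega
  have hdiag : (r + c : ℕ) ≠ a := mt (eq_of_exchangeCells_diag hL' ha hlm h) hrc
  have hrc := mt (h r c) hrc
  have hic := mt (h i c) hic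
  simp only [ExchangeCells, IsExchanged] at hne hic hrc
  omega

theorem eq_of_exchangeCells_column (hj : (j : ℕ) = 0) : L' i j = cyclicSquare n i j :=
  (eq_of_exchangeCells_row (l := m) (m := l) (L' := fun i j => L' j i) ⟨hL'.2, hL'.1⟩ ha
    (by omega) (fun r c hrc => (h c r hrc.swap).trans (add_comm c r)) hj).trans (add_comm j i)

theorem eq_of_exchangeCells : L' = cyclicSquare n := by
  refine eq_of_word (isLatinSquare_cyclicSquare n) hL' (U := fun s => s < a)
    (fun i j => Or.inr rfl) (fun i j _ hlt => ?_) (fun i j hij hge => h i j ?_)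
  · by_cases hi : (i : ℕ) = 0
    · exact eq_of_exchangeCells_row hL' ha hlm h hi
    by_cases hj : (j : ℕ) = 0
    · exact eq_of_exchangeCells_column hL' ha hlm h hj
    · exact h i j (Or.inl ⟨hlt, fun h => hj h.1, fun h => hi h.1⟩)
  · simp only [ExchangeCells]
    omega

end Completion

section Counting

variable {n a b l m : ℕ}

theorem card_exchanged (hlm : l + m < a) : #(Icc 1 l ∪ Ico (a - m) a) = l + m := by
  rw [card_union_of_disjoint, Nat.card_Icc, Nat.card_Ico]
  · omega
  · simp only [disjoint_left, mem_Icc, mem_Ico]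
    omega

theorem cellCount_exchanged_graph (ha : a < n) (hlm : l + m < a) (g : ℕ → ℕ) (hg : ∀ i, g i < n) :
    cellCount n (fun i j => IsExchanged a l m i ∧ j = g i) = l + m := by
  have mem (q : ℕ) : q ∈ Icc 1 l ∪ Ico (a - m) a ↔ IsExchanged a l m q := by
    simp only [mem_union, mem_Icc, mem_Ico, IsExchanged]
    omega
  rw [cellCount_graph _ g (fun i j _ _ => by rw [mem]), card_exchanged hlm]
  intro i hi
  rw [mem] at hi
  simp only [IsExchanged] at hi
  exact ⟨by omega, hg i⟩

theorem cellCount_column_gt (hn : a + b + 1 = n) : cellCount n (fun i j => j = 0 ∧ a < i) = b := by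
  rw [cellCount_graph (Ioo a n) (fun _ => 0), Nat.card_Ioo]
  · omega
  all_goals
    simp only [mem_Ioo]
    omega

theorem cellCount_border (hn : a + b + 1 = n) :
    cellCount n (fun i j => j = 0 ∧ a < i ∨ i = 0 ∧ a < j) = 2 * b := by
  rw [cellCount_eq_add (B := fun i j => j = 0 ∧ a < i) (C := fun i j => i = 0 ∧ a < j) (by omega),
    cellCount_swap n fun i j => j = 0 ∧ a < i, cellCount_column_gt hn, two_mul]

theorem two_mul_cellCount_exchangeCells (hn : a + b + 1 = n) (hlm : l + m < a) :
    2 * (cellCount n (ExchangeCells n a l m) + (l + m)) = a * (a + 1) + b * (b + 1) + 4 * b := by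
  let column : ℕ → ℕ → Prop := fun i j => IsExchanged a l m i ∧ j = 0
  let row : ℕ → ℕ → Prop := fun i j => IsExchanged a m l j ∧ i = 0
  let diag : ℕ → ℕ → Prop := fun i j => IsExchanged a l m i ∧ j = a - i
  let border : ℕ → ℕ → Prop := fun i j => j = 0 ∧ a < i ∨ i = 0 ∧ a < j
  let lower : ℕ → ℕ → Prop := fun i j => n + a ≤ i + j
  have split_cells : cellCount n (fun i j => ExchangeCells n a l m i j ∨ column i j ∨ row i j) =
      cellCount n (ExchangeCells n a l m) + cellCount n (fun i j => column i j ∨ row i j) :=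
    cellCount_eq_add (by dsimp only [ExchangeCells, IsExchanged, column, row]; omega)
  have split_exchanged : cellCount n (fun i j => column i j ∨ row i j) =
      cellCount n column + cellCount n row :=
    cellCount_eq_add (by dsimp only [IsExchanged, column, row]; omega)
  have split_upper : cellCount n (fun i j => ExchangeCells n a l m i j ∨ column i j ∨ row i j) =
      cellCount n (fun i j => i + j < a) +
        cellCount n (fun i j => diag i j ∨ border i j ∨ lower i j) :=
    cellCount_eq_add (by
      dsimp only [ExchangeCells, IsExchanged, column, row, diag, border, lower]; omega)
  have split_diag : cellCount n (fun i j => diag i j ∨ border i j ∨ lower i j) =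
      cellCount n diag + cellCount n (fun i j => border i j ∨ lower i j) :=
    cellCount_eq_add (by dsimp only [IsExchanged, diag, border, lower]; omega)
  have split_border : cellCount n (fun i j => border i j ∨ lower i j) =
      cellCount n border + cellCount n lower :=
    cellCount_eq_add (by dsimp only [border, lower]; omega)
  have column_count : cellCount n column = l + m :=
    cellCount_exchanged_graph (by omega) hlm _ (by omega)
  have row_count : cellCount n row = m + l :=
    (cellCount_swap n _).trans
      (cellCount_exchanged_graph (g := fun _ => 0) (by omega) (by omega) (by omega))
  have diag_count : cellCount n diag = l + m :=
    cellCount_exchanged_graph (by omega) hlm _ (by omega)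
  have border_count := cellCount_border hn
  have upper_count := two_mul_cellCount_add_lt (n := n) (f := a) (by omega)
  have lower_count := two_mul_cellCount_le_add (n := n) (s := a) (d := b) hn
  dsimp only [lower, border] at *
  linarith

end Counting

theorem isNeeded_exchangeCells_corner_of_odd {k n : ℕ} (hk : 2 ≤ k) (hn : 2 * k + 1 = n)
    {i j : Fin n} (hi : (i : ℕ) = 0) (hj : (j : ℕ) = 0) :
    IsNeeded (cyclicSquare n) (fun r c => ExchangeCells n (n - 1) 1 0 r c) i j := by
  have coprime : n.gcd 2 = 1 := Nat.coprime_two_right.2 ⟨k, hn.symm⟩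
  refine isNeeded_cyclicSquare_of_step 2 .yzx (p := k) (N := n) (by rw [coprime, Nat.div_one])
    (dvd_mul_left n 2) (by omega) (by omega) fun x y z hxyz => ?_
  simp only [Role.Shape, StripShape] at hxyz
  have := mod_eq_or (n := n) (a := i + 2 * x) (by omega) rfl
  have := mod_eq_or (n := n) (a := j + 2 * y) (by omega) rfl
  have := Nat.mod_lt (i + 2 * x) i.pos
  have := Nat.mod_lt (j + 2 * y) i.pos
  simp only [ExchangeCells, IsExchanged]
  omega

theorem hasCriticalSet_exchangeCells {n a q : ℕ} (ha : a < n) (hna : n ≤ a + q) (hqa : q + 2 ≤ a)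
    (hn : 5 ≤ n) (hodd : a + 1 = n → q = 1 → n % 2 = 1) :
    HasCriticalSet n (cellCount n (ExchangeCells n a (q - q / 2) (q / 2))) := by
  refine hasCriticalSet_of_cells _ (isLatinSquare_cyclicSquare n)
    (fun L' hL' h => eq_of_exchangeCells hL' ha (by omega) h) fun i j hij => ?_
  by_cases hzero : a + 1 = n ∧ q = 1 ∧ (i + j : ℕ) = 0
  · obtain ⟨rfl, rfl, hij⟩ := hzero
    have := hodd rfl rfl
    exact isNeeded_exchangeCells_corner_of_odd (k := a / 2) (by omega) (by omega)
      (by omega) (by omega)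
  · exact isNeeded_exchangeCells ha (by omega) (by omega) (by omega) (by omega) (by omega) hij

/-! ### The punctured triangle -/

/-- The cells above the antidiagonal `i + j = n - 1`, with `(0, n - 2)` and `(n - 2, 0)` replaced
by `(n - 2, n - 2)`. -/
def PuncturedTriangle (n i j : ℕ) : Prop :=
  i + j + 1 < n ∧ ¬ (i = 0 ∧ j + 2 = n) ∧ ¬ (j = 0 ∧ i + 2 = n) ∨ i + 2 = n ∧ j + 2 = n

theorem PuncturedTriangle.swap {n i j : ℕ} (h : PuncturedTriangle n i j) :
    PuncturedTriangle n j i := by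
  simp only [PuncturedTriangle] at h ⊢
  omega

section PuncturedTriangle

variable {k n : ℕ} (hn : 2 * k = n) {i j : Fin n}
include hn

theorem isNeeded_puncturedTriangle_of_step_two (hk : 2 ≤ k) (ρ : Role)
    (hS : ∀ x y z, ρ.Shape 1 k x y z →
      ¬ PuncturedTriangle n ((i + 2 * x) % n) ((j + 2 * y) % n)) :
    IsNeeded (cyclicSquare n) (fun r c => PuncturedTriangle n r c) i j := by
  have hgcd : n.gcd 2 = 2 := Nat.gcd_eq_right ⟨k, hn.symm⟩
  exact isNeeded_cyclicSquare_of_step 2 ρ (N := k) (by rw [hgcd]; omega) ⟨1, by omega⟩ one_pos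
    (by omega) hS

theorem isNeeded_puncturedTriangle_near (hk : 3 ≤ k) (hle : (i : ℕ) ≤ j) (hj : (j : ℕ) < k)
    (hij : PuncturedTriangle n i j) :
    IsNeeded (cyclicSquare n) (fun r c => PuncturedTriangle n r c) i j := by
  simp only [PuncturedTriangle] at hij
  by_cases hfar : (i + j + 4 : ℕ) < n ∨ (i + 1 : ℕ) < j
  · refine isNeeded_cyclicSquare_of_pos .zxy (p := j + 1) (by omega) (by omega) ?_
    simp only [Role.Shape, StripShape, PuncturedTriangle]
    omega
  by_cases hsmall : k = 3 ∧ (i : ℕ) = 1 ∧ (j : ℕ) = 1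
  · obtain ⟨rfl, hi, hj⟩ := hsmall
    obtain rfl := hn
    refine isNeeded_puncturedTriangle_of_step_two rfl (by omega) .zxy fun x y z => ?_
    simp only [Role.Shape, StripShape, PuncturedTriangle]
    omega
  · refine isNeeded_cyclicSquare_of_pos .yzx (p := j + 1) (by omega) (by omega) ?_
    simp only [Role.Shape, StripShape, PuncturedTriangle]
    omega

theorem isNeeded_puncturedTriangle_far (hk : 3 ≤ k) (hle : (i : ℕ) ≤ j) (hj : k ≤ j)
    (hij : PuncturedTriangle n i j) :
    IsNeeded (cyclicSquare n) (fun r c => PuncturedTriangle n r c) i j := by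
  simp only [PuncturedTriangle] at hij
  by_cases hlast : (i + 2 : ℕ) = n
  · refine isNeeded_cyclicSquare_of_pos .yzx (p := 1) (by omega) (by omega) ?_
    simp only [Role.Shape, StripShape, PuncturedTriangle]
    omega
  by_cases hexc : (i : ℕ) = 1 ∧ (j + 3 : ℕ) = n
  · refine isNeeded_puncturedTriangle_of_step_two hn (by omega) .yzx fun x y z hxyz => ?_
    simp only [Role.Shape, StripShape] at hxyz
    have := mod_eq_or (n := n) (a := i + 2 * x) (by omega) rfl
    have := mod_eq_or (n := n) (a := j + 2 * y) (by omega) rfl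
    simp only [PuncturedTriangle]
    omega
  · refine isNeeded_cyclicSquare_of_pos .yzx (p := n - 1 - j) (by omega) (by omega) ?_
    simp only [Role.Shape, StripShape, PuncturedTriangle]
    omega

theorem isNeeded_puncturedTriangle (hk : 3 ≤ k) (hij : PuncturedTriangle n i j) :
    IsNeeded (cyclicSquare n) (fun r c => PuncturedTriangle n r c) i j := by
  refine isNeeded_cyclicSquare_of_symm (C := PuncturedTriangle n)
    (fun _ _ => PuncturedTriangle.swap) (fun i j hle hij => ?_) i j hij
  rcases lt_or_ge (j : ℕ) k with hj | hj
  · exact isNeeded_puncturedTriangle_near hn hk hle hj hij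
  · exact isNeeded_puncturedTriangle_far hn hk hle hj hij

end PuncturedTriangle

section Completion

variable {n : ℕ} (hn : 3 ≤ n) {L' : Fin n → Fin n → Fin n} (hL' : IsLatinSquare L')
  (h : ∀ i j : Fin n, PuncturedTriangle n i j → L' i j = cyclicSquare n i j)
  {i j : Fin n}
include hn hL' h

theorem eq_of_puncturedTriangle_border (hi : (i + 2 : ℕ) = n) (hj : (j + 1 : ℕ) = n) :
    L' i j = cyclicSquare n i j := by
  refine eq_of_row (isLatinSquare_cyclicSquare n) hL' fun r c hri hcj heq => ?_
  rw [Ne, Fin.ext_iff] at hri hcj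
  have := add_eq_or_of_cyclicSquare_eq heq
  rw [or_iff_not_imp_left]
  refine fun hic => h r c ?_
  have hic := mt (h i c) hic
  simp only [PuncturedTriangle] at hic ⊢
  omega

theorem eq_of_puncturedTriangle_column (hi : (i + 2 : ℕ) = n) (hj : (j : ℕ) = 0) :
    L' i j = cyclicSquare n i j := by
  refine eq_of_row (isLatinSquare_cyclicSquare n) hL' fun r c hri hcj heq => ?_
  rw [Ne, Fin.ext_iff] at hri hcj
  have := add_eq_or_of_cyclicSquare_eq heq
  by_cases hc : (c + 1 : ℕ) = n
  · exact Or.inl (eq_of_puncturedTriangle_border hn hL' h hi hc)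
  rw [or_iff_not_imp_left]
  refine fun hic => h r c ?_
  have hic := mt (h i c) hic
  simp only [PuncturedTriangle] at hic ⊢
  omega

theorem eq_of_puncturedTriangle_row (hi : (i : ℕ) = 0) (hj : (j + 2 : ℕ) = n) :
    L' i j = cyclicSquare n i j :=
  (eq_of_puncturedTriangle_column (L' := fun i j => L' j i) hn ⟨hL'.2, hL'.1⟩
    (fun r c hrc => (h c r hrc.swap).trans (add_comm c r)) hj hi).trans (add_comm j i)

theorem eq_of_puncturedTriangle : L' = cyclicSquare n := by
  refine eq_of_word (isLatinSquare_cyclicSquare n) hL' (U := fun s => s + 1 < n)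
    (fun i j => Or.inr rfl) (fun i j hij _ => ?_) (fun i j _ hge => absurd ?_ hge)
  · by_cases hP : PuncturedTriangle n i j
    · exact h i j hP
    simp only [PuncturedTriangle] at hP
    by_cases hi : (i : ℕ) = 0
    · exact eq_of_puncturedTriangle_row hn hL' h hi (by omega)
    · exact eq_of_puncturedTriangle_column hn hL' h (by omega) (by omega)
  · omega

end Completion

theorem two_mul_cellCount_puncturedTriangle {n : ℕ} (hn : 3 ≤ n) :
    2 * (cellCount n (PuncturedTriangle n) + 1) = (n - 1) * (n - 1 + 1) := by
  let corner : ℕ → ℕ → Prop := fun i j => i = n - 2 ∧ j = n - 2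
  let ends : ℕ → ℕ → Prop := fun i j => i = 0 ∧ j = n - 2 ∨ i = n - 2 ∧ j = 0
  have split_cells : cellCount n (fun i j => PuncturedTriangle n i j ∨ ends i j) =
      cellCount n (PuncturedTriangle n) + cellCount n ends :=
    cellCount_eq_add (by dsimp only [PuncturedTriangle, ends]; omega)
  have split_triangle : cellCount n (fun i j => PuncturedTriangle n i j ∨ ends i j) =
      cellCount n (fun i j => i + j < n - 1) + cellCount n corner :=
    cellCount_eq_add (by dsimp only [PuncturedTriangle, ends, corner]; omega)
  have split_ends : cellCount n ends =
      cellCount n (fun i j => i = 0 ∧ j = n - 2) + cellCount n (fun i j => i = n - 2 ∧ j = 0) :=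
    cellCount_eq_add (by dsimp only [ends]; omega)
  rw [cellCount_singleton (by omega) (by omega), cellCount_singleton (by omega) (by omega)]
    at split_ends
  have corner_count : cellCount n corner = 1 := cellCount_singleton (by omega) (by omega)
  have := two_mul_cellCount_add_lt (n := n) (f := n - 1) (by omega)
  omega

theorem hasCriticalSet_puncturedTriangle {k n : ℕ} (hk : 3 ≤ k) (hn : 2 * k = n) :
    HasCriticalSet n (cellCount n (PuncturedTriangle n)) :=
  hasCriticalSet_of_cells _ (isLatinSquare_cyclicSquare n)
    (fun _ hL' h => eq_of_puncturedTriangle (by omega) hL' h)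
    fun _ _ => isNeeded_puncturedTriangle hn hk

/-! ### Switching an intercalate -/

/-- The addition table of `G` with the subtable on the rows `r, r + κ` and the columns `c, c + κ`
replaced by its other Latin filling, for an element `κ` of order two. -/
def switchedSum {G : Type*} [Add G] [DecidableEq G] (r c κ i j : G) : G :=
  if (i = r ∨ i = r + κ) ∧ (j = c ∨ j = c + κ) then i + j + κ else i + j

theorem isLatinSquare_switchedSum {G : Type*} [AddCommGroup G] [DecidableEq G] (r c : G) {κ : G}
    (hκ : κ + κ = 0) : IsLatinSquare (switchedSum r c κ) := by
  have row (r c i : G) : Function.Bijective (switchedSum r c κ i) := by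
    by_cases hi : i = r ∨ i = r + κ
    · convert (AddGroup.addLeft_bijective i).comp (Equiv.swap c (c + κ)).bijective using 1
      funext j
      rw [switchedSum, Function.comp_apply, Equiv.swap_apply_def]
      split_ifs with _ _ hj <;> grind
    · convert AddGroup.addLeft_bijective i using 1
      funext j
      exact if_neg fun h => hi h.1
  refine ⟨row r c, fun j => ?_⟩
  convert row c r j using 2 with i
  simp only [switchedSum, add_comm i j, and_comm]

/-- The four cells congruent to `(a, b)` modulo `k` in a square of order `2 * k`. -/
def BlockCells (k a b i j : ℕ) : Prop := (i = a ∨ i = a + k) ∧ (j = b ∨ j = b + k)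

theorem exists_isLatinSquare_blockCells {n k a b : ℕ} (hn : 2 * k = n) (ha : a < k) (hb : b < k) :
    ∃ L : Fin n → Fin n → Fin n, IsLatinSquare L ∧
      (∀ i j : Fin n, BlockCells k a b i j → (L i j : ℕ) = (i + j + k) % n) ∧
      ∀ i j : Fin n, ¬ BlockCells k a b i j → L i j = i + j := by
  have : NeZero n := ⟨by omega⟩
  let row : Fin n := ⟨a, by omega⟩
  let column : Fin n := ⟨b, by omega⟩
  let shift : Fin n := ⟨k, by omega⟩
  have hshift : shift + shift = 0 := Fin.ext (by simp [shift, Fin.val_add, ← two_mul, hn])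
  have val_eq (x : Fin n) (hx : (x : ℕ) < k) (i : Fin n) :
      (i = x ∨ i = x + shift) ↔ ((i : ℕ) = x ∨ (i : ℕ) = x + k) := by
    rw [Fin.ext_iff, Fin.ext_iff, Fin.val_add, Nat.mod_eq_of_lt (by simp only [shift]; omega)]
  have block_iff (i j : Fin n) : BlockCells k a b i j ↔
      (i = row ∨ i = row + shift) ∧ (j = column ∨ j = column + shift) := by
    rw [val_eq row ha, val_eq column hb, BlockCells]
  refine ⟨switchedSum row column shift, isLatinSquare_switchedSum row column hshift,
    fun i j h => ?_, fun i j h => if_neg (mt (block_iff i j).2 h)⟩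
  rw [switchedSum, if_pos ((block_iff i j).1 h), Fin.val_add, Fin.val_add, Nat.mod_add_mod]

theorem isNeeded_of_intercalate {n k : ℕ} (hn : 2 * k = n) {L : Fin n → Fin n → Fin n}
    (hL : IsLatinSquare L) {C : ℕ → ℕ → Prop} (hC : ∀ r c : Fin n, ¬ C r c → L r c = r + c)
    {i j : Fin n} (hij : L i j = i + j)
    (h : ∀ r c, r < n → c < n → (r = i ∨ r = i + k ∨ r + k = i) →
      (c = j ∨ c = j + k ∨ c + k = j) → ¬ (r = i ∧ c = j) → ¬ C r c) :
    IsNeeded L (fun r c => C r c) i j := by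
  have hgcd : n.gcd k = k := Nat.gcd_eq_right ⟨2, by omega⟩
  refine isNeeded_of_step hL hC k .xyz (p := 1) (N := 2) ?_ ?_ one_pos le_rfl
    fun x y z hxyz => h _ _ (Nat.mod_lt _ i.pos) (Nat.mod_lt _ i.pos) ?_ ?_ ?_
  · rw [hgcd, ← hn, Nat.mul_div_cancel _ (by omega)]
  · rw [hij, Fin.val_add, mul_comm k, hn, Nat.add_mod_right]
  all_goals
    simp only [Role.Shape, StripShape] at hxyz
    have displacement : k * x = 0 ∧ k * y = k ∨ k * x = k ∧ k * y = 0 ∨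
        k * x = k ∧ k * y = k := by
      obtain ⟨rfl, rfl⟩ | ⟨rfl, rfl⟩ | ⟨rfl, rfl⟩ :
        x = 0 ∧ y = 1 ∨ x = 1 ∧ y = 0 ∨ x = 1 ∧ y = 1 := by omega
      all_goals simp only [mul_zero, mul_one, and_self, true_or, or_true]
    have := mod_eq_or (n := n) (a := i + k * x) (by omega) rfl
    have := mod_eq_or (n := n) (a := j + k * y) (by omega) rfl
    have := Nat.mod_lt (i + k * x) i.pos
    have := Nat.mod_lt (j + k * y) i.pos
    omega

/-- The cells of a word together with those of an intercalate which is to be switched. -/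
def SwitchedCells (n k f h x i j : ℕ) : Prop :=
  WordCells n f h i j ∨ BlockCells k (2 * x + 1) (k - 1) i j

section SwitchedCells

variable {n k f h x : ℕ} (hn : 2 * k = n) (hx : 2 * x + 5 ≤ k)
  (hfh : (x = 0 ∧ f + 1 = k ∧ h = 0) ∨ (h + 1 = x ∧ f = k))
  {L : Fin n → Fin n → Fin n} (hL : IsLatinSquare L) {i j : Fin n}
  (hblock : ∀ i j : Fin n, BlockCells k (2 * x + 1) (k - 1) i j → (L i j : ℕ) = (i + j + k) % n)
  (hrest : ∀ i j : Fin n, ¬ BlockCells k (2 * x + 1) (k - 1) i j → L i j = i + j)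
include hn hx hfh hL hrest

include hblock in
theorem isNeeded_switchedCells_block (hij : BlockCells k (2 * x + 1) (k - 1) i j) :
    IsNeeded L (fun r c => SwitchedCells n k f h x r c) i j := by
  have hC (r c : Fin n) (hrc : ¬ SwitchedCells n k f h x r c) : L r c = r + c :=
    hrest r c fun h => hrc (Or.inr h)
  have hpos := hblock i j hij
  have hneg : (L i j + k : ℕ) % n = (i + j : ℕ) % n := by
    rw [hpos, Nat.mod_add_mod, add_assoc, ← two_mul, hn, Nat.add_mod_right]
  obtain ⟨hi | hi, hj | hj⟩ := hij
  · refine isNeeded_of_pos hL hC .zxy (by omega) hpos one_pos (by omega) ?_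
    simp only [Role.Shape, StripShape, SwitchedCells, WordCells, BlockCells]
    omega
  · refine isNeeded_of_neg hL hC .xzy (by omega) hneg one_pos (by omega) ?_
    simp only [Role.Shape, StripShape, SwitchedCells, WordCells, BlockCells]
    omega
  all_goals
    refine isNeeded_of_neg hL hC .zxy (by omega) hneg one_pos (by omega) ?_
    simp only [Role.Shape, StripShape, SwitchedCells, WordCells, BlockCells]
    omega

theorem isNeeded_switchedCells_diag (hpos : 0 < x)
    (hij : (i + j : ℕ) = h ∨ (i + j : ℕ) = f + h ∧ (k ≤ i ∨ k ≤ j))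
    (hB : ¬ BlockCells k (2 * x + 1) (k - 1) i j) :
    IsNeeded L (fun r c => SwitchedCells n k f h x r c) i j := by
  have hC (r c : Fin n) (hrc : ¬ SwitchedCells n k f h x r c) : L r c = r + c :=
    hrest r c fun h => hrc (Or.inr h)
  have hij0 : (L i j : ℕ) = (i + j + n) % n := by rw [hrest i j hB, Nat.add_mod_right, Fin.val_add]
  rcases hij with hij | ⟨hij, hle⟩
  · refine isNeeded_of_pos hL hC .zxy (p := max (i : ℕ) j + 1) le_rfl hij0 (by omega) (by omega) ?_
    simp only [Role.Shape, StripShape, SwitchedCells, WordCells, BlockCells]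
    omega
  rcases le_total (i : ℕ) j with hle' | hle'
  · refine isNeeded_of_pos hL hC .yzx (p := max (i : ℕ) h + 1) le_rfl hij0 (by omega) (by omega) ?_
    simp only [Role.Shape, StripShape, SwitchedCells, WordCells, BlockCells]
    omega
  · refine isNeeded_of_pos hL hC .xzy (p := max (j : ℕ) h + 1) le_rfl hij0 (by omega) (by omega) ?_
    simp only [Role.Shape, StripShape, SwitchedCells, WordCells, BlockCells]
    omega

theorem isNeeded_switchedCells_word (hij : WordCells n f h i j)
    (hB : ¬ BlockCells k (2 * x + 1) (k - 1) i j)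
    (hne : x = 0 ∨ (i + j : ℕ) ≠ h ∧ ((i + j : ℕ) = f + h → (i : ℕ) < k ∧ (j : ℕ) < k)) :
    IsNeeded L (fun r c => SwitchedCells n k f h x r c) i j := by
  refine isNeeded_of_intercalate hn hL (fun r c hrc => hrest r c fun h => hrc (Or.inr h))
    (hrest i j hB) fun r c hr hc hri hcj hrc hS => ?_
  have hword : WordCells n f h r c := hS.resolve_right (by
    simp only [BlockCells] at hB ⊢
    omega)
  simp only [WordCells] at hij hword
  rcases hfh with ⟨rfl, rfl, rfl⟩ | ⟨rfl, rfl⟩ <;> omega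

include hblock in
theorem isNeeded_switchedCells (hij : SwitchedCells n k f h x i j) :
    IsNeeded L (fun r c => SwitchedCells n k f h x r c) i j := by
  by_cases hB : BlockCells k (2 * x + 1) (k - 1) i j
  · exact isNeeded_switchedCells_block hn hx hfh hL hblock hrest hB
  by_cases hdiag : 0 < x ∧ ((i + j : ℕ) = h ∨ (i + j : ℕ) = f + h ∧ (k ≤ i ∨ k ≤ j))
  · exact isNeeded_switchedCells_diag hn hx hfh hL hrest hdiag.1 hdiag.2 hB
  · exact isNeeded_switchedCells_word hn hx hfh hL hrest (hij.resolve_right hB) hB (by omega)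

end SwitchedCells

theorem eq_of_switchedCells {n k f h x : ℕ} {L L' : Fin n → Fin n → Fin n}
    (hL : IsLatinSquare L) (hL' : IsLatinSquare L')
    (hrest : ∀ i j : Fin n, ¬ BlockCells k (2 * x + 1) (k - 1) i j → L i j = i + j)
    (heq : ∀ i j : Fin n, SwitchedCells n k f h x i j → L' i j = L i j) : L' = L := by
  refine eq_of_word hL hL' (U := fun s => s < f ∨ s = f + h) (fun i j => ?_)
    (fun i j _ _ => heq i j (Or.inl ?_)) (fun i j _ _ => heq i j (Or.inl ?_))
  · by_cases hB : BlockCells k (2 * x + 1) (k - 1) i j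
    · exact Or.inl (heq i j (Or.inr hB))
    · exact Or.inr (hrest i j hB)
  all_goals simp only [WordCells]; omega

theorem hasCriticalSet_switchedCells {n k f h x : ℕ} (hn : 2 * k = n) (hx : 2 * x + 5 ≤ k)
    (hfh : (x = 0 ∧ f + 1 = k ∧ h = 0) ∨ (h + 1 = x ∧ f = k)) :
    HasCriticalSet n (cellCount n (SwitchedCells n k f h x)) := by
  obtain ⟨L, hL, hblock, hrest⟩ :=
    exists_isLatinSquare_blockCells hn (a := 2 * x + 1) (b := k - 1) (by omega) (by omega)
  exact hasCriticalSet_of_cells _ hL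
    (fun _ hL' heq => eq_of_switchedCells hL hL' hrest heq)
    fun _ _ => isNeeded_switchedCells hn hx hfh hL hblock hrest

theorem cellCount_switchedCells {n k f h x : ℕ} (hn : 2 * k = n) (hx : 2 * x + 5 ≤ k)
    (hfh : (x = 0 ∧ f + 1 = k ∧ h = 0) ∨ (h + 1 = x ∧ f = k)) :
    cellCount n (SwitchedCells n k f h x) = cellCount n (WordCells n f h) + 3 := by
  let upper : ℕ → ℕ → Prop := fun i j => i = 2 * x + 1 ∧ j = k - 1
  let lower : ℕ → ℕ → Prop := fun i j => i = 2 * x + 1 + k ∧ j = k - 1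
  let right : ℕ → ℕ → Prop := fun i j => i = 2 * x + 1 ∧ j = k - 1 + k
  have split_cells : cellCount n (SwitchedCells n k f h x) = cellCount n (WordCells n f h) +
      cellCount n (fun i j => (upper i j ∨ lower i j) ∨ right i j) :=
    cellCount_eq_add (by
      dsimp only [SwitchedCells, WordCells, BlockCells, upper, lower, right]
      omega)
  have split_block : cellCount n (fun i j => (upper i j ∨ lower i j) ∨ right i j) =
      cellCount n (fun i j => upper i j ∨ lower i j) + cellCount n right :=
    cellCount_eq_add (by dsimp only [upper, lower, right]; omega)
  have split_column : cellCount n (fun i j => upper i j ∨ lower i j) =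
      cellCount n upper + cellCount n lower :=
    cellCount_eq_add (by dsimp only [upper, lower]; omega)
  have upper_count : cellCount n upper = 1 := cellCount_singleton (by omega) (by omega)
  have lower_count : cellCount n lower = 1 := cellCount_singleton (by omega) (by omega)
  have right_count : cellCount n right = 1 := cellCount_singleton (by omega) (by omega)
  omega

/-! ### The spectrum -/

theorem hasCriticalSet_of_wordCells {n f h d m : ℕ} (hn : f + d + 2 = n) (hf : h ≤ f)
    (hd : 2 * h ≤ d) (hm : 2 * m = (f + 1) * (f + 2) + d * (d + 1) + 4 * h) :
    HasCriticalSet n m := by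
  have count := two_mul_cellCount_wordCells hn (h := h) (by omega)
  obtain rfl : m = cellCount n (WordCells n f h) := by omega
  exact hasCriticalSet_wordCells hf (by omega)

theorem hasCriticalSet_of_exchangeCells {n a b q m : ℕ} (hab : a + b + 1 = n) (hn : 5 ≤ n)
    (hbq : b < q) (hqa : q + 2 ≤ a) (hm : 2 * (m + q) = a * (a + 1) + b * (b + 1) + 4 * b) :
    HasCriticalSet n m := by
  by_cases hpunctured : b = 0 ∧ q = 1 ∧ n % 2 = 0
  · obtain ⟨rfl, rfl, heven⟩ := hpunctured
    obtain rfl := hab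
    have count := two_mul_cellCount_puncturedTriangle (n := a + 1) (by omega)
    rw [Nat.add_sub_cancel] at count
    obtain rfl : m = cellCount (a + 1) (PuncturedTriangle (a + 1)) := by omega
    exact hasCriticalSet_puncturedTriangle (k := (a + 1) / 2) (by omega) (by omega)
  · have count := two_mul_cellCount_exchangeCells hab (l := q - q / 2) (m := q / 2) (by omega)
    obtain rfl : m = cellCount n (ExchangeCells n a (q - q / 2) (q / 2)) := by omega
    exact hasCriticalSet_exchangeCells (by omega) (by omega) hqa hn (by omega)

theorem hasCriticalSet_of_switchedCells {k x : ℕ} (hx : 2 * x + 5 ≤ k) :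
    HasCriticalSet (2 * k) (k * k + (2 * x + 3)) := by
  have of_word {f h d : ℕ} (hn : f + d + 2 = 2 * k) (hd : h ≤ d)
      (hfh : (x = 0 ∧ f + 1 = k ∧ h = 0) ∨ (h + 1 = x ∧ f = k))
      (hm : 2 * (k * k + 2 * x) = (f + 1) * (f + 2) + d * (d + 1) + 4 * h) :
      HasCriticalSet (2 * k) (k * k + (2 * x + 3)) := by
    have word_count := two_mul_cellCount_wordCells hn hd
    have switched_count := cellCount_switchedCells rfl hx hfh
    convert hasCriticalSet_switchedCells rfl hx hfh using 1
    omega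
  obtain ⟨c, rfl⟩ := Nat.exists_eq_add_of_le' (show 2 ≤ k by omega)
  rcases x with _ | x
  · exact of_word (f := c + 1) (h := 0) (d := c + 1) (by omega) (by omega) (by omega) (by ring)
  · exact of_word (f := c + 2) (h := x) (d := c) (by omega) (by omega) (by omega) (by ring)

theorem exists_succ_le_and_lt {g : ℕ → ℕ} {K m : ℕ} (hK : g K ≤ m) (h0 : m < g 0) :
    ∃ b < K, g (b + 1) ≤ m ∧ m < g b := by
  induction K with
  | zero => omega
  | succ K ih =>
    by_cases h : g K ≤ m
    · obtain ⟨b, hb, hgb⟩ := ih h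
      exact ⟨b, by omega, hgb⟩
    · exact ⟨K, by omega, hK, by omega⟩

theorem hasCriticalSet_of_between {n a b m : ℕ} (hn : a + b + 2 = n) (h5 : 5 ≤ n)
    (hle : a * (a + 1) + (b + 1) * (b + 2) + 2 * (b + 1) ≤ 2 * m)
    (hlt : 2 * m < (a + 1) * (a + 2) + b * (b + 1) + 2 * b) : HasCriticalSet n m := by
  obtain ⟨q, hq⟩ : ∃ q, 2 * (m + q) = (a + 1) * (a + 2) + b * (b + 1) + 4 * b := by
    obtain ⟨u, hu⟩ : Even ((a + 1) * (a + 2)) := Nat.even_mul_succ_self (a + 1)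
    obtain ⟨v, hv⟩ := Nat.even_mul_succ_self b
    exact ⟨u + v + 2 * b - m, by omega⟩
  have succ_a : (a + 1) * (a + 2) = a * (a + 1) + 2 * (a + 1) := by ring
  have succ_b : (b + 1) * (b + 2) = b * (b + 1) + 2 * (b + 1) := by ring
  exact hasCriticalSet_of_exchangeCells (a := a + 1) (by omega) h5 (by omega) (by omega) hq

theorem hasCriticalSet_of_large {n m K : ℕ} (h5 : 5 ≤ n) (hKn : 2 * K < n)
    (hK : (n - 1 - K) * (n - K) + K * (K + 1) + 2 * K ≤ 2 * m) (hm : 2 * m < (n - 1) * n) :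
    HasCriticalSet n m := by
  obtain ⟨b, hb, hle, hlt⟩ := exists_succ_le_and_lt (m := 2 * m)
    (g := fun b => (n - 1 - b) * (n - b) + b * (b + 1) + 2 * b) hK (by simpa using hm)
  obtain ⟨a, rfl⟩ := Nat.exists_eq_add_of_le' (show b + 2 ≤ n by omega)
  refine hasCriticalSet_of_between (a := a) (b := b) rfl h5 ?_ ?_
  · convert hle using 4 <;> omega
  · convert hlt using 4 <;> omega

theorem hasCriticalSet_even_small {c t : ℕ} (ht : t < c) (hexc : t ≠ 1) :
    HasCriticalSet (2 * (c + 1)) ((c + 1) * (c + 1) + t) := by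
  rcases Nat.even_or_odd' t with ⟨_ | x, rfl | rfl⟩
  · exact hasCriticalSet_of_wordCells (f := c) (h := 0) (d := c) (by omega) (by omega)
      (by omega) (by ring)
  · contradiction
  · obtain ⟨d, rfl⟩ := Nat.exists_eq_add_of_le' (show 1 ≤ c by omega)
    exact hasCriticalSet_of_wordCells (f := d + 2) (h := x) (d := d) (by omega) (by omega)
      (by omega) (by ring)
  · exact hasCriticalSet_of_switchedCells (by omega)

theorem hasCriticalSet_odd_small {c t : ℕ} (ht : t ≤ c) :
    HasCriticalSet (2 * c + 3) ((c + 1) * (c + 2) + t) := by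
  rcases Nat.even_or_odd' t with ⟨x, rfl | rfl⟩
  · exact hasCriticalSet_of_wordCells (f := c) (h := x) (d := c + 1) (by omega) (by omega)
      (by omega) (by ring)
  · exact hasCriticalSet_of_wordCells (f := c + 1) (h := x) (d := c) (by omega) (by omega)
      (by omega) (by ring)

theorem hasCriticalSet_max {n m : ℕ} (hn : 2 ≤ n) (hm : 2 * m = (n - 1) * n) :
    HasCriticalSet n m := by
  obtain ⟨f, rfl⟩ := Nat.exists_eq_add_of_le' hn
  exact hasCriticalSet_of_wordCells (f := f) (h := 0) (d := 0) rfl (by omega) (by omega) hm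

theorem hasCriticalSet_even {k m : ℕ} (hk : 0 < k) (hmin : k * k ≤ m)
    (hmax : 2 * m ≤ (2 * k - 1) * (2 * k)) (hexc : m ≠ k * k + 1) : HasCriticalSet (2 * k) m := by
  rcases hmax.eq_or_lt with hmax | hmax
  · exact hasCriticalSet_max (by omega) hmax
  obtain ⟨c, rfl⟩ := Nat.exists_eq_add_of_le' hk
  obtain ⟨t, rfl⟩ := Nat.exists_eq_add_of_le hmin
  rcases lt_or_ge t c with ht | ht
  · exact hasCriticalSet_even_small ht (by omega)
  have hc : 2 ≤ c := by
    by_contra hc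
    interval_cases c <;> omega
  refine hasCriticalSet_of_large (K := c) (by omega) (by omega) ?_ hmax
  rw [show 2 * (c + 1) - 1 - c = c + 1 by omega, show 2 * (c + 1) - c = c + 2 by omega]
  nlinarith

theorem hasCriticalSet_odd {k m : ℕ} (hk : 0 < k) (hmin : k * (k + 1) ≤ m)
    (hmax : 2 * m ≤ 2 * k * (2 * k + 1)) : HasCriticalSet (2 * k + 1) m := by
  rcases hmax.eq_or_lt with hmax | hmax
  · exact hasCriticalSet_max (by omega) hmax
  obtain ⟨c, rfl⟩ := Nat.exists_eq_add_of_le' hk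
  obtain ⟨t, rfl⟩ := Nat.exists_eq_add_of_le hmin
  rcases le_or_gt t c with ht | ht
  · exact hasCriticalSet_odd_small ht
  have hc : 1 ≤ c := by
    by_contra hc
    interval_cases c
    omega
  refine hasCriticalSet_of_large (K := c) (by omega) (by omega) ?_ hmax
  rw [show 2 * (c + 1) + 1 - 1 - c = c + 2 by omega, show 2 * (c + 1) + 1 - c = c + 3 by omega]
  nlinarith

theorem hasCriticalSet_one : HasCriticalSet 1 0 := by
  rw [← cellCount_eq_zero (n := 1) (A := fun _ _ => False) fun _ _ _ _ => id]
  exact hasCriticalSet_of_cells (fun _ _ => False) (isLatinSquare_cyclicSquare 1)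
    (fun _ _ _ => Subsingleton.elim _ _) fun _ _ => False.elim

/-- for every `n ≥ 1` and every `m` with
`⌊n²/4⌋ ≤ m ≤ ⌊(n² − n)/2⌋`, except when `n` is even and `m = n²/4 + 1`,
there exist a Latin square `L` of order `n` and a critical set of `L` of
size `m`. -/
theorem criticalSet_spectrum (n m : ℕ) (hn : 0 < n)
    (hm1 : n ^ 2 / 4 ≤ m) (hm2 : m ≤ (n ^ 2 - n) / 2)
    (hexc : ¬(Even n ∧ m = n ^ 2 / 4 + 1)) :
    ∃ (L : Fin n → Fin n → Fin n) (C : Set (Fin n × Fin n × Fin n)),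
      IsLatinSquare L ∧ IsCriticalSet C L ∧ C.ncard = m := by
  rcases Nat.even_or_odd' n with ⟨k, rfl | rfl⟩
  · have sq_div : (2 * k) ^ 2 / 4 = k * k := by
      rw [show (2 * k) ^ 2 = k * k * 4 by ring, Nat.mul_div_cancel _ four_pos]
    rw [sq_div] at hm1 hexc
    refine hasCriticalSet_even (by omega) hm1 ?_ fun h => hexc ⟨even_two_mul k, h⟩
    rw [pow_two, ← Nat.sub_one_mul] at hm2
    omega
  · have sq : (2 * k + 1) ^ 2 = 4 * (k * (k + 1)) + 1 := by ring
    have sq_sub : (2 * k + 1) ^ 2 - (2 * k + 1) = 2 * k * (2 * k + 1) := by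
      rw [pow_two, ← Nat.sub_one_mul, Nat.add_sub_cancel]
    rcases k.eq_zero_or_pos with rfl | hk
    · obtain rfl : m = 0 := by omega
      exact hasCriticalSet_one
    · exact hasCriticalSet_odd hk (by omega) (by omega)
end

section
/- For every integer n > 2 there exists a partial Latin square C of order 2n (a set of triples (i,j,k) with i, j, k ∈ Fin 2n) with the following properties: |C| = n² − n + 2; every triple (i,j,k) ∈ C has its cell on or above the main diagonal (i ≤ j); there is a symbol s such that exactly 2n − 2 of the triples of C are of the form (i,i,s), lying on the main diagonal; and C is uniquely completable to a symmetric Latin square, i.e. there is exactly one Latin square L of order 2n with L(i,j) = L(j,i) for all i, j that contains C. -/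
/-!
On `{0, …, m}` with `m = 2 n - 1`, take the addition table modulo `m`, move each diagonal symbol
`2 i` to the cells `(i, m)` and `(m, i)`, and fill the diagonal with `m`. The unreduced sums `w` of
the cells lie between `0` and `2 m - 2`, and a symbol occurs on the cells of sums `w` and `w + m`.
Prescribe the entries with `w ≤ n - 2` or `w ≥ 3 n - 2`. Let `n - 1 ≤ w < m` and suppose that the
entries of sum below `w` are known; those of sum `w + m` are prescribed. Then the cells of sum `w`
are forced one after another from row `0` on: every other column of the row is either filled or
already holds the symbol in question. This settles all sums below `m`, and the reflection
`i ↦ m - 1 - i` exchanges `w` with `2 m - 2 - w`. Prescribing further entries above the diagonal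
then gives every larger number of entries up to all of these cells.
-/

theorem IsLatinSquare.apply_eq_of_forced {Q : Type*} {L P : Q → Q → Q} (hL : IsLatinSquare L)
    (hP : IsLatinSquare P) {i j : Q}
    (forced : ∀ k ≠ j, L i k = P i k ∨ ∃ l ≠ i, L l k = P i j) : L i j = P i j := by
  obtain ⟨k, hk⟩ := (hL.1 i).2 (P i j)
  by_contra h_ne
  have hkj : k ≠ j := by rintro rfl; exact h_ne hk
  rcases forced k hkj with h | ⟨l, hl, h⟩
  · exact hkj ((hP.1 i).1 (h.symm.trans hk))
  · exact hl ((hL.2 k).1 (h.trans hk.symm))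

theorem IsLatinSquare.reindex {Q : Type*} {L : Q → Q → Q} (hL : IsLatinSquare L) {σ : Q → Q}
    (hσ : Function.Bijective σ) : IsLatinSquare fun i j => L (σ i) (σ j) :=
  ⟨fun i => (hL.1 (σ i)).comp hσ, fun j => (hL.2 (σ j)).comp hσ⟩

/-- The triples of the square `L` whose cells lie in `S`. -/
def triplesOn {Q : Type*} (L : Q → Q → Q) (S : Set (Q × Q)) : Set (Q × Q × Q) :=
  (fun p => (p.1, p.2, L p.1 p.2)) '' S

theorem ncard_triplesOn {Q : Type*} (L : Q → Q → Q) (S : Set (Q × Q)) :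
    (triplesOn L S).ncard = S.ncard :=
  Set.ncard_image_of_injective S fun p q h =>
    Prod.ext (congrArg (fun t => t.1) h : p.1 = q.1) (congrArg (fun t => t.2.1) h : p.2 = q.2)

theorem containedIn_triplesOn_iff {Q : Type*} {L M : Q → Q → Q} {S : Set (Q × Q)} :
    ContainedIn (triplesOn L S) M ↔ ∀ p ∈ S, M p.1 p.2 = L p.1 p.2 :=
  Set.forall_mem_image

theorem triplesOn_sep {Q : Type*} (L : Q → Q → Q) (S : Set (Q × Q)) (R : Q → Q → Prop) :
    {t ∈ triplesOn L S | R t.1 t.2.1} = triplesOn L {p ∈ S | R p.1 p.2} := by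
  ext t
  constructor
  · rintro ⟨⟨p, hp, rfl⟩, hR⟩
    exact ⟨p, ⟨hp, hR⟩, rfl⟩
  · rintro ⟨p, ⟨hp, hR⟩, rfl⟩
    exact ⟨⟨p, hp, rfl⟩, hR⟩

section CellSum

variable {n : ℕ}

/-- The coordinate sum of the cell of the addition table modulo `2 n - 1` whose symbol stands at
the off-diagonal cell `(i, j)` after prolongation: the cells `(i, 2 n - 1)` and `(2 n - 1, i)` take
their symbol from `(i, i)`. The value on the diagonal is irrelevant. -/
def cellSum (i j : Fin (2 * n)) : ℕ :=
  (if (i : ℕ) + 1 = 2 * n then (j : ℕ) else i) + (if (j : ℕ) + 1 = 2 * n then (i : ℕ) else j)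

theorem cellSum_comm (i j : Fin (2 * n)) : cellSum i j = cellSum j i :=
  Nat.add_comm _ _

theorem eq_of_cellSum_modEq {i j k : Fin (2 * n)} (hij : i ≠ j) (hik : i ≠ k)
    (h : cellSum i j ≡ cellSum i k [MOD 2 * n - 1]) : j = k := by
  unfold cellSum at h
  by_cases hi : (i : ℕ) + 1 = 2 * n
  · have h_two : 2 * (j : ℕ) ≡ 2 * k [MOD 2 * n - 1] := by
      simpa only [if_pos hi, if_neg (show ¬(j : ℕ) + 1 = 2 * n by omega),
        if_neg (show ¬(k : ℕ) + 1 = 2 * n by omega), ← two_mul] using h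
    have h_coprime : Nat.gcd (2 * n - 1) 2 = 1 :=
      Nat.coprime_two_right.mpr ⟨n - 1, by omega⟩
    exact Fin.ext ((h_two.cancel_left_of_coprime h_coprime).eq_of_lt_of_lt (by omega) (by omega))
  · simp only [if_neg hi] at h
    have := (Nat.ModEq.add_left_cancel' _ h).eq_of_lt_of_lt
      (by split_ifs <;> omega) (by split_ifs <;> omega)
    split_ifs at this <;> omega

theorem exists_cellSum_eq_add {w : ℕ} {k : Fin (2 * n)} (hk : (k : ℕ) + 1 < 2 * n) (hwk : w < k) :
    ∃ l, l ≠ k ∧ w < (l : ℕ) ∧ cellSum l k = w + (2 * n - 1) := by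
  by_cases h : 2 * (k : ℕ) = w + (2 * n - 1)
  · refine ⟨⟨2 * n - 1, by omega⟩, by simp only [ne_eq, Fin.ext_iff]; omega,
      by simp only; omega, ?_⟩
    unfold cellSum
    split_ifs <;> simp only at * <;> omega
  · refine ⟨⟨w + (2 * n - 1) - k, by omega⟩, by simp only [ne_eq, Fin.ext_iff]; omega,
      by simp only; omega, ?_⟩
    unfold cellSum
    split_ifs <;> simp only at * <;> omega

/-- The off-diagonal symbols of `P` depend only on `cellSum` modulo `2 n - 1`. This holds for the
prolonged addition table and is preserved by `reflect`. -/
def DependsOnCellSum (P : Fin (2 * n) → Fin (2 * n) → Fin (2 * n)) : Prop :=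
  ∀ ⦃i j k l⦄, i ≠ j → k ≠ l → cellSum i j ≡ cellSum k l [MOD 2 * n - 1] → P i j = P k l

variable {L P : Fin (2 * n) → Fin (2 * n) → Fin (2 * n)}

theorem apply_eq_of_cellSum_eq (hL : IsLatinSquare L) (hP : IsLatinSquare P)
    (hPsum : DependsOnCellSum P) (diag : ∀ i, L i i = P i i) {w : ℕ}
    (below : ∀ i j, i ≠ j → cellSum i j < w → L i j = P i j)
    (above : ∀ i j, i ≠ j → cellSum i j = w + (2 * n - 1) → L i j = P i j) (hw : w + 1 < 2 * n)
    {i j : Fin (2 * n)} (hij : i < j) (hsum : cellSum i j = w) : L i j = P i j := by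
  induction i using WellFoundedLT.induction generalizing j with
  | _ i ih =>
  refine hL.apply_eq_of_forced hP fun k hkj => ?_
  by_cases hki : k = i
  · exact .inl (hki ▸ diag i)
  by_cases h_low : cellSum i k < w
  · exact .inl (below i k (Ne.symm hki) h_low)
  have ⟨hk, hik, hwik⟩ : (k : ℕ) + 1 < 2 * n ∧ i < k ∧ w < i + k := by
    unfold cellSum at hsum h_low
    split_ifs at hsum h_low <;> omega
  right
  by_cases hkw : (k : ℕ) ≤ w
  · let l : Fin (2 * n) := ⟨w - k, by omega⟩
    have hli : l < i := by simp only [l, Fin.lt_def]; omega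
    have hlk : cellSum l k = w := by
      unfold cellSum
      split_ifs <;> simp only [l] at * <;> omega
    refine ⟨l, hli.ne, (ih l hli (hli.trans hik) hlk).trans ?_⟩
    exact hPsum (hli.trans hik).ne hij.ne (by rw [hlk, hsum])
  · obtain ⟨l, hlk, hwl, hl⟩ := exists_cellSum_eq_add hk (lt_of_not_ge hkw)
    have h_two : 2 * (i : ℕ) ≤ w := by
      unfold cellSum at hsum
      split_ifs at hsum <;> omega
    refine ⟨l, by rintro rfl; omega, (above l k hlk hl).trans (hPsum hlk hij.ne ?_)⟩
    rw [hl, hsum]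
    exact Nat.add_modEq_right

theorem apply_eq_of_cellSum_add_one_lt (hL : IsLatinSquare L) (hP : IsLatinSquare P)
    (hPsum : DependsOnCellSum P) (symm : ∀ i j, L i j = L j i) (diag : ∀ i, L i i = P i i)
    (low : ∀ i j, i ≠ j → cellSum i j + 2 ≤ n → L i j = P i j)
    (high : ∀ i j, i ≠ j → 3 * n ≤ cellSum i j + 2 → L i j = P i j)
    {i j : Fin (2 * n)} (hij : i ≠ j) (hsum : cellSum i j + 1 < 2 * n) : L i j = P i j := by
  induction hw : cellSum i j using Nat.strong_induction_on generalizing i j with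
  | _ w ih =>
  by_cases h_low : cellSum i j + 2 ≤ n
  · exact low i j hij h_low
  have h_layer : ∀ ⦃i j : Fin (2 * n)⦄, i < j → cellSum i j = w → L i j = P i j := fun _ _ =>
    apply_eq_of_cellSum_eq hL hP hPsum diag
      (fun k l hkl h => ih _ h hkl (by omega) rfl) (fun k l hkl h => high k l hkl (by omega))
      (by omega)
  rcases hij.lt_or_gt with h | h
  · exact h_layer h hw
  · rw [symm, h_layer h (by rw [cellSum_comm, hw])]
    exact hPsum h.ne hij (by rw [cellSum_comm])

/-- The involution `i ↦ 2 n - 2 - i` of `{0, …, 2 n - 2}`, extended by fixing `2 n - 1`. -/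
def reflect (i : Fin (2 * n)) : Fin (2 * n) :=
  ⟨if (i : ℕ) + 1 = 2 * n then i else 2 * n - 2 - i, by split_ifs <;> omega⟩

theorem reflect_involutive : Function.Involutive (reflect (n := n)) := by
  intro i
  apply Fin.ext
  simp only [reflect]
  split_ifs <;> omega

theorem cellSum_reflect_add_cellSum {i j : Fin (2 * n)} (hij : i ≠ j) :
    cellSum (reflect i) (reflect j) + cellSum i j + 4 = 4 * n := by
  simp only [cellSum, reflect]
  split_ifs <;> omega

theorem DependsOnCellSum.comp_reflect (hP : DependsOnCellSum P) :
    DependsOnCellSum fun i j => P (reflect i) (reflect j) := by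
  intro i j k l hij hkl h
  refine hP (reflect_involutive.injective.ne hij) (reflect_involutive.injective.ne hkl) ?_
  refine Nat.ModEq.add_right_cancel h ?_
  have h1 := cellSum_reflect_add_cellSum hij
  have h2 := cellSum_reflect_add_cellSum hkl
  have h_eq : cellSum (reflect i) (reflect j) + cellSum i j =
      cellSum (reflect k) (reflect l) + cellSum k l := by omega
  rw [h_eq]

theorem eq_of_eq_on_corners (hL : IsLatinSquare L) (hP : IsLatinSquare P)
    (hPsum : DependsOnCellSum P) (symm : ∀ i j, L i j = L j i) (diag : ∀ i, L i i = P i i)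
    (low : ∀ i j, i ≠ j → cellSum i j + 2 ≤ n → L i j = P i j)
    (high : ∀ i j, i ≠ j → 3 * n ≤ cellSum i j + 2 → L i j = P i j) : L = P := by
  funext i j
  by_cases hij : i = j
  · exact hij ▸ diag i
  by_cases h_half : cellSum i j + 1 < 2 * n
  · exact apply_eq_of_cellSum_add_one_lt hL hP hPsum symm diag low high hij h_half
  have h_inj := reflect_involutive (n := n) |>.injective
  have h_sum := fun {i j : Fin (2 * n)} => cellSum_reflect_add_cellSum (i := i) (j := j)
  have h_reflected := apply_eq_of_cellSum_add_one_lt (i := reflect i) (j := reflect j)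
    (hL.reindex reflect_involutive.bijective) (hP.reindex reflect_involutive.bijective)
    hPsum.comp_reflect (fun i j => symm _ _) (fun i => diag _)
    (fun k l hkl h => high _ _ (h_inj.ne hkl) (by have := h_sum hkl; omega))
    (fun k l hkl h => low _ _ (h_inj.ne hkl) (by have := h_sum hkl; omega))
    (h_inj.ne hij) (by have := h_sum hij; omega)
  simpa only [reflect_involutive i, reflect_involutive j] using h_reflected

end CellSum

section ProlongedSquare

variable {n : ℕ}

/-- The unipotent symmetric Latin square of order `2 n` obtained by prolonging the addition table
modulo `2 n - 1` along its main diagonal. -/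
def prolongedSquare (n : ℕ) (i j : Fin (2 * n)) : Fin (2 * n) :=
  ⟨if i = j then 2 * n - 1 else cellSum i j % (2 * n - 1), by
    have h_pos := i.pos
    have := Nat.mod_lt (cellSum i j) (show 0 < 2 * n - 1 by omega)
    split_ifs <;> omega⟩

theorem prolongedSquare_self (i : Fin (2 * n)) : (prolongedSquare n i i : ℕ) = 2 * n - 1 :=
  if_pos rfl

theorem prolongedSquare_of_ne {i j : Fin (2 * n)} (hij : i ≠ j) :
    (prolongedSquare n i j : ℕ) = cellSum i j % (2 * n - 1) :=
  if_neg hij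

theorem prolongedSquare_of_ne_lt {i j : Fin (2 * n)} (hij : i ≠ j) :
    (prolongedSquare n i j : ℕ) < 2 * n - 1 :=
  prolongedSquare_of_ne hij ▸ Nat.mod_lt _ (by have := i.pos; omega)

theorem dependsOnCellSum_prolongedSquare : DependsOnCellSum (prolongedSquare n) := by
  intro i j k l hij hkl h
  apply Fin.ext
  rw [prolongedSquare_of_ne hij, prolongedSquare_of_ne hkl]
  exact h

theorem prolongedSquare_comm (i j : Fin (2 * n)) :
    prolongedSquare n i j = prolongedSquare n j i := by
  simp only [prolongedSquare, cellSum_comm i j, eq_comm]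

theorem isLatinSquare_prolongedSquare : IsLatinSquare (prolongedSquare n) := by
  have h_row : ∀ i, Function.Bijective (prolongedSquare n i) := by
    refine fun i => Finite.injective_iff_bijective.mp fun j k h => ?_
    have h_val := congrArg Fin.val h
    by_cases hij : i = j <;> by_cases hik : i = k
    · exact hij.symm.trans hik
    · rw [← hij, prolongedSquare_self] at h_val
      exact absurd h_val (prolongedSquare_of_ne_lt hik).ne'
    · rw [← hik, prolongedSquare_self] at h_val
      exact absurd h_val (prolongedSquare_of_ne_lt hij).ne
    · rw [prolongedSquare_of_ne hij, prolongedSquare_of_ne hik] at h_val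
      exact eq_of_cellSum_modEq hij hik h_val
  exact ⟨h_row, fun j => by simpa only [prolongedSquare_comm _ j] using h_row j⟩

theorem diag_eq_of_inner_diag_eq {L : Fin (2 * n) → Fin (2 * n) → Fin (2 * n)}
    (hL : IsLatinSquare L) (symm : ∀ i j, L i j = L j i)
    (inner : ∀ i : Fin (2 * n), 0 < (i : ℕ) → (i : ℕ) + 1 < 2 * n →
      L i i = prolongedSquare n i i)
    (edge : ∀ i j : Fin (2 * n), (i : ℕ) = 0 → (j : ℕ) + 1 = 2 * n →
      L i j = prolongedSquare n i j) (i : Fin (2 * n)) : L i i = prolongedSquare n i i := by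
  by_cases hi : 0 < (i : ℕ) ∧ (i : ℕ) + 1 < 2 * n
  · exact inner i hi.1 hi.2
  refine hL.apply_eq_of_forced isLatinSquare_prolongedSquare fun k hki => ?_
  by_cases hk : 0 < (k : ℕ) ∧ (k : ℕ) + 1 < 2 * n
  · refine .inr ⟨k, hki, (inner k hk.1 hk.2).trans (Fin.ext ?_)⟩
    rw [prolongedSquare_self, prolongedSquare_self]
  left
  rcases hki.lt_or_gt with h | h
  · rw [symm, prolongedSquare_comm]
    exact edge k i (by omega) (by omega)
  · exact edge i k (by omega) (by omega)

end ProlongedSquare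

section Cells

/-- The cells above the diagonal in the first corner of the addition table. -/
def lowCorner (n : ℕ) : Finset (Fin (2 * n) × Fin (2 * n)) :=
  {p | p.1 < p.2 ∧ cellSum p.1 p.2 + 2 ≤ n}

/-- The cells above the diagonal in the last corner of the addition table, the reflection of
`lowCorner`. -/
def highCorner (n : ℕ) : Finset (Fin (2 * n) × Fin (2 * n)) :=
  {p | p.1 < p.2 ∧ 3 * n ≤ cellSum p.1 p.2 + 2}

/-- The diagonal cells other than the first and the last. -/
def innerDiagonal (n : ℕ) : Finset (Fin (2 * n) × Fin (2 * n)) :=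
  {p | p.1 = p.2 ∧ 0 < (p.1 : ℕ) ∧ (p.1 : ℕ) + 1 < 2 * n}

/-- The cells strictly above the diagonal of a square of order `m`. -/
def aboveDiagonal (m : ℕ) : Finset (Fin m × Fin m) :=
  {p | p.1 < p.2}

theorem card_aboveDiagonal (m : ℕ) : (aboveDiagonal m).card = m.choose 2 := by
  have h_col : ∀ j : Fin m, (∑ i : Fin m, if i < j then 1 else 0) = (j : ℕ) := fun j => by
    rw [← Finset.card_filter, Finset.filter_gt_eq_Iio, Fin.card_Iio]
  rw [aboveDiagonal, Finset.card_filter, Fintype.sum_prod_type_right]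
  simp only [h_col]
  rw [Fin.sum_univ_eq_sum_range (fun i => i), Finset.sum_range_id, Nat.choose_two_right]

theorem card_innerDiagonal (n : ℕ) : (innerDiagonal n).card = 2 * n - 2 := by
  have h_image : innerDiagonal n = Finset.univ.image
      fun i : Fin (2 * n - 2) => (⟨i + 1, by omega⟩, ⟨i + 1, by omega⟩) := by
    ext ⟨i, j⟩
    simp only [innerDiagonal, Finset.mem_filter, Finset.mem_univ, true_and, Finset.mem_image,
      Prod.mk.injEq, Fin.ext_iff]
    constructor
    · rintro ⟨h_eq, h_pos, h_lt⟩
      exact ⟨⟨i - 1, by omega⟩, by simp only; omega, by simp only; omega⟩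
    · rintro ⟨k, hi, hj⟩
      omega
  rw [h_image, Finset.card_image_of_injective, Finset.card_univ, Fintype.card_fin]
  intro i j h
  exact Fin.ext (Nat.add_right_cancel (congrArg (fun p => (p.1 : ℕ)) h))

theorem sum_range_half_add_one (k : ℕ) :
    ∑ w ∈ Finset.range k, (w / 2 + 1) = (k + 1) ^ 2 / 4 := by
  have h : 4 * ∑ w ∈ Finset.range k, (w / 2 + 1) + (k + 1) % 2 = (k + 1) ^ 2 := by
    induction k with
    | zero => rfl
    | succ k ih =>
      rw [Finset.sum_range_succ, mul_add]
      have : (k + 1 + 1) ^ 2 = (k + 1) ^ 2 + 2 * k + 3 := by ring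
      omega
  omega

theorem card_lowCorner_le (n : ℕ) : (lowCorner n).card ≤ n ^ 2 / 4 := by
  obtain rfl | hn := n.eq_zero_or_pos
  · exact Finset.card_le_univ _
  calc (lowCorner n).card
      ≤ ((Finset.range (n - 1)).sigma fun w => Finset.range (w / 2 + 1)).card := by
        refine Finset.card_le_card_of_injOn (fun p => ⟨cellSum p.1 p.2, p.1⟩) ?_ ?_
        · rintro ⟨i, j⟩ h
          obtain ⟨hij, h_sum⟩ := (Finset.mem_filter.mp (Finset.mem_coe.mp h)).2
          simp only [Finset.mem_coe, Finset.mem_sigma, Finset.mem_range]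
          simp only [cellSum] at *
          split_ifs at * <;> omega
        · rintro ⟨i, j⟩ h ⟨i', j'⟩ h' h_eq
          obtain ⟨hij, -⟩ := (Finset.mem_filter.mp (Finset.mem_coe.mp h)).2
          obtain ⟨hij', -⟩ := (Finset.mem_filter.mp (Finset.mem_coe.mp h')).2
          simp only [Sigma.mk.injEq, heq_eq_eq] at h_eq
          obtain rfl : i = i' := Fin.ext h_eq.2
          exact congrArg (Prod.mk i) (eq_of_cellSum_modEq hij.ne hij'.ne (h_eq.1 ▸ rfl))
    _ = n ^ 2 / 4 := by
        simp only [Finset.card_sigma, Finset.card_range]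
        rw [sum_range_half_add_one, Nat.sub_add_cancel hn]

theorem card_highCorner_le (n : ℕ) : (highCorner n).card ≤ (lowCorner n).card := by
  refine Finset.card_le_card_of_injOn (fun p =>
    (min (reflect p.1) (reflect p.2), max (reflect p.1) (reflect p.2))) ?_ ?_
  · rintro ⟨i, j⟩ h
    obtain ⟨hij, h_sum⟩ := (Finset.mem_filter.mp (Finset.mem_coe.mp h)).2
    have h_reflect := cellSum_reflect_add_cellSum hij.ne
    refine Finset.mem_coe.mpr (Finset.mem_filter.mpr ⟨Finset.mem_univ _, ?_, ?_⟩)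
    · exact min_lt_max.mpr (reflect_involutive.injective.ne hij.ne)
    · simp only at h_sum h_reflect ⊢
      rcases le_total (reflect i) (reflect j) with h_le | h_le
      · rw [min_eq_left h_le, max_eq_right h_le]
        omega
      · rw [min_eq_right h_le, max_eq_left h_le, cellSum_comm]
        omega
  · rintro ⟨i, j⟩ h ⟨i', j'⟩ h' h_eq
    obtain ⟨hij, -⟩ := (Finset.mem_filter.mp (Finset.mem_coe.mp h)).2
    obtain ⟨hij', -⟩ := (Finset.mem_filter.mp (Finset.mem_coe.mp h')).2
    have h_pair : s(reflect i, reflect j) = s(reflect i', reflect j') :=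
      Sym2.inf_eq_inf_and_sup_eq_sup.mp (Prod.mk.injEq .. ▸ h_eq)
    rcases Sym2.eq_iff.mp (Sym2.map.injective reflect_involutive.injective h_pair) with h | h
    · exact Prod.ext h.1 h.2
    · exact absurd (h.1 ▸ h.2 ▸ hij) hij'.not_gt

theorem card_corners_le (n : ℕ) : (lowCorner n ∪ highCorner n).card ≤ 2 * (n ^ 2 / 4) := by
  have h_union := Finset.card_union_le (lowCorner n) (highCorner n)
  have h_low := card_lowCorner_le n
  have h_high := card_highCorner_le n
  omega

theorem corners_subset_aboveDiagonal (n : ℕ) :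
    lowCorner n ∪ highCorner n ⊆ aboveDiagonal (2 * n) :=
  Finset.union_subset (Finset.monotone_filter_right _ fun _ _ h => h.1)
    (Finset.monotone_filter_right _ fun _ _ h => h.1)

end Cells

theorem eq_prolongedSquare_of_eq_on {n : ℕ} (hn : 2 ≤ n)
    {L : Fin (2 * n) → Fin (2 * n) → Fin (2 * n)} (hL : IsLatinSquare L)
    (symm : ∀ i j, L i j = L j i)
    (corners : ∀ p ∈ lowCorner n ∪ highCorner n, L p.1 p.2 = prolongedSquare n p.1 p.2)
    (inner : ∀ p ∈ innerDiagonal n, L p.1 p.2 = prolongedSquare n p.1 p.2) :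
    L = prolongedSquare n := by
  have h_corner : ∀ i j : Fin (2 * n), i ≠ j →
      cellSum i j + 2 ≤ n ∨ 3 * n ≤ cellSum i j + 2 → L i j = prolongedSquare n i j := by
    intro i j hij h
    wlog hlt : i < j generalizing i j
    · rw [symm, prolongedSquare_comm]
      exact this j i hij.symm (cellSum_comm i j ▸ h) (hij.symm.lt_of_le (not_lt.mp hlt))
    exact corners (i, j) (by simpa [lowCorner, highCorner, hlt] using h)
  refine eq_of_eq_on_corners hL isLatinSquare_prolongedSquare dependsOnCellSum_prolongedSquare symm
    (diag_eq_of_inner_diag_eq hL symm (fun i h_pos h_lt => ?_) (fun i j hi hj => ?_))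
    (fun i j hij h => h_corner i j hij (.inl h)) (fun i j hij h => h_corner i j hij (.inr h))
  · exact inner (i, i) (by simp [innerDiagonal, h_pos, h_lt])
  · refine h_corner i j (by rintro rfl; omega) (.inl ?_)
    unfold cellSum
    split_ifs <;> omega

theorem existsUnique_completion_of_corners_subset {n : ℕ} (hn : 2 ≤ n)
    {S : Set (Fin (2 * n) × Fin (2 * n))} (corners : ↑(lowCorner n ∪ highCorner n) ⊆ S)
    (inner : ↑(innerDiagonal n) ⊆ S) :
    ∃! L : Fin (2 * n) → Fin (2 * n) → Fin (2 * n), IsLatinSquare L ∧ (∀ i j, L i j = L j i) ∧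
      ContainedIn (triplesOn (prolongedSquare n) S) L := by
  refine ⟨prolongedSquare n, ⟨isLatinSquare_prolongedSquare, prolongedSquare_comm,
    containedIn_triplesOn_iff.mpr fun _ _ => rfl⟩, fun L ⟨hL, symm, hS⟩ => ?_⟩
  rw [containedIn_triplesOn_iff] at hS
  exact eq_prolongedSquare_of_eq_on hn hL symm (fun p hp => hS p (corners hp))
    (fun p hp => hS p (inner hp))

theorem uniquely_completable_symmetric_partial_latin_square_general {n k : ℕ} (hn : 2 ≤ n)
    (h_lower : 2 * (n ^ 2 / 4) ≤ k) (h_upper : k ≤ (2 * n).choose 2) :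
    ∃ C : Set (Fin (2 * n) × Fin (2 * n) × Fin (2 * n)),
      C.ncard = k + (2 * n - 2) ∧
      (∀ t ∈ C, t.1 ≤ t.2.1) ∧
      (∃ s : Fin (2 * n),
        (∀ t ∈ C, t.1 = t.2.1 → t.2.2 = s) ∧
        {t ∈ C | t.1 = t.2.1}.ncard = 2 * n - 2) ∧
      (∃! L : Fin (2 * n) → Fin (2 * n) → Fin (2 * n),
        IsLatinSquare L ∧ (∀ i j, L i j = L j i) ∧ ContainedIn C L) := by
  obtain ⟨O, h_corners, hO, h_card⟩ := Finset.exists_subsuperset_card_eq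
    (corners_subset_aboveDiagonal n) ((card_corners_le n).trans h_lower)
    (h_upper.trans_eq (card_aboveDiagonal _).symm)
  have hO_lt : ∀ p ∈ O, p.1 < p.2 := fun p hp => (Finset.mem_filter.mp (hO hp)).2
  have hD_eq : ∀ p ∈ innerDiagonal n, p.1 = p.2 := fun p hp => (Finset.mem_filter.mp hp).2.1
  have h_disjoint : Disjoint O (innerDiagonal n) := Finset.disjoint_left.mpr fun p hp hp' =>
    (hO_lt p hp).ne (hD_eq p hp')
  have h_diag : {p ∈ (↑(O ∪ innerDiagonal n) : Set (Fin (2 * n) × Fin (2 * n))) | p.1 = p.2} =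
      ↑(innerDiagonal n) := by
    ext p
    simp only [Set.mem_ofPred_eq, Finset.mem_coe, Finset.mem_union]
    exact ⟨fun ⟨hp, h⟩ => hp.resolve_left fun hp => (hO_lt p hp).ne h,
      fun hp => ⟨.inr hp, hD_eq p hp⟩⟩
  refine ⟨triplesOn (prolongedSquare n) ↑(O ∪ innerDiagonal n), ?_, ?_,
    ⟨⟨2 * n - 1, by omega⟩, ?_, ?_⟩, ?_⟩
  · rw [ncard_triplesOn, Set.ncard_coe_finset, Finset.card_union_of_disjoint h_disjoint, h_card,
      card_innerDiagonal]
  · rintro _ ⟨p, hp, rfl⟩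
    exact (Finset.mem_union.mp hp).elim (fun h => (hO_lt p h).le) (fun h => (hD_eq p h).le)
  · rintro _ ⟨⟨i, j⟩, -, rfl⟩ (rfl : i = j)
    exact Fin.ext (prolongedSquare_self i)
  · rw [triplesOn_sep _ _ (· = ·), ncard_triplesOn, h_diag, Set.ncard_coe_finset,
      card_innerDiagonal]
  · exact existsUnique_completion_of_corners_subset hn
      (Finset.coe_subset.mpr (h_corners.trans Finset.subset_union_left))
      (Finset.coe_subset.mpr Finset.subset_union_right)

/-- for every `n > 2` there is a partial Latin square `C` of
order `2n` with `|C| = n² − n + 2` entries, all in cells on or above the main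
diagonal, of which exactly `2n − 2` are an identical symbol `s` lying on the
main diagonal, such that `C` is uniquely completable to a symmetric Latin
square of order `2n`. -/
theorem uniquely_completable_symmetric_partial_latin_square (n : ℕ)
    (hn : 2 < n) :
    ∃ C : Set (Fin (2 * n) × Fin (2 * n) × Fin (2 * n)),
      C.ncard = n ^ 2 - n + 2 ∧
      (∀ t ∈ C, t.1 ≤ t.2.1) ∧
      (∃ s : Fin (2 * n),
        (∀ t ∈ C, t.1 = t.2.1 → t.2.2 = s) ∧
        {t ∈ C | t.1 = t.2.1}.ncard = 2 * n - 2) ∧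
      (∃! L : Fin (2 * n) → Fin (2 * n) → Fin (2 * n),
        IsLatinSquare L ∧ (∀ i j, L i j = L j i) ∧ ContainedIn C L) := by
  have h_lower : 2 * (n ^ 2 / 4) + 3 * n ≤ n ^ 2 + 4 := by
    rcases (show n = 3 ∨ 4 ≤ n by omega) with rfl | h
    · norm_num
    · have : 6 * n ≤ n ^ 2 + 8 := by nlinarith
      omega
  have h_upper : n ^ 2 + 4 ≤ (2 * n).choose 2 + 3 * n := by
    rw [Nat.choose_two_right, mul_assoc, Nat.mul_div_cancel_left _ two_pos, Nat.mul_sub_one]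
    have : n * (2 * n) = 2 * n ^ 2 := by ring
    omega
  have h_sq : 3 * n ≤ n ^ 2 := by nlinarith
  obtain ⟨C, h_card, hC⟩ := uniquely_completable_symmetric_partial_latin_square_general
    (n := n) (k := n ^ 2 + 4 - 3 * n) hn.le (by omega) (by omega)
  exact ⟨C, by omega, hC⟩
end
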